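/- arXiv:2302.07859 — 2 statements merged into one kernel-verified Lean document; each statement's English description precedes it below -/
import Mathlib

section
/- The Ramsey–Turán density ρ_5(12) exists and equals 10/19. That is: (upper bound) for every δ > 0 there exist ε > 0 and n_0 such that every K_{12}-free graph on n ≥ n_0 vertices with α_5(G) ≤ ε·n has at most (10/19 + δ)·C(n,2) edges; and (lower bound) for every δ > 0 and every ε > 0 there exist arbitrarily large n and a K_{12}-free graph G on n vertices with α_5(G) ≤ ε·n and at least (10/19 − δ)·C(n,2) edges. -/
/-!
**Upper bound.** Szemerédi's regularity lemma reduces the problem to a weighted graph on the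
clusters, the weight of a regular pair being its density. Since every set of more than `εn`
vertices contains a `K₅`, a regular pair of density above `(c-1)/5` contains a clique with `c`
vertices on one side (found by pigeonhole inside a `K₅` all of whose vertices are typical,
`common_nbrs`) and five on the other. Likewise a triangle of clusters yields a clique of size
`c + d + e`, and further clusters can each contribute one vertex to a clique found elsewhere
(`singles`). As `G` is `K₁₂`-free, the weights are at most `4/5` on a positive `K₄`, `3/5` on a `K₅`
and `2/5` on a `K₆`, and the weights of a positive triangle sum to at most `11/5`, those of a triangle
in a positive `K₄` to at most `2`. Symmetrization as in Motzkin and Straus then shows that the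
Lagrangian of such a weighted graph is at most `10/19` (`weighted_turan`). The extremal case is a
triangle with weights `1, 1, 1/5` and masses `9 : 5 : 5`.

**Lower bound.** The construction realizes this triangle. Take `Ω = (ℤ/m)^k` with `m = 20k`, embedded
coordinatewise by the characters into `ℂ^k` as points of norm `√k`, and let `ω = exp(2πi/5)`.

* `Rot r`: `x` and `y` are joined if `x` is within squared distance `r` of `ω^t y` for some nontrivial
  power. For `k` large a clique corresponds to distinct fifth roots of unity, so it has at most five
  points. Conversely, every subset of density `ε` contains five mutually joined points
  (`exists_rot_five`): by the Poincaré inequality for the squared distance to the set, almost all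
  points are at bounded distance from it (`concentration`), hence so are all five rotations of some
  point.
* `Sector μ (corr x y)`: the inner product `⟨x, y⟩` lies in a fixed open sector of angle `2π/5`, up to
  a margin `μ`. Rotating shows that one fifth of all pairs are in this position, apart from those
  whose inner product is within `μ` of one of five lines; these are rare by a small-ball estimate
  (`sector_density`). If four mutually rotated points `x` were in sector position to two mutually
  rotated points `y, y'`, then the numbers `⟨x, y⟩ - ω^s ⟨x, y'⟩`, which are four of the five rotations
  of one complex number up to a bounded error, would all lie in one open half-plane bounded by a
  line through `0`; but such a half-plane contains at most three of the five rotations (`no_four_two`).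

Now let two parts consist of five copies of `Ω` each and a third part of nine copies. Put `Rot` inside
each part and the sector relation between the first two parts, and join the third part completely to
the others. A clique has at most five vertices in the third part and at most six in the first two,
and the edge density tends to `(2·10·9 + 50/5) / 19² = 10/19`.
-/

open Finset
open scoped Classical

/-- `α_p(G)`: the largest size of a vertex subset inducing a `K_p`-free subgraph. -/
noncomputable def alphaP {V : Type} [Fintype V] (p : ℕ) (G : SimpleGraph V) : ℕ :=
  sSup {k : ℕ | ∃ s : Finset V, s.card = k ∧ ∀ t : Finset V, t ⊆ s → ¬ G.IsNClique p t}

/-- The number of edges of `G`. -/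
noncomputable def edgeCount {V : Type} [Fintype V] (G : SimpleGraph V) : ℕ :=
  G.edgeSet.ncard

/-! ### The weighted Turán bound -/

/-- Equality holds for masses in proportion `9 : 5 : 5`. -/
theorem quad3 (x y z : ℝ) : x*y + x*z + y*z/5 ≤ 5/19*(x+y+z)^2 := by
  nlinarith [sq_nonneg (y - z), sq_nonneg (10*x - 9*(y+z))]

/-- A linear program: `p` and `q` are the two largest masses, so the budget `2b + c` is best spent
with `u = v = b`. -/
theorem lp3 (p q r u v w : ℝ) (hr : r ≤ p) (hr' : r ≤ q) (h0 : 0 ≤ r)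
    (b c : ℝ) (hu : u ≤ b) (hv : v ≤ b) (hs : u + v + w ≤ 2*b + c) :
    u*p + v*q + w*r ≤ b*(p+q) + c*r := by
  nlinarith [mul_nonneg (sub_nonneg.2 hu) (sub_nonneg.2 hr),
    mul_nonneg (sub_nonneg.2 hv) (sub_nonneg.2 hr'), mul_nonneg (sub_nonneg.2 hs) h0]

theorem quad4 (a b c d : ℝ) :
    4/5*(a*b+a*c+a*d) + 3/5*(b*c+b*d) + 2/5*(c*d) ≤ 5/19*(a+b+c+d)^2 := by
  nlinarith [sq_nonneg (a - 13/25*(b+c+d)), sq_nonneg (b - 9/16*(c+d)), sq_nonneg (c - 11/21*d),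
    sq_nonneg d]

/-- Three-vertex case; the vertices are ordered by decreasing mass. -/
theorem case3 (x y z u v w : ℝ) (hz : 0 ≤ z) (hyz : z ≤ y) (hxy : y ≤ x)
    (hu : u ≤ 1) (hv : v ≤ 1) (hs : u + v + w ≤ 11/5) :
    u*(x*y) + v*(x*z) + w*(y*z) ≤ 5/19*(x+y+z)^2 := by
  have h := lp3 (x*y) (x*z) (y*z) u v w (by nlinarith) (by nlinarith) (by nlinarith) 1 (1/5) hu hv
    (by linarith)
  have := quad3 x y z
  linarith

/-- Four-vertex case; the vertices are ordered by decreasing mass. Every triple is bounded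
separately by linear programming and the four bounds are added. -/
theorem case4 (a b c d : ℝ) (hd : 0 ≤ d) (hcd : d ≤ c) (hbc : c ≤ b) (hab : b ≤ a)
    (ab ac ad bc bd cd : ℝ) (h1 : ab ≤ 4/5) (h2 : ac ≤ 4/5) (h3 : ad ≤ 4/5) (h4 : bc ≤ 4/5)
    (h5 : bd ≤ 4/5)
    (t1 : ab + ac + bc ≤ 2) (t2 : ab + ad + bd ≤ 2) (t3 : ac + ad + cd ≤ 2)
    (t4 : bc + bd + cd ≤ 2) :
    ab*(a*b) + ac*(a*c) + ad*(a*d) + bc*(b*c) + bd*(b*d) + cd*(c*d) ≤ 5/19*(a+b+c+d)^2 := by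
  have e1 := lp3 (a*b) (a*c) (b*c) ab ac bc (by nlinarith) (by nlinarith) (by nlinarith)
    (4/5) (2/5) h1 h2 (by linarith)
  have e2 := lp3 (a*b) (a*d) (b*d) ab ad bd (by nlinarith) (by nlinarith) (by nlinarith)
    (4/5) (2/5) h1 h3 (by linarith)
  have e3 := lp3 (a*c) (a*d) (c*d) ac ad cd (by nlinarith) (by nlinarith) (by nlinarith)
    (4/5) (2/5) h2 h3 (by linarith)
  have e4 := lp3 (b*c) (b*d) (c*d) bc bd cd (by nlinarith) (by nlinarith) (by nlinarith)
    (4/5) (2/5) h4 h5 (by linarith)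
  have := quad4 a b c d
  linarith

/-- Off-diagonal weights at most `c` on a support of size `r` give at most `c (1 - 1/r)`. -/
theorem uniform_bound {ι : Type*} (w : ι → ι → ℝ) (s : Finset ι) (x : ι → ℝ) (c : ℝ)
    (hc : 0 ≤ c) (hx : ∀ i, 0 ≤ x i) (hd : ∀ i, w i i = 0)
    (h : ∀ i ∈ s, ∀ j ∈ s, i ≠ j → w i j ≤ c) :
    ∑ i ∈ s, ∑ j ∈ s, w i j * (x i * x j) * s.card ≤ c * (s.card - 1) * (∑ i ∈ s, x i)^2 := by
  have h1 : ∑ i ∈ s, ∑ j ∈ s, w i j * (x i * x j) ≤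
      c * ((∑ i ∈ s, x i)^2 - ∑ i ∈ s, x i ^ 2) := by
    have : ∑ i ∈ s, ∑ j ∈ s, w i j * (x i * x j) ≤
        ∑ i ∈ s, ∑ j ∈ s, (c * (x i * x j) - if i = j then c * x i ^ 2 else 0) := by
      refine sum_le_sum fun i hi => sum_le_sum fun j hj => ?_
      by_cases hij : i = j
      · subst hij; simp [hd, sq]
      · simp only [hij, if_false, sub_zero]
        exact mul_le_mul_of_nonneg_right (h i hi j hj hij) (mul_nonneg (hx i) (hx j))
    refine this.trans (le_of_eq ?_)
    rw [sq, sum_mul_sum, mul_sub, mul_sum, mul_sum, ← sum_sub_distrib]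
    refine sum_congr rfl fun i hi => ?_
    rw [sum_sub_distrib, sum_ite_eq, if_pos hi, mul_sum]
  have h2 : (∑ i ∈ s, x i)^2 ≤ s.card * ∑ i ∈ s, x i ^ 2 := sq_sum_le_card_mul_sum_sq
  simp only [← sum_mul]
  have hcard : (0:ℝ) ≤ s.card := by positivity
  nlinarith [mul_le_mul_of_nonneg_right h1 hcard, mul_le_mul_of_nonneg_left h2 hc]

/-- The weighted Turán bound: a weighted graph whose cliques of positive weight obey the stated
restrictions has Lagrangian at most `10/19`. Symmetrization reduces to a support on which all
weights are positive. -/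
theorem weighted_turan {ι : Type*} [Fintype ι] (w : ι → ι → ℝ)
    (hs : ∀ i j, w i j = w j i) (h0 : ∀ i j, 0 ≤ w i j) (hd : ∀ i, w i i = 0)
    (h1 : ∀ i j, w i j ≤ 1)
    (H3 : ∀ i j k, 0 < w i j → 0 < w i k → 0 < w j k → w i j + w i k + w j k ≤ 11/5)
    (H4 : ∀ s : Finset ι, s.card = 4 → (∀ i ∈ s, ∀ j ∈ s, i ≠ j → 0 < w i j) →
      ∀ i ∈ s, ∀ j ∈ s, w i j ≤ 4/5)
    (H4' : ∀ s : Finset ι, s.card = 4 → (∀ i ∈ s, ∀ j ∈ s, i ≠ j → 0 < w i j) →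
      ∀ i ∈ s, ∀ j ∈ s, ∀ k ∈ s, i ≠ j → i ≠ k → j ≠ k → w i j + w i k + w j k ≤ 2)
    (H5 : ∀ s : Finset ι, s.card = 5 → (∀ i ∈ s, ∀ j ∈ s, i ≠ j → 0 < w i j) →
      ∀ i ∈ s, ∀ j ∈ s, w i j ≤ 3/5)
    (H6 : ∀ s : Finset ι, s.card = 6 → (∀ i ∈ s, ∀ j ∈ s, i ≠ j → 0 < w i j) →
      ∀ i ∈ s, ∀ j ∈ s, w i j ≤ 2/5)
    (x : ι → ℝ) (hx : ∀ i, 0 ≤ x i) :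
    ∑ i, ∑ j, w i j * (x i * x j) ≤ 10/19 * (∑ i, x i)^2 := by
  induction hn : (univ.filter fun i => x i ≠ 0).card using Nat.strong_induction_on
    generalizing x with
  | _ n ih =>
  set s := univ.filter fun i => x i ≠ 0 with hsdef
  have hmem : ∀ i, i ∈ s ↔ x i ≠ 0 := fun i => by simp [hsdef]
  by_cases hpos : ∀ i ∈ s, ∀ j ∈ s, i ≠ j → 0 < w i j
  swap
  -- Symmetrization: the form is affine along `e a - e b` when `w a b = 0`
  · push Not at hpos
    obtain ⟨a, ha, b, hb, hab, hwab⟩ := hpos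
    have hw0 : w a b = 0 := le_antisymm hwab (h0 a b)
    have hw0' : w b a = 0 := by rw [hs]; exact hw0
    -- `L i` is the weighted degree of `i`
    set L : ι → ℝ := fun i => ∑ j, w i j * x j with hL
    have key : ∀ (a b : ι), a ≠ b → x a ≠ 0 → x b ≠ 0 → w a b = 0 → w b a = 0 → L b ≤ L a →
        ∑ i, ∑ j, w i j * (x i * x j) ≤ 10/19 * (∑ i, x i)^2 := by
      intro a b hab ha hb hw hw' hLab
      set t : ι → ℝ := fun i => (if i = a then x b else 0) - (if i = b then x b else 0) with ht
      have hta : ∀ f : ι → ℝ, ∑ i, f i * t i = x b * (f a - f b) := by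
        intro f
        simp only [ht, mul_sub, mul_ite, mul_zero, sum_sub_distrib, sum_ite_eq', mem_univ, if_true]
        ring
      have ht1 : ∑ i, t i = 0 := by
        have := hta (fun _ => 1)
        simpa using this
      set y : ι → ℝ := fun i => x i + t i with hy
      have hyb : y b = 0 := by simp [hy, ht, hab.symm]
      have hynn : ∀ i, 0 ≤ y i := by
        intro i
        by_cases hib : i = b
        · subst hib; rw [hyb]
        · simp only [hy, ht, hib, if_false, sub_zero]
          split_ifs
          · exact add_nonneg (hx _) (hx _)
          · simpa using hx i
      have hsub : (univ.filter fun i => y i ≠ 0) ⊂ s := by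
        refine (ssubset_iff_of_subset ?_).2 ⟨b, (hmem b).2 hb, by simp [hyb]⟩
        intro i hi
        simp only [mem_filter, mem_univ, true_and] at hi
        rw [hmem]
        intro hxi
        apply hi
        have hia : i ≠ a := fun h => ha (h ▸ hxi)
        have hib : i ≠ b := fun h => hb (h ▸ hxi)
        simp [hy, ht, hia, hib, hxi]
      have hI := ih _ (hn ▸ card_lt_card hsub) y hynn rfl
      have hsum : ∑ i, y i = ∑ i, x i := by
        simp [hy, sum_add_distrib, ht1]
      rw [hsum] at hI
      refine le_trans ?_ hI
      have e1 : ∑ i, ∑ j, w i j * (y i * y j) = ∑ i, ∑ j, w i j * (x i * x j)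
          + 2 * (∑ i, L i * t i) + ∑ i, (∑ j, w i j * t j) * t i := by
        have hsw : ∑ i, ∑ j, w i j * (x i * t j) = ∑ i, L i * t i := by
          rw [sum_comm]
          refine sum_congr rfl fun j _ => ?_
          rw [hL, sum_mul]
          exact sum_congr rfl fun i _ => by rw [hs]; ring
        have hsw2 : ∑ i, ∑ j, w i j * (t i * x j) = ∑ i, L i * t i := by
          refine sum_congr rfl fun j _ => ?_
          rw [hL, sum_mul]
          exact sum_congr rfl fun i _ => by ring
        have : ∀ i j, w i j * (y i * y j) = w i j * (x i * x j) + w i j * (x i * t j)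
          + w i j * (t i * x j) + w i j * t j * t i := fun i j => by simp only [hy]; ring
        simp only [this, sum_add_distrib, hsw, hsw2, sum_mul]
        ring
      rw [e1, hta, hta]
      rw [hta (fun j => w a j), hta (fun j => w b j), hd, hd, hw, hw']
      have := mul_nonneg (hx b) (sub_nonneg.2 hLab)
      linarith
    rcases le_total (L b) (L a) with h | h
    · exact key a b hab ((hmem a).1 ha) ((hmem b).1 hb) hw0 hw0' h
    · exact key b a hab.symm ((hmem b).1 hb) ((hmem a).1 ha) hw0' hw0 h
  have hsum1 : ∑ i, x i = ∑ i ∈ s, x i := by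
    symm; apply sum_subset (subset_univ _)
    intro i _ hi; by_contra h; exact hi ((hmem i).2 h)
  have hsum2 : ∑ i, ∑ j, w i j * (x i * x j) = ∑ i ∈ s, ∑ j ∈ s, w i j * (x i * x j) := by
    have hz : ∀ i, i ∉ s → x i = 0 := fun i hi => by by_contra h; exact hi ((hmem i).2 h)
    rw [← sum_subset (subset_univ s)]
    · refine sum_congr rfl fun i _ => ?_
      symm; apply sum_subset (subset_univ _)
      intro j _ hj; simp [hz j hj]
    · intro i _ hi; simp [hz i hi]
  rw [hsum1, hsum2]
  clear ih
  have hub := fun c hc h => uniform_bound w s x c hc hx hd h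
  simp only [← sum_mul] at hub
  have hsq := sq_nonneg (∑ i ∈ s, x i)
  rcases Nat.lt_or_ge s.card 6 with hlt | hge
  · interval_cases hcard : s.card
    · rw [card_eq_zero] at hcard; simp [hcard]
    · obtain ⟨a, ha⟩ := card_eq_one.1 hcard
      simp only [ha, sum_singleton, hd]
      nlinarith [sq_nonneg (x a)]
    · have := hub 1 zero_le_one (fun i _ j _ _ => h1 i j)
      norm_num at this
      linarith
    · obtain ⟨a, ha, hamax⟩ := exists_max_image s x (card_pos.1 (by omega))
      have hc1 : (s.erase a).card = 2 := by rw [card_erase_of_mem ha, hcard]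
      obtain ⟨b, hb, hbmax⟩ := exists_max_image (s.erase a) x (card_pos.1 (by omega))
      have hc2 : ((s.erase a).erase b).card = 1 := by rw [card_erase_of_mem hb, hc1]
      obtain ⟨c, hc⟩ := card_eq_one.1 hc2
      have hcm : c ∈ (s.erase a).erase b := by simp [hc]
      have hs' : s = insert a (insert b {c}) := by
        rw [← hc, insert_erase hb, insert_erase ha]
      have hab : a ≠ b := (ne_of_mem_erase hb).symm
      have hbc : b ≠ c := (ne_of_mem_erase hcm).symm
      have hac : a ≠ c := (ne_of_mem_erase (mem_of_mem_erase hcm)).symm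
      have hbs := mem_of_mem_erase hb
      have hcs := mem_of_mem_erase (mem_of_mem_erase hcm)
      have := case3 (x a) (x b) (x c) (w a b) (w a c) (w b c) (hx c)
        (hbmax c (mem_of_mem_erase hcm)) (hamax b hbs) (h1 _ _) (h1 _ _)
        (H3 a b c (hpos a ha b hbs hab) (hpos a ha c hcs hac) (hpos b hbs c hcs hbc))
      rw [hs']
      simp only [sum_insert (show a ∉ insert b {c} by simp [hab, hac]),
        sum_insert (show b ∉ ({c} : Finset ι) by simp [hbc]), sum_singleton, hd]
      rw [hs b a, hs c a, hs c b]
      linarith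
    · obtain ⟨a, ha, hamax⟩ := exists_max_image s x (card_pos.1 (by omega))
      have hc1 : (s.erase a).card = 3 := by rw [card_erase_of_mem ha, hcard]
      obtain ⟨b, hb, hbmax⟩ := exists_max_image (s.erase a) x (card_pos.1 (by omega))
      have hc2 : ((s.erase a).erase b).card = 2 := by rw [card_erase_of_mem hb, hc1]
      obtain ⟨c, hcm, hcmax⟩ := exists_max_image ((s.erase a).erase b) x (card_pos.1 (by omega))
      have hc3 : (((s.erase a).erase b).erase c).card = 1 := by rw [card_erase_of_mem hcm, hc2]
      obtain ⟨d, hd'⟩ := card_eq_one.1 hc3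
      have hdm : d ∈ ((s.erase a).erase b).erase c := by simp [hd']
      have hs' : s = insert a (insert b (insert c {d})) := by
        rw [← hd', insert_erase hcm, insert_erase hb, insert_erase ha]
      simp only [mem_erase] at hb hcm hdm
      have hab : a ≠ b := hb.1.symm
      have hac : a ≠ c := hcm.2.1.symm
      have hbc : b ≠ c := hcm.1.symm
      have had : a ≠ d := hdm.2.2.1.symm
      have hbd : b ≠ d := hdm.2.1.symm
      have hcd : c ≠ d := hdm.1.symm
      have hbs := hb.2
      have hcs := hcm.2.2
      have hds := hdm.2.2.2
      have P := H4 s hcard hpos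
      have Tr := H4' s hcard hpos
      have := case4 (x a) (x b) (x c) (x d) (hx d) (hcmax d (by simp only [mem_erase]; exact hdm.2))
        (hbmax c (by simp only [mem_erase]; exact hcm.2)) (hamax b hbs)
        (w a b) (w a c) (w a d) (w b c) (w b d) (w c d)
        (P a ha b hbs) (P a ha c hcs) (P a ha d hds) (P b hbs c hcs) (P b hbs d hds)
        (Tr a ha b hbs c hcs hab hac hbc) (Tr a ha b hbs d hds hab had hbd)
        (Tr a ha c hcs d hds hac had hcd) (Tr b hbs c hcs d hds hbc hbd hcd)
      rw [hs']
      simp only [sum_insert (show a ∉ insert b (insert c {d}) by simp [hab, hac, had]),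
        sum_insert (show b ∉ insert c ({d} : Finset ι) by simp [hbc, hbd]),
        sum_insert (show c ∉ ({d} : Finset ι) by simp [hcd]), sum_singleton, hd]
      rw [hs b a, hs c a, hs c b, hs d a, hs d b, hs d c]
      linarith
    · have := hub (3/5) (by norm_num) (fun i hi j hj _ => H5 s hcard hpos i hi j hj)
      norm_num at this
      linarith
  · have := hub (2/5) (by norm_num) (fun i hi j hj hij => by
      obtain ⟨t, ht1, ht2, ht3⟩ := exists_subsuperset_card_eq (n := 6)
        (show ({i, j} : Finset ι) ⊆ s by intro k; simp; rintro (rfl | rfl) <;> assumption)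
        ((card_le_two).trans (by norm_num)) hge
      exact H6 t ht3 (fun i hi j hj => hpos i (ht2 hi) j (ht2 hj)) i (ht1 (by simp)) j
        (ht1 (by simp)))
    have hc : (6:ℝ) ≤ s.card := by exact_mod_cast hge
    nlinarith

/-! ### Embedding cliques into regular pairs -/

section Embedding
variable {V : Type} (G : SimpleGraph V)

theorem clique_union {S L : Finset V} (hS : G.IsClique (S : Set V)) (hL : G.IsClique (L : Set V))
    (h : ∀ s ∈ S, ∀ l ∈ L, G.Adj s l) :
    G.IsClique ((S ∪ L : Finset V) : Set V) ∧ (S ∪ L).card = S.card + L.card := by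
  constructor
  · intro a ha b hb hab
    simp only [coe_union, Set.mem_union, mem_coe] at ha hb
    rcases ha with ha | ha <;> rcases hb with hb | hb
    · exact hS ha hb hab
    · exact h a ha b hb
    · exact (h b hb a ha).symm
    · exact hL ha hb hab
  · exact card_union_of_disjoint (disjoint_left.2 fun a ha hb => G.loopless.irrefl a (h a ha a hb))

/-- In a regular pair only few vertices have an exceptionally small degree into a large set. -/
theorem few_atypical {A B W : Finset V} {η p γ : ℝ} (hp : 0 ≤ p) (hη : η ≤ γ / 2) (hγ : 0 < γ)
    (hu : G.IsUniform η A B) (hd : p + γ ≤ G.edgeDensity A B)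
    (hW : W ⊆ B) (hWc : η * B.card ≤ W.card) :
    ((A.filter fun v => ((W.filter (G.Adj v)).card : ℝ) < (p + γ / 2) * W.card).card : ℝ)
      ≤ η * A.card := by
  set T := A.filter fun v => ((W.filter (G.Adj v)).card : ℝ) < (p + γ / 2) * W.card with hT
  by_contra! hcon
  have h := hu (filter_subset _ A : T ⊆ A) hW (by rw [mul_comm]; exact hcon.le)
    (by rw [mul_comm]; exact hWc)
  rw [abs_lt] at h
  have hden : (G.edgeDensity T W : ℝ) ≤ p + γ / 2 := by
    rw [SimpleGraph.edgeDensity_def]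
    push_cast
    refine div_le_of_le_mul₀ (by positivity) (by positivity) ?_
    have : ((G.interedges T W).card : ℝ) = ∑ v ∈ T, ((W.filter (G.Adj v)).card : ℝ) := by
      rw [SimpleGraph.interedges_def, card_filter, sum_product]
      push_cast [card_filter]
      rfl
    rw [this]
    calc _ ≤ ∑ v ∈ T, (p + γ / 2) * W.card := sum_le_sum fun v hv => by
            rw [hT, mem_filter] at hv; exact hv.2.le
      _ = _ := by rw [sum_const, nsmul_eq_mul]; ring
  linarith [h.1]

/-- If every vertex of a 5-set has degree more than `(c-1)/5` into `W`, then some `c` of them have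
many common neighbours in `W`. -/
theorem common_nbrs {K W : Finset V} {γ : ℝ} {c : ℕ} (hγ : 0 < γ) (hK : K.card = 5) (hc : 1 ≤ c)
    (hc5 : c ≤ 5)
    (h : ∀ v ∈ K, (((c:ℝ) - 1) / 5 + γ / 2) * W.card ≤ (W.filter (G.Adj v)).card) :
    ∃ S ⊆ K, S.card = c ∧ ∃ W' ⊆ W, γ / 64 * W.card ≤ W'.card ∧
      ∀ s ∈ S, ∀ w ∈ W', G.Adj s w := by
  set g := W.filter fun w => c ≤ (K.filter fun v => G.Adj v w).card with hg
  have h1 : (((c:ℝ) - 1) + 5 * γ / 2) * W.card ≤ ((c:ℝ) - 1) * W.card + 5 * g.card := by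
    calc (((c:ℝ) - 1) + 5 * γ / 2) * W.card
        = ∑ v ∈ K, (((c:ℝ) - 1) / 5 + γ / 2) * W.card := by
          rw [sum_const, hK, nsmul_eq_mul]; push_cast; ring
      _ ≤ ∑ v ∈ K, ((W.filter (G.Adj v)).card : ℝ) := sum_le_sum h
      _ = ∑ w ∈ W, ((K.filter fun v => G.Adj v w).card : ℝ) := by
          push_cast [card_filter]; exact sum_comm
      _ ≤ ∑ w ∈ W, (((c:ℝ) - 1) + if c ≤ (K.filter fun v => G.Adj v w).card then 5 else 0) := by
          refine sum_le_sum fun w _ => ?_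
          have h5 : (K.filter fun v => G.Adj v w).card ≤ 5 := hK ▸ card_filter_le _ _
          split_ifs with hcw
          · have : ((K.filter fun v => G.Adj v w).card : ℝ) ≤ 5 := by exact_mod_cast h5
            have : (1:ℝ) ≤ c := by exact_mod_cast hc
            linarith
          · have : (K.filter fun v => G.Adj v w).card + 1 ≤ c := by omega
            have : ((K.filter fun v => G.Adj v w).card : ℝ) + 1 ≤ c := by exact_mod_cast this
            linarith
      _ = _ := by
          rw [sum_add_distrib, sum_const, nsmul_eq_mul, hg, card_filter]
          push_cast
          rw [mul_sum]
          congr 1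
          · ring
          · exact sum_congr rfl fun w _ => by split_ifs <;> simp
  have h2 : γ / 2 * W.card ≤ g.card := by linarith
  have h3 : (g.card : ℝ) ≤ ∑ S ∈ K.powersetCard c,
      ((W.filter fun w => ∀ s ∈ S, G.Adj s w).card : ℝ) := by
    have : g ⊆ (K.powersetCard c).biUnion fun S => W.filter fun w => ∀ s ∈ S, G.Adj s w := by
      intro w hw
      rw [hg, mem_filter] at hw
      obtain ⟨S, hS, hSc⟩ := exists_subset_card_eq hw.2
      simp only [mem_biUnion, mem_powersetCard, mem_filter]
      exact ⟨S, ⟨hS.trans (filter_subset _ _), hSc⟩, hw.1, fun s hs => (mem_filter.1 (hS hs)).2⟩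
    exact_mod_cast (card_le_card this).trans card_biUnion_le
  have hne : (K.powersetCard c).Nonempty := powersetCard_nonempty.2 (by omega)
  have hcard : ((K.powersetCard c).card : ℝ) ≤ 32 := by
    have : (K.powersetCard c).card ≤ 2 ^ K.card := by
      rw [← card_powerset]; exact card_le_card fun S hS => mem_powerset.2 (mem_powersetCard.1 hS).1
    rw [hK] at this
    exact_mod_cast this
  obtain ⟨S, hS, hSW⟩ := exists_le_of_sum_le hne (f := fun _ => γ / 64 * (W.card : ℝ))
    (g := fun S => ((W.filter fun w => ∀ s ∈ S, G.Adj s w).card : ℝ)) (by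
      rw [sum_const, nsmul_eq_mul]
      have : 0 ≤ γ / 64 * (W.card:ℝ) := by positivity
      nlinarith)
  rw [mem_powersetCard] at hS
  exact ⟨S, hS.1, hS.2, _, filter_subset _ _, hSW, fun s hs w hw => (mem_filter.1 hw).2 s hs⟩

/-- The clusters `C i` form a regular pair of density exceeding `(c-1)/5` by at least `γ`. -/
def GoodPair {ι : Type} (C : ι → Finset V) (η γ : ℝ) (i j : ι) (c : ℕ) : Prop :=
  G.IsUniform η (C i) (C j) ∧ ((c:ℝ) - 1) / 5 + γ ≤ G.edgeDensity (C i) (C j)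

variable {ι : Type} (C : ι → Finset V) {η γ β₀ M : ℝ}

/-- Most vertices of a large part of a cluster are typical with respect to all given sets. -/
theorem exists_typical (hη : 0 < η) (hηγ : η ≤ γ / 2) (hγ : 0 < γ) (hβ : 16 * η ≤ β₀)
    (i : ι) (J : Finset ι) (hJ : J.card ≤ 8) (c : ι → ℕ) (hc : ∀ j ∈ J, 1 ≤ c j)
    (hg : ∀ j ∈ J, GoodPair G C η γ i j (c j)) (U : ι → Finset V)
    (hUi : U i ⊆ C i) (hUic : β₀ * (C i).card ≤ (U i).card)
    (hU : ∀ j ∈ J, U j ⊆ C j) (hUc : ∀ j ∈ J, β₀ * (C j).card ≤ (U j).card) :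
    ∃ T ⊆ U i, β₀ / 2 * (C i).card ≤ T.card ∧ ∀ v ∈ T, ∀ j ∈ J,
      (((c j:ℝ) - 1) / 5 + γ / 2) * (U j).card ≤ ((U j).filter (G.Adj v)).card := by
  set B : ι → Finset V := fun j => (C i).filter fun v =>
    (((U j).filter (G.Adj v)).card : ℝ) < (((c j:ℝ) - 1) / 5 + γ / 2) * (U j).card with hB
  have hBc : ∀ j ∈ J, ((B j).card : ℝ) ≤ η * (C i).card := by
    intro j hj
    have : (1:ℝ) ≤ c j := by exact_mod_cast hc j hj
    refine few_atypical G (by linarith) hηγ hγ (hg j hj).1 (hg j hj).2 (hU j hj) ?_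
    refine le_trans ?_ (hUc j hj)
    gcongr
    linarith
  refine ⟨U i \ J.biUnion B, sdiff_subset, ?_, ?_⟩
  · have h1 : ((J.biUnion B).card : ℝ) ≤ 8 * (η * (C i).card) := by
      calc ((J.biUnion B).card : ℝ) ≤ ∑ j ∈ J, ((B j).card : ℝ) := by exact_mod_cast card_biUnion_le
        _ ≤ ∑ j ∈ J, η * (C i).card := sum_le_sum hBc
        _ = J.card * (η * (C i).card) := by rw [sum_const, nsmul_eq_mul]
        _ ≤ _ := by gcongr; exact_mod_cast hJ
    have h2 : ((U i).card : ℝ) ≤ (U i \ J.biUnion B).card + (J.biUnion B).card := by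
      exact_mod_cast (card_le_card_sdiff_add_card)
    have h3 : 16 * η * (C i).card ≤ β₀ * (C i).card := by gcongr
    linarith
  · intro v hv j hj
    rw [mem_sdiff, mem_biUnion] at hv
    by_contra! h
    exact hv.2 ⟨j, hj, mem_filter.2 ⟨hUi hv.1, h⟩⟩

/-- One vertex from each cluster of `I`, followed by a clique inside the clusters of `J`. -/
theorem singles (hη : 0 < η) (hηγ : η ≤ γ / 2) (hγ : 0 < γ) (hγ1 : γ ≤ 1) (hβ : 16 * η ≤ β₀)
    (hM0 : 0 ≤ M) (hM : ∀ i, M < β₀ / 2 * (C i).card)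
    (a : ℕ) (J : Finset ι) {β₁ : ℝ} (hβ₁ : β₀ ≤ β₁)
    (H : ∀ U : ι → Finset V, (∀ j ∈ J, U j ⊆ C j ∧ β₁ * (C j).card ≤ (U j).card) →
      ∃ K : Finset V, G.IsClique (K : Set V) ∧ a ≤ K.card ∧ K ⊆ J.biUnion U)
    (I : Finset ι) :
    Disjoint I J → (I ∪ J).card ≤ 8 →
    (∀ i ∈ I, ∀ j ∈ I ∪ J, i ≠ j → GoodPair G C η γ i j 1) →
    ∀ (U : ι → Finset V) (β : ℝ), β₁ ≤ β * (γ / 64) ^ I.card →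
    (∀ j ∈ I ∪ J, U j ⊆ C j ∧ β * (C j).card ≤ (U j).card) →
      ∃ K : Finset V, G.IsClique (K : Set V) ∧ I.card + a ≤ K.card ∧ K ⊆ (I ∪ J).biUnion U := by
  induction I using Finset.induction_on with
  | empty =>
    intro _ _ _ U β hb hU
    simp only [empty_union, card_empty, pow_zero, mul_one, zero_add] at *
    exact H U fun j hj => ⟨(hU j hj).1, le_trans (by gcongr) (hU j hj).2⟩
  | insert i I hi ih =>
    intro hdis hcard hgood U β hb hU
    rw [disjoint_insert_left] at hdis
    rw [insert_union] at hcard hgood hU ⊢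
    have hiIJ : i ∉ I ∪ J := by simp [hi, hdis.1]
    rw [card_insert_of_notMem hiIJ] at hcard
    rw [card_insert_of_notMem hi] at hb ⊢
    have hκ : 0 < γ / 64 := by positivity
    have hβ0 : 0 < β₀ := by linarith
    have hββ : β₁ ≤ β := by
      have hbpos : 0 ≤ β := by
        by_contra! hneg
        have : β * (γ / 64) ^ (I.card + 1) < 0 := mul_neg_of_neg_of_pos hneg (by positivity)
        linarith
      refine hb.trans (mul_le_of_le_one_right hbpos (pow_le_one₀ hκ.le (by linarith)))
    have hlev : ∀ j ∈ insert i (I ∪ J), β₀ * (C j).card ≤ (U j).card := fun j hj =>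
      le_trans (by gcongr; linarith) (hU j hj).2
    obtain ⟨T, hTU, hTc, hT⟩ := exists_typical G C hη hηγ hγ hβ i (I ∪ J) (by omega) (fun _ => 1)
      (fun _ _ => le_rfl)
      (fun j hj => hgood i (by simp) j (mem_insert_of_mem hj) (fun h => hiIJ (h ▸ hj))) U
      (hU i (by simp)).1 (hlev i (by simp))
      (fun j hj => (hU j (mem_insert_of_mem hj)).1) (fun j hj => hlev j (mem_insert_of_mem hj))
    have hTne : T.Nonempty := by
      rw [← card_pos]
      have := hM i
      exact_mod_cast (show (0:ℝ) < T.card by linarith)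
    obtain ⟨v, hv⟩ := hTne
    obtain ⟨K, hK, hKc, hKU⟩ := ih hdis.2 (by omega)
      (fun k hk j hj => hgood k (mem_insert_of_mem hk) j (mem_insert_of_mem hj))
      (fun j => (U j).filter (G.Adj v)) (β * (γ / 64))
      (by rw [pow_succ] at hb; linarith) (fun j hj => by
        refine ⟨(filter_subset _ _).trans (hU j (mem_insert_of_mem hj)).1, ?_⟩
        have h1 := hT v hv j hj
        have h2 := (hU j (mem_insert_of_mem hj)).2
        simp only [Nat.cast_one, sub_self, zero_div, zero_add] at h1
        refine le_trans ?_ h1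
        calc β * (γ / 64) * (C j).card = γ / 64 * (β * (C j).card) := by ring
          _ ≤ γ / 64 * (U j).card := by gcongr
          _ ≤ _ := by gcongr; norm_num)
    have hadj : ∀ s ∈ ({v} : Finset V), ∀ l ∈ K, G.Adj s l := by
      intro s hs l hl
      rw [mem_singleton] at hs; subst hs
      obtain ⟨j, _, hj⟩ := mem_biUnion.1 (hKU hl)
      exact (mem_filter.1 hj).2
    obtain ⟨h1, h2⟩ := clique_union G (S := {v}) (by simp) hK hadj
    refine ⟨{v} ∪ K, h1, by rw [h2, card_singleton]; omega, ?_⟩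
    rw [biUnion_insert]
    refine union_subset_union (by simpa using hTU hv) (hKU.trans ?_)
    exact biUnion_mono fun j _ => filter_subset _ _

/-- A `K₅` in the first set, `c` vertices of which have many common neighbours in the others. -/
theorem five_step (hη : 0 < η) (hηγ : η ≤ γ / 2) (hγ : 0 < γ) (hβ : 16 * η ≤ β₀)
    (hM : ∀ i, M < β₀ / 2 * (C i).card)
    (hα : ∀ U : Finset V, M < U.card → ∃ K ⊆ U, G.IsNClique 5 K)
    (i : ι) (J : Finset ι) (hJ : J.card ≤ 8) (c : ι → ℕ) (hc : ∀ j ∈ J, 1 ≤ c j ∧ c j ≤ 5)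
    (hg : ∀ j ∈ J, GoodPair G C η γ i j (c j)) (U : ι → Finset V)
    (hUi : U i ⊆ C i) (hUic : β₀ * (C i).card ≤ (U i).card)
    (hU : ∀ j ∈ J, U j ⊆ C j) (hUc : ∀ j ∈ J, β₀ * (C j).card ≤ (U j).card) :
    ∃ K ⊆ U i, G.IsNClique 5 K ∧ ∀ j ∈ J, ∃ S ⊆ K, S.card = c j ∧ ∃ W' ⊆ U j,
      γ / 64 * (U j).card ≤ W'.card ∧ ∀ s ∈ S, ∀ w ∈ W', G.Adj s w := by
  obtain ⟨T, hTU, hTc, hT⟩ := exists_typical G C hη hηγ hγ hβ i J hJ c (fun j hj => (hc j hj).1) hg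
    U hUi hUic hU hUc
  obtain ⟨K, hKT, hK⟩ := hα T ((hM i).trans_le hTc)
  exact ⟨K, hKT.trans hTU, hK, fun j hj => common_nbrs G hγ hK.card_eq (hc j hj).1 (hc j hj).2
    fun v hv => hT v (hKT hv) j hj⟩

/-- Density above `(c-1)/5` between two clusters yields a clique with `c` vertices in one cluster
and five in the other. -/
theorem pair_clique (hη : 0 < η) (hηγ : η ≤ γ / 2) (hγ : 0 < γ) (hβ : 16 * η ≤ β₀)
    (hM : ∀ i, M < β₀ / 2 * (C i).card)
    (hα : ∀ U : Finset V, M < U.card → ∃ K ⊆ U, G.IsNClique 5 K)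
    (i j : ι) (c : ℕ) (hc : 1 ≤ c) (hc5 : c ≤ 5)
    (hg : GoodPair G C η γ i j c) {β₁ : ℝ} (hβ₁ : β₀ ≤ β₁ * (γ / 64)) (hβ₁' : β₀ ≤ β₁)
    (U : ι → Finset V) (hU : ∀ k ∈ ({i, j} : Finset ι), U k ⊆ C k ∧ β₁ * (C k).card ≤ (U k).card) :
    ∃ K : Finset V, G.IsClique (K : Set V) ∧ c + 5 ≤ K.card ∧
      K ⊆ ({i, j} : Finset ι).biUnion U := by
  have hβ0 : 0 < β₀ := by linarith
  obtain ⟨K, hKU, hK, hj⟩ := five_step G C hη hηγ hγ hβ hM hα i {j} (by simp) (fun _ => c)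
    (by simp [hc, hc5]) (by simpa using hg) U (hU i (by simp)).1
    (le_trans (by gcongr) (hU i (by simp)).2)
    (by simpa using (hU j (by simp)).1) (by simpa using le_trans (by gcongr) (hU j (by simp)).2)
  obtain ⟨S, hSK, hSc, W, hWU, hWc, hadj⟩ := hj j (by simp)
  obtain ⟨L, hLW, hL⟩ := hα W (by
    have h2 := (hU j (by simp)).2
    have h3 := hM j
    have h4 : β₀ / 2 * (C j).card ≤ W.card := by
      refine le_trans ?_ hWc
      calc β₀ / 2 * (C j).card ≤ β₁ * (γ / 64) * (C j).card := by gcongr; linarith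
        _ = γ / 64 * (β₁ * (C j).card) := by ring
        _ ≤ _ := by gcongr
    linarith)
  obtain ⟨h1, h2⟩ := clique_union G (hK.isClique.subset (by exact_mod_cast hSK)) hL.isClique
    (fun s hs l hl => hadj s hs l (hLW hl))
  refine ⟨S ∪ L, h1, by rw [h2, hSc, hL.card_eq], ?_⟩
  intro v hv
  rw [mem_union] at hv
  rcases hv with hv | hv
  · exact mem_biUnion.2 ⟨i, by simp, hKU (hSK hv)⟩
  · exact mem_biUnion.2 ⟨j, by simp, hWU (hLW hv)⟩

/-- Pairwise densities above `(c-1)/5`, `(d-1)/5`, `(e-1)/5` on three clusters yield a clique of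
size `c + d + e`. -/
theorem triple_clique (hη : 0 < η) (hηγ : η ≤ γ / 2) (hγ : 0 < γ) (hγ1 : γ ≤ 1) (hβ : 16 * η ≤ β₀)
    (hM : ∀ i, M < β₀ / 2 * (C i).card)
    (hα : ∀ U : Finset V, M < U.card → ∃ K ⊆ U, G.IsNClique 5 K)
    (i j k : ι) (hij : i ≠ j) (hik : i ≠ k) (hjk : j ≠ k) (c d e : ℕ)
    (hc : 1 ≤ c) (hc5 : c ≤ 5) (hd : 1 ≤ d) (hd5 : d ≤ 5) (he : 1 ≤ e) (he5 : e ≤ 5)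
    (hgc : GoodPair G C η γ i j c) (hgd : GoodPair G C η γ i k d) (hge : GoodPair G C η γ j k e)
    {β₁ : ℝ} (hβ₁ : β₀ ≤ β₁ * (γ / 64) * (γ / 64)) (hβ₁' : β₀ ≤ β₁)
    (U : ι → Finset V)
    (hU : ∀ l ∈ ({i, j, k} : Finset ι), U l ⊆ C l ∧ β₁ * (C l).card ≤ (U l).card) :
    ∃ K : Finset V, G.IsClique (K : Set V) ∧ c + d + e ≤ K.card ∧
      K ⊆ ({i, j, k} : Finset ι).biUnion U := by
  have hβ0 : 0 < β₀ := by linarith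
  have hlev : ∀ l ∈ ({i, j, k} : Finset ι), β₀ * (C l).card ≤ (U l).card := fun l hl =>
    le_trans (by gcongr) (hU l hl).2
  have hmem : ∀ l ∈ ({j, k} : Finset ι), l ∈ ({i, j, k} : Finset ι) := fun l hl =>
    mem_insert_of_mem hl
  obtain ⟨K, hKU, hK, hj⟩ := five_step G C hη hηγ hγ hβ hM hα i {j, k}
    (card_le_two.trans (by norm_num)) (fun l => if l = j then c else d)
    (by intro l _; split_ifs <;> constructor <;> assumption)
    (by
      intro l hl
      simp only [mem_insert, mem_singleton] at hl
      rcases hl with rfl | rfl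
      · simpa using hgc
      · simpa [hjk.symm] using hgd) U (hU i (by simp)).1 (hlev i (by simp))
    (fun l hl => (hU l (hmem l hl)).1) (fun l hl => hlev l (hmem l hl))
  obtain ⟨S, hSK, hSc, W, hWU, hWc, hadj⟩ := hj j (by simp)
  obtain ⟨S', hSK', hSc', W', hWU', hWc', hadj'⟩ := hj k (by simp)
  simp only [if_true, if_neg hjk.symm] at hSc hSc'
  have hshr : ∀ l ∈ ({i, j, k} : Finset ι), β₁ * (γ / 64) * (C l).card ≤ γ / 64 * (U l).card := by
    intro l hl
    calc β₁ * (γ / 64) * (C l).card = γ / 64 * (β₁ * (C l).card) := by ring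
      _ ≤ _ := by gcongr; exact (hU l hl).2
  obtain ⟨L, hL, hLc, hLU⟩ := pair_clique G C hη hηγ hγ hβ hM hα j k e he he5 hge
    (β₁ := β₁ * (γ / 64)) hβ₁ (hβ₁.trans (mul_le_of_le_one_right
      (mul_nonneg (hβ0.le.trans hβ₁') (by positivity)) (by linarith)))
    (fun l => if l = j then W else W') (by
      intro l hl
      simp only [mem_insert, mem_singleton] at hl
      rcases hl with rfl | rfl
      · simp only [if_true]
        exact ⟨hWU.trans (hU l (by simp)).1, (hshr l (by simp)).trans hWc⟩
      · simp only [if_neg hjk.symm]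
        exact ⟨hWU'.trans (hU l (by simp)).1, (hshr l (by simp)).trans hWc'⟩)
  have hLW : ∀ l ∈ L, l ∈ W ∨ l ∈ W' := by
    intro l hl
    obtain ⟨x, hx, hlx⟩ := mem_biUnion.1 (hLU hl)
    split_ifs at hlx
    · exact Or.inl hlx
    · exact Or.inr hlx
  obtain ⟨h1, h2⟩ := clique_union G (S := S ∩ S') (L := L)
    (hK.isClique.subset (by exact_mod_cast inter_subset_left.trans hSK)) hL
    (fun s hs l hl => by
      rw [mem_inter] at hs
      rcases hLW l hl with h | h
      · exact hadj s hs.1 l h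
      · exact hadj' s hs.2 l h)
  have hcard : c + d ≤ (S ∩ S').card + 5 := by
    have h3 := card_union_add_card_inter S S'
    have h4 : (S ∪ S').card ≤ 5 := hK.card_eq ▸ card_le_card (union_subset hSK hSK')
    omega
  refine ⟨_, h1, by omega, ?_⟩
  intro v hv
  rw [mem_union] at hv
  rcases hv with hv | hv
  · exact mem_biUnion.2 ⟨i, by simp, hKU (hSK (mem_inter.1 hv).1)⟩
  · rcases hLW v hv with h | h
    · exact mem_biUnion.2 ⟨j, by simp, hWU h⟩
    · exact mem_biUnion.2 ⟨k, by simp, hWU' h⟩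

end Embedding

/-! ### The reduced weighted graph -/

section Regularity
variable {V : Type} (G : SimpleGraph V)

theorem no_large_clique {G : SimpleGraph V} {m : ℕ} (hG : G.CliqueFree m) {K : Finset V}
    (hK : G.IsClique (K : Set V)) : K.card < m := by
  by_contra! h
  obtain ⟨T, hT, hTc⟩ := exists_subset_card_eq h
  exact hG T ⟨hK.subset (by exact_mod_cast hT), hTc⟩

/-- The weight of a pair of clusters: density minus `γ` on regular pairs of distinct clusters. -/
noncomputable def pairWeight {ι : Type} (C : ι → Finset V) (η γ : ℝ) (i j : ι) : ℝ :=
  if i ≠ j ∧ G.IsUniform η (C i) (C j) then max 0 ((G.edgeDensity (C i) (C j) : ℝ) - γ) else 0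

variable {ι : Type} (C : ι → Finset V) {η γ M : ℝ}

theorem pairWeight_nonneg (i j : ι) : 0 ≤ pairWeight G C η γ i j := by
  unfold pairWeight; split_ifs <;> simp

theorem pairWeight_le_one (hγ : 0 < γ) (i j : ι) : pairWeight G C η γ i j ≤ 1 := by
  unfold pairWeight
  have : (G.edgeDensity (C i) (C j) : ℝ) ≤ 1 := by
    exact_mod_cast SimpleGraph.edgeDensity_le_one G (C i) (C j)
  split_ifs
  · exact max_le zero_le_one (by linarith)
  · exact zero_le_one

theorem pairWeight_comm (i j : ι) : pairWeight G C η γ i j = pairWeight G C η γ j i := by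
  unfold pairWeight
  simp only [G.edgeDensity_comm (C j), G.isUniform_comm (s := C j), ne_comm (a := j)]

theorem pairWeight_self (i : ι) : pairWeight G C η γ i i = 0 := by simp [pairWeight]

theorem ne_of_pairWeight_pos {i j : ι} (h : 0 < pairWeight G C η γ i j) : i ≠ j := by
  rintro rfl; simp [pairWeight_self] at h

theorem goodPair_of_lt {i j : ι} {c : ℕ} (hc : 1 ≤ c) (h : ((c:ℝ) - 1) / 5 < pairWeight G C η γ i j) :
    GoodPair G C η γ i j c := by
  have : (1:ℝ) ≤ c := by exact_mod_cast hc
  unfold pairWeight at h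
  split_ifs at h with hu
  · refine ⟨hu.2, ?_⟩
    rcases lt_max_iff.1 h with h | h <;> linarith
  · linarith

/-- A positive weight yields `GoodPair` with multiplicity `⌈5w⌉`. -/
theorem exists_goodPair (hγ : 0 < γ) {i j : ι} (h : 0 < pairWeight G C η γ i j) :
    ∃ c : ℕ, 1 ≤ c ∧ c ≤ 5 ∧ 5 * pairWeight G C η γ i j ≤ c ∧ GoodPair G C η γ i j c := by
  have h1 := pairWeight_le_one G C (η := η) hγ i j
  have h2 : 1 ≤ ⌈5 * pairWeight G C η γ i j⌉₊ := Nat.one_le_iff_ne_zero.2 (by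
    have := Nat.ceil_pos.2 (show 0 < 5 * pairWeight G C η γ i j by linarith)
    omega)
  refine ⟨_, h2, ?_, Nat.le_ceil _, goodPair_of_lt G C h2 ?_⟩
  · exact Nat.ceil_le.2 (by push_cast; linarith)
  · have := Nat.ceil_lt_add_one (show 0 ≤ 5 * pairWeight G C η γ i j by linarith)
    linarith

/-- The weighted reduced graph of a `K₁₂`-free graph obeys the weighted Turán bound. -/
theorem cluster_bound [Fintype ι] (hγ : 0 < γ) (hγ1 : γ ≤ 1) (hη : η = (γ / 64) ^ 6 / 16)
    (hM0 : 0 ≤ M) (hM : ∀ i, M < (γ / 64) ^ 6 / 2 * (C i).card)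
    (hα : ∀ U : Finset V, M < U.card → ∃ K ⊆ U, G.IsNClique 5 K) (hG : G.CliqueFree 12)
    (x : ι → ℝ) (hx : ∀ i, 0 ≤ x i) :
    ∑ i, ∑ j, pairWeight G C η γ i j * (x i * x j) ≤ 10 / 19 * (∑ i, x i) ^ 2 := by
  set κ := γ / 64 with hκ
  have hκ0 : 0 < κ := by positivity
  have hκ1 : κ ≤ 1 := by linarith
  have hη0 : 0 < η := by rw [hη]; positivity
  have hηγ : η ≤ γ / 2 := by
    have : κ ^ 6 ≤ κ := pow_le_of_le_one hκ0.le hκ1 (by norm_num)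
    rw [hη]; linarith
  have hβ : 16 * η ≤ κ ^ 6 := by rw [hη]; linarith
  have hp : ∀ m n : ℕ, n ≤ m → κ ^ m ≤ κ ^ n := fun m n h => pow_le_pow_of_le_one hκ0.le hκ1 h
  have htop : ∀ (β : ℝ) (J : Finset ι), β ≤ 1 → ∀ j ∈ J, C j ⊆ C j ∧ β * (C j).card ≤ (C j).card :=
    fun β J h j _ => ⟨Subset.rfl, mul_le_of_le_one_left (Nat.cast_nonneg _) h⟩
  have hpair : ∀ (i j : ι) (c : ℕ), i ≠ j → 1 ≤ c → c ≤ 5 → GoodPair G C η γ i j c →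
      ∀ I : Finset ι, Disjoint I {i, j} → (I ∪ {i, j}).card ≤ 6 →
      (∀ k ∈ I, ∀ l ∈ I ∪ {i, j}, k ≠ l → GoodPair G C η γ k l 1) → I.card + (c + 5) < 12 := by
    intro i j c hij hc hc5 hg I hI hIc hgood
    have hI4 : I.card ≤ 4 := by
      rw [card_union_of_disjoint hI, card_pair hij] at hIc; omega
    obtain ⟨K, hK, hKc, -⟩ := singles G C hη0 hηγ hγ hγ1 hβ hM0 hM (c + 5) {i, j}
      (β₁ := κ ^ 4) (hp _ _ (by norm_num))
      (fun U hU => pair_clique G C hη0 hηγ hγ hβ hM hα i j c hc hc5 hg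
        (by rw [← hκ, ← pow_succ]; exact hp _ _ (by norm_num)) (hp _ _ (by norm_num)) U hU)
      I hI (by omega) hgood C 1 (by rw [one_mul, ← hκ]; exact hp _ _ hI4)
      (htop _ _ le_rfl)
    exact lt_of_le_of_lt hKc (no_large_clique hG hK)
  have htriple : ∀ (i j k : ι) (c d e : ℕ), i ≠ j → i ≠ k → j ≠ k → 1 ≤ c → c ≤ 5 → 1 ≤ d → d ≤ 5 →
      1 ≤ e → e ≤ 5 → GoodPair G C η γ i j c → GoodPair G C η γ i k d → GoodPair G C η γ j k e →
      ∀ I : Finset ι, Disjoint I {i, j, k} → (I ∪ {i, j, k}).card ≤ 6 →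
      (∀ l ∈ I, ∀ m ∈ I ∪ {i, j, k}, l ≠ m → GoodPair G C η γ l m 1) →
      I.card + (c + d + e) < 12 := by
    intro i j k c d e hij hik hjk hc hc5 hd hd5 he he5 hgc hgd hge I hI hIc hgood
    have hI4 : I.card ≤ 4 := by
      rw [card_union_of_disjoint hI, card_eq_three.2 ⟨i, j, k, hij, hik, hjk, rfl⟩] at hIc; omega
    obtain ⟨K, hK, hKc, -⟩ := singles G C hη0 hηγ hγ hγ1 hβ hM0 hM (c + d + e) {i, j, k}
      (β₁ := κ ^ 4) (hp _ _ (by norm_num))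
      (fun U hU => triple_clique G C hη0 hηγ hγ hγ1 hβ hM hα i j k hij hik hjk c d e hc hc5 hd hd5
        he he5 hgc hgd hge (by rw [← hκ, ← pow_succ, ← pow_succ]) (hp _ _ (by norm_num)) U hU)
      I hI (by omega) hgood C 1 (by rw [one_mul, ← hκ]; exact hp _ _ hI4)
      (htop _ _ le_rfl)
    exact lt_of_le_of_lt hKc (no_large_clique hG hK)
  have hone : ∀ {i j : ι}, 0 < pairWeight G C η γ i j → GoodPair G C η γ i j 1 := fun h =>
    goodPair_of_lt G C le_rfl (by simpa using h)
  -- In a clique of `r` positive pairs, `r - 2` single vertices extend a clique on a pair.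
  have hset : ∀ s : Finset ι, s.card ≤ 6 →
      (∀ i ∈ s, ∀ j ∈ s, i ≠ j → 0 < pairWeight G C η γ i j) → ∀ i ∈ s, ∀ j ∈ s, ∀ c : ℕ,
      c ≤ 4 → 8 ≤ s.card + c → 5 * pairWeight G C η γ i j ≤ c := by
    intro s hs hpos i hi j hj c hc4 hcs
    by_contra! hcon
    have hij : i ≠ j := by
      rintro rfl
      rw [pairWeight_self] at hcon
      have : (0:ℝ) ≤ c := Nat.cast_nonneg _
      linarith
    have hsub : ({i, j} : Finset ι) ⊆ s := by simp [insert_subset_iff, hi, hj]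
    have hun : s \ {i, j} ∪ {i, j} = s := sdiff_union_of_subset hsub
    have h := hpair i j (c + 1) hij (by omega) (by omega)
      (goodPair_of_lt G C (by omega) (by push_cast; linarith)) (s \ {i, j}) sdiff_disjoint
      (by rw [hun]; exact hs)
      (fun k hk l hl hkl => by
        rw [hun] at hl
        exact hone (hpos k (mem_sdiff.1 hk).1 l hl hkl))
    have h2 := card_sdiff_add_card_eq_card hsub
    rw [card_pair hij] at h2
    omega
  refine weighted_turan _ (pairWeight_comm G C) (pairWeight_nonneg G C) (pairWeight_self G C)
    (pairWeight_le_one G C hγ) ?_ ?_ ?_ ?_ ?_ x hx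
  · intro i j k hij hik hjk
    obtain ⟨c, hc, hc5, hcw, hgc⟩ := exists_goodPair G C hγ hij
    obtain ⟨d, hd, hd5, hdw, hgd⟩ := exists_goodPair G C hγ hik
    obtain ⟨e, he, he5, hew, hge⟩ := exists_goodPair G C hγ hjk
    have h := htriple i j k c d e (ne_of_pairWeight_pos G C hij) (ne_of_pairWeight_pos G C hik)
      (ne_of_pairWeight_pos G C hjk) hc hc5 hd hd5 he he5 hgc hgd hge ∅ (by simp)
      (by rw [empty_union]; exact card_le_three.trans (by norm_num)) (by simp)
    have h' : ((c + d + e : ℕ) : ℝ) ≤ 11 := by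
      rw [card_empty] at h
      exact_mod_cast (by omega : c + d + e ≤ 11)
    push_cast at h'
    linarith
  · intro s hs hpos i hi j hj
    have := hset s (by omega) hpos i hi j hj 4 le_rfl (by omega)
    push_cast at this; linarith
  · intro s hs hpos i hi j hj k hk hij hik hjk
    obtain ⟨c, hc, hc5, hcw, hgc⟩ := exists_goodPair G C hγ (hpos i hi j hj hij)
    obtain ⟨d, hd, hd5, hdw, hgd⟩ := exists_goodPair G C hγ (hpos i hi k hk hik)
    obtain ⟨e, he, he5, hew, hge⟩ := exists_goodPair G C hγ (hpos j hj k hk hjk)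
    have hsub : ({i, j, k} : Finset ι) ⊆ s := by simp [insert_subset_iff, hi, hj, hk]
    have hun : s \ {i, j, k} ∪ {i, j, k} = s := sdiff_union_of_subset hsub
    have h := htriple i j k c d e hij hik hjk hc hc5 hd hd5 he he5 hgc hgd hge (s \ {i, j, k})
      sdiff_disjoint (by rw [hun]; omega)
      (fun k hk l hl hkl => by
        rw [hun] at hl
        exact hone (hpos k (mem_sdiff.1 hk).1 l hl hkl))
    have h2 := card_sdiff_add_card_eq_card hsub
    rw [card_eq_three.2 ⟨i, j, k, hij, hik, hjk, rfl⟩] at h2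
    have h' : ((c + d + e : ℕ) : ℝ) ≤ 10 := by
      exact_mod_cast (by omega : c + d + e ≤ 10)
    push_cast at h'
    linarith
  · intro s hs hpos i hi j hj
    have := hset s (by omega) hpos i hi j hj 3 (by norm_num) (by omega)
    push_cast at this; linarith
  · intro s hs hpos i hi j hj
    have := hset s (by omega) hpos i hi j hj 2 (by norm_num) (by omega)
    push_cast at this; linarith

/-- Edges between two parts, up to losses for low density, for the diagonal and for irregular
pairs. -/
theorem interedges_le {η γ : ℝ} (hγ : 0 < γ) (X Y : Finset V) :
    ((G.interedges X Y).card : ℝ) ≤ pairWeight G id η γ X Y * (X.card * Y.card)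
      + γ * (X.card * Y.card) + (if X = Y then (X.card : ℝ) * Y.card else 0)
      + if X ≠ Y ∧ ¬ G.IsUniform η X Y then (X.card : ℝ) * Y.card else 0 := by
  have h0 : (0:ℝ) ≤ X.card * Y.card := by positivity
  have hle : ((G.interedges X Y).card : ℝ) ≤ X.card * Y.card := by
    exact_mod_cast G.card_interedges_le_mul X Y
  have hw := mul_nonneg (pairWeight_nonneg G id (η := η) (γ := γ) X Y) h0
  have hg := mul_nonneg hγ.le h0
  by_cases hXY : X = Y
  · simp only [hXY, if_true, ne_eq, not_true, false_and, if_false] at *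
    linarith
  by_cases hu : G.IsUniform η X Y
  · have hd : ((G.interedges X Y).card : ℝ) = G.edgeDensity X Y * (X.card * Y.card) := by
      rw [SimpleGraph.edgeDensity_def]
      push_cast
      rcases h0.eq_or_lt with h | h
      · have e : ((G.interedges X Y).card : ℝ) = 0 :=
          le_antisymm (hle.trans h.ge) (Nat.cast_nonneg _)
        rw [e, zero_div, zero_mul]
      · rw [div_mul_cancel₀ _ h.ne']
    have hw2 : (G.edgeDensity X Y : ℝ) - γ ≤ pairWeight G id η γ X Y := by
      simp only [pairWeight, id, ne_eq, hXY, not_false_eq_true, hu, and_self, if_true]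
      exact le_max_right _ _
    simp only [hXY, hu, if_false, not_true, and_false, add_zero]
    rw [hd, ← add_mul]
    exact mul_le_mul_of_nonneg_right (by linarith) h0
  · simp only [hXY, hu, if_false, ne_eq, not_false_eq_true, and_self, if_true, add_zero]
    linarith

end Regularity

/-! ### The upper bound -/

section Upper
variable {V : Type} [Fintype V] (G : SimpleGraph V)

theorem exists_clique_of_alphaP_lt {p : ℕ} {U : Finset V} (h : alphaP p G < U.card) :
    ∃ K ⊆ U, G.IsNClique p K := by
  by_contra! hcon
  refine h.not_ge (le_csSup ?_ ⟨U, rfl, fun t ht => hcon t ht⟩)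
  refine ⟨Fintype.card V, ?_⟩
  rintro k ⟨s, rfl, -⟩
  exact card_le_univ s

theorem two_mul_edgeCount :
    2 * edgeCount G = ((univ ×ˢ univ : Finset (V × V)).filter fun e => G.Adj e.1 e.2).card := by
  have h1 : edgeCount G = G.edgeFinset.card := by
    rw [edgeCount, ← SimpleGraph.coe_edgeFinset, Set.ncard_coe_finset]
  rw [h1, ← SimpleGraph.sum_degrees_eq_twice_card_edges, card_filter, sum_product]
  refine sum_congr rfl fun v _ => ?_
  rw [← card_filter, ← SimpleGraph.card_neighborFinset_eq_degree, SimpleGraph.neighborFinset_eq_filter]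

/-- Counting edges through a regular equipartition. -/
theorem edges_le_of_partition {η γ : ℝ} (hη : 0 < η) (hηγ : 4 * η ≤ γ) (hγ : 0 < γ)
    (P : Finpartition (univ : Finset V)) (hne : 0 < Fintype.card V)
    (hP : P.IsEquipartition) (ht : 2 / γ ≤ P.parts.card) (hu : P.IsUniform G η)
    (hw : ∑ X ∈ P.parts, ∑ Y ∈ P.parts, pairWeight G id η γ X Y * (X.card * Y.card)
      ≤ 10 / 19 * (Fintype.card V : ℝ) ^ 2) :
    2 * (edgeCount G : ℝ) ≤ (10 / 19 + 3 * γ) * (Fintype.card V : ℝ) ^ 2 := by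
  have hsum : ∑ X ∈ P.parts, (X.card : ℝ) = Fintype.card V := by
    have := P.sum_card_parts
    rw [card_univ] at this
    exact_mod_cast this
  have hne' : (univ : Finset V).Nonempty := by
    rw [← card_pos, card_univ]; exact hne
  have htn : P.parts.card ≤ Fintype.card V := by
    have := P.card_parts_le_card; rwa [card_univ] at this
  have ht0 : (0:ℝ) < P.parts.card := lt_of_lt_of_le (by positivity) ht
  set n : ℝ := (Fintype.card V : ℝ) with hn
  have hn0 : 0 < n := by rw [hn]; exact_mod_cast hne
  have htn' : (P.parts.card : ℝ) ≤ n := by rw [hn]; exact_mod_cast htn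
  have h1 : 2 * (edgeCount G : ℝ) = ∑ X ∈ P.parts, ∑ Y ∈ P.parts, ((G.interedges X Y).card : ℝ) := by
    have := Rel.card_interedges_finpartition (r := G.Adj) P P
    rw [sum_product] at this
    rw_mod_cast [two_mul_edgeCount]
    exact this
  have h2 : ∑ X ∈ P.parts, ∑ Y ∈ P.parts, γ * ((X.card : ℝ) * Y.card) = γ * n ^ 2 := by
    simp_rw [← mul_sum, hsum, ← sum_mul, hsum]; ring
  have h3 : ∑ X ∈ P.parts, ∑ Y ∈ P.parts, (if X = Y then (X.card : ℝ) * Y.card else 0)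
      ≤ γ * n ^ 2 := by
    calc _ = ∑ X ∈ P.parts, (X.card : ℝ) * X.card := by
          refine sum_congr rfl fun X hX => ?_
          rw [sum_ite_eq]; simp [hX]
      _ ≤ ∑ X ∈ P.parts, (X.card : ℝ) * (n / P.parts.card + 1) := by
          refine sum_le_sum fun X hX => ?_
          gcongr
          have h := hP.card_part_le_average_add_one hX
          rw [card_univ] at h
          calc (X.card : ℝ) ≤ ((Fintype.card V / P.parts.card + 1 : ℕ) : ℝ) := by exact_mod_cast h
            _ ≤ _ := by push_cast; gcongr; exact Nat.cast_div_le
      _ = n * (n / P.parts.card + 1) := by rw [← sum_mul, hsum]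
      _ ≤ n * (2 * (n / P.parts.card)) := by
          have : 1 ≤ n / P.parts.card := (one_le_div ht0).2 htn'
          gcongr; linarith
      _ = 2 / P.parts.card * n ^ 2 := by ring
      _ ≤ γ * n ^ 2 := by
          gcongr
          rw [div_le_iff₀ ht0]; rw [div_le_iff₀ hγ] at ht; linarith
  have h4 : ∑ X ∈ P.parts, ∑ Y ∈ P.parts,
      (if X ≠ Y ∧ ¬ G.IsUniform η X Y then (X.card : ℝ) * Y.card else 0) ≤ γ * n ^ 2 := by
    have h := hP.sum_nonUniforms_lt' hne' hη hu
    have e : ∑ X ∈ P.parts, ∑ Y ∈ P.parts,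
        (if X ≠ Y ∧ ¬ G.IsUniform η X Y then (X.card : ℝ) * Y.card else 0)
        = ∑ i ∈ P.nonUniforms G η, ((i.1.card : ℝ) * i.2.card) := by
      rw [← sum_product', ← sum_filter]
      refine sum_congr ?_ fun _ _ => rfl
      ext ⟨X, Y⟩
      simp [Finpartition.mk_mem_nonUniforms, and_assoc]
    rw [e]
    refine h.le.trans ?_
    rw [card_univ]
    calc η * (n + P.parts.card) ^ 2 ≤ η * (n + n) ^ 2 := by gcongr
      _ = 4 * η * n ^ 2 := by ring
      _ ≤ _ := by gcongr
  have h5 : 2 * (edgeCount G : ℝ) ≤ _ := h1.le.trans (sum_le_sum fun X _ => sum_le_sum fun Y _ =>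
    interedges_le G (η := η) hγ X Y)
  simp only [sum_add_distrib] at h5
  linarith

/-- The upper bound for an arbitrary finite vertex type. -/
theorem upper_bound (δ : ℝ) (hδ : 0 < δ) : ∃ (ε : ℝ) (n₀ : ℕ), 0 < ε ∧
    ∀ (V : Type) [Fintype V] (G : SimpleGraph V), n₀ ≤ Fintype.card V → G.CliqueFree 12 →
      (alphaP 5 G : ℝ) ≤ ε * (Fintype.card V : ℝ) →
      (edgeCount G : ℝ) ≤ (10 / 19 + δ) * ((Fintype.card V).choose 2 : ℝ) := by
  set γ : ℝ := min 1 (δ / 8) with hγd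
  have hγ : 0 < γ := by positivity
  have hγ1 : γ ≤ 1 := min_le_left _ _
  have hγδ : γ ≤ δ / 8 := min_le_right _ _
  set β₀ : ℝ := (γ / 64) ^ 6 with hβ₀
  have hβ0 : 0 < β₀ := by positivity
  have hβγ : β₀ ≤ γ / 64 := pow_le_of_le_one (by positivity) (by linarith) (by norm_num)
  set η : ℝ := β₀ / 16 with hη
  have hη0 : 0 < η := by positivity
  set l : ℕ := ⌈2 / γ⌉₊ with hl
  set b : ℕ := SzemerediRegularity.bound η l with hb
  have hb0 : (0:ℝ) < b := Nat.cast_pos.2 (SzemerediRegularity.bound_pos _ _)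
  refine ⟨β₀ / (8 * b), l + 1 + ⌈(10 / 19 + δ) * (8 / (5 * δ))⌉₊, by positivity, ?_⟩
  intro V _ G hn hG hα
  set n := Fintype.card V with hnd
  have hn0 : 0 < n := by omega
  have hn0' : (0:ℝ) < n := by exact_mod_cast hn0
  obtain ⟨P, hP, hlP, hPb, hu⟩ := szemeredi_regularity G (ε := η) (l := l) hη0 (by omega)
  have hPb' : (P.parts.card : ℝ) ≤ b := by exact_mod_cast hPb
  have hPn : P.parts.card ≤ n := by
    have := P.card_parts_le_card; rwa [card_univ] at this
  have hcell : ∀ X ∈ P.parts, (n:ℝ) / (2 * b) ≤ X.card := by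
    intro X hX
    have hp : 0 < P.parts.card := card_pos.2 ⟨X, hX⟩
    have h := hP.average_le_card_part hX
    rw [card_univ, ← hnd] at h
    have h1 : n < 2 * P.parts.card * (n / P.parts.card) := by
      have h2 := Nat.div_add_mod n P.parts.card
      have h3 := Nat.mod_lt n hp
      have h4 : 1 ≤ n / P.parts.card := Nat.div_pos hPn hp
      nlinarith
    have h5 : (n:ℝ) ≤ 2 * P.parts.card * X.card := by
      have : 2 * P.parts.card * (n / P.parts.card) ≤ 2 * P.parts.card * X.card := by gcongr
      exact_mod_cast h1.le.trans this
    rw [div_le_iff₀ (by positivity)]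
    calc (n:ℝ) ≤ 2 * P.parts.card * X.card := h5
      _ ≤ 2 * b * X.card := by gcongr
      _ = _ := by ring
  have hmain := cluster_bound G (fun X : {X // X ∈ P.parts} => X.1) (η := η)
    (M := β₀ / (8 * b) * n) hγ hγ1 rfl (by positivity)
    (fun X => by
      calc β₀ / (8 * b) * n = β₀ / 2 * (n / (2 * b)) / 2 := by field_simp; norm_num
        _ < β₀ / 2 * (n / (2 * b)) := half_lt_self (by positivity)
        _ ≤ _ := by gcongr; exact hcell X.1 X.2)
    (fun U hU => exists_clique_of_alphaP_lt G (by exact_mod_cast hα.trans_lt hU)) hG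
    (fun X => (X.1.card : ℝ)) (fun X => by positivity)
  have hsum : ∑ X ∈ P.parts, (X.card : ℝ) = n := by
    have := P.sum_card_parts
    rw [card_univ] at this
    exact_mod_cast this
  have hw : ∑ X ∈ P.parts, ∑ Y ∈ P.parts, pairWeight G id η γ X Y * ((X.card : ℝ) * Y.card)
      ≤ 10 / 19 * (n : ℝ) ^ 2 := by
    rw [sum_coe_sort P.parts (fun X => (X.card : ℝ)), hsum] at hmain
    rw [← sum_coe_sort P.parts]
    refine le_trans (le_of_eq ?_) hmain
    refine sum_congr rfl fun X _ => ?_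
    rw [← sum_coe_sort P.parts]
    refine sum_congr rfl fun Y _ => ?_
    simp only [pairWeight, id, ne_eq, Subtype.ext_iff]
  have h2 := edges_le_of_partition G hη0 (by rw [hη]; linarith) hγ P hn0 hP
    ((Nat.le_ceil _).trans (by exact_mod_cast hlP)) hu hw
  rw [Nat.cast_choose_two]
  have h3 : (10 / 19 + δ) * (8 / (5 * δ)) ≤ n :=
    (Nat.le_ceil _).trans (by exact_mod_cast (by omega : _ ≤ n))
  have h4 : 10 / 19 + δ ≤ 5 * δ / 8 * n := by
    calc 10 / 19 + δ = 5 * δ / 8 * ((10 / 19 + δ) * (8 / (5 * δ))) := by field_simp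
      _ ≤ _ := by gcongr
  have h5 : 3 * γ * (n:ℝ) ^ 2 ≤ 3 * (δ / 8) * (n:ℝ) ^ 2 := by gcongr
  have h6 := mul_le_mul_of_nonneg_right h4 hn0'.le
  nlinarith

end Upper

/-! ### Analysis on the discrete torus -/

section Poincare

/-- Poincaré inequality on a cycle. -/
theorem poincare_cycle {m : ℕ} [NeZero m] (f : ZMod m → ℝ) :
    m * ∑ a, f a ^ 2 ≤ (∑ a, f a) ^ 2 + m ^ 3 * ∑ a, (f (a + 1) - f a) ^ 2 := by
  have hstep : ∀ (a : ZMod m) (t : ℕ), |f (a + t) - f a| ≤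
      ∑ s ∈ range t, |f (a + s + 1) - f (a + s)| := by
    intro a t
    induction t with
    | zero => simp
    | succ t ih =>
      rw [sum_range_succ]
      calc |f (a + (t + 1 : ℕ)) - f a|
          = |(f (a + t) - f a) + (f (a + t + 1) - f (a + t))| := by
            push_cast; rw [← add_assoc]; congr 1; ring
        _ ≤ _ := (abs_add_le _ _).trans (by gcongr)
  have hdiff : ∀ a b : ZMod m, |f b - f a| ≤ ∑ c, |f (c + 1) - f c| := by
    intro a b
    have h := hstep a (b - a).val
    rw [ZMod.natCast_zmod_val, add_sub_cancel] at h
    refine h.trans ?_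
    have hinj : Set.InjOn (fun s : ℕ => a + (s : ZMod m)) (range (b - a).val : Set ℕ) := by
      intro s hs t ht hst
      have hlt := ZMod.val_lt (b - a)
      simp only [coe_range, Set.mem_Iio] at hs ht
      have h2 : (s : ZMod m) = t := add_left_cancel hst
      rw [ZMod.natCast_eq_natCast_iff', Nat.mod_eq_of_lt (by omega), Nat.mod_eq_of_lt (by omega)]
        at h2
      exact h2
    rw [← sum_image (f := fun c => |f (c + 1) - f c|) hinj]
    exact sum_le_sum_of_subset_of_nonneg (subset_univ _) fun _ _ _ => abs_nonneg _
  have hsq : ∀ a b : ZMod m, (f b - f a) ^ 2 ≤ m * ∑ c, (f (c + 1) - f c) ^ 2 := by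
    intro a b
    calc (f b - f a) ^ 2 = |f b - f a| ^ 2 := (sq_abs _).symm
      _ ≤ (∑ c, |f (c + 1) - f c|) ^ 2 := by gcongr; exact hdiff a b
      _ ≤ (univ : Finset (ZMod m)).card * ∑ c, |f (c + 1) - f c| ^ 2 := sq_sum_le_card_mul_sum_sq
      _ = _ := by simp [ZMod.card]
  have hall : ∑ a, ∑ b, (f b - f a) ^ 2 ≤ ∑ _a : ZMod m, ∑ _b : ZMod m,
      m * ∑ c, (f (c + 1) - f c) ^ 2 := sum_le_sum fun a _ => sum_le_sum fun b _ => hsq a b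
  have hexp : ∑ a, ∑ b, (f b - f a) ^ 2 = 2 * (m * ∑ a, f a ^ 2 - (∑ a, f a) ^ 2) := by
    have : ∀ a b, (f b - f a) ^ 2 = f b ^ 2 - 2 * (f a * f b) + f a ^ 2 := by intros; ring
    simp_rw [this, sum_add_distrib, sum_sub_distrib, ← mul_sum, ← sum_mul, sum_const, card_univ,
      ZMod.card, nsmul_eq_mul, ← mul_sum]
    ring
  rw [hexp] at hall
  simp only [sum_const, card_univ, ZMod.card, nsmul_eq_mul] at hall
  have h0 : 0 ≤ (m:ℝ) ^ 3 * ∑ a, (f (a + 1) - f a) ^ 2 := by positivity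
  nlinarith

theorem sum_fin_cons {m k : ℕ} [NeZero m] (F : (Fin (k + 1) → ZMod m) → ℝ) :
    ∑ x, F x = ∑ a : ZMod m, ∑ y : Fin k → ZMod m, F (Fin.cons a y) := by
  rw [← Fintype.sum_prod_type' (f := fun a y => F (Fin.cons a y))]
  exact (Fintype.sum_equiv (Fin.consEquiv fun _ => ZMod m) _ _ fun _ => rfl).symm

/-- Poincaré inequality on a discrete torus, by tensorisation. -/
theorem poincare_torus {m : ℕ} [NeZero m] (k : ℕ) (f : (Fin k → ZMod m) → ℝ) :
    (m:ℝ) ^ k * ∑ x, f x ^ 2 ≤ (∑ x, f x) ^ 2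
      + m ^ 2 * m ^ k * ∑ x, ∑ j, (f (x + Pi.single j 1) - f x) ^ 2 := by
  induction k with
  | zero => simp
  | succ k ih =>
    set F : ZMod m → ℝ := fun a => ∑ y : Fin k → ZMod m, f (Fin.cons a y) with hF
    have h0 : ∀ (a : ZMod m) (y : Fin k → ZMod m),
        (Fin.cons a y : Fin (k + 1) → ZMod m) + Pi.single 0 1 = Fin.cons (a + 1) y := by
      intro a y; ext i
      refine Fin.cases ?_ (fun i => ?_) i <;> simp
    have hs : ∀ (a : ZMod m) (y : Fin k → ZMod m) (j : Fin k),
        (Fin.cons a y : Fin (k + 1) → ZMod m) + Pi.single j.succ 1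
          = Fin.cons a (y + Pi.single j 1) := by
      intro a y j; ext i
      refine Fin.cases ?_ (fun i => ?_) i
      · simp
      · simp [Pi.single_apply]
    have h1 := fun a => ih fun y => f (Fin.cons a y)
    have h2 := sum_le_sum fun a (_ : a ∈ (univ : Finset (ZMod m))) => h1 a
    have h3 := poincare_cycle F
    have h4 : ∀ a, (F (a + 1) - F a) ^ 2 ≤
        (m:ℝ) ^ k * ∑ y : Fin k → ZMod m, (f (Fin.cons (a + 1) y) - f (Fin.cons a y)) ^ 2 := by
      intro a
      simp only [hF]
      rw [← sum_sub_distrib]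
      refine sq_sum_le_card_mul_sum_sq.trans (le_of_eq ?_)
      simp [ZMod.card]
    have h5 := sum_le_sum fun a (_ : a ∈ (univ : Finset (ZMod m))) => h4 a
    simp only [sum_add_distrib, ← mul_sum] at h2 h5
    rw [sum_fin_cons, sum_fin_cons, sum_fin_cons]
    simp only [Fin.sum_univ_succ, h0, hs, sum_add_distrib]
    have hm : (0:ℝ) ≤ m := by positivity
    have h6 := mul_le_mul_of_nonneg_left h2 hm
    have h7 := mul_le_mul_of_nonneg_left h5 (pow_nonneg hm 3)
    rw [pow_succ]
    nlinarith

end Poincare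

section Anticoncentration
variable {m k : ℕ} [NeZero m]

theorem sum_shift (F : (Fin k → ZMod m) → ℝ) (v : Fin k → ZMod m) : ∑ u, F (u + v) = ∑ u, F u :=
  Fintype.sum_equiv (Equiv.addRight v) _ _ fun _ => rfl

/-- Sums of independent variables that are antisymmetric under a shift have variance at most `k`. -/
theorem sum_sq_le (g : ZMod m → ℝ) (s : ZMod m) (hg : ∀ a, g (a + s) = - g a)
    (h1 : ∀ a, |g a| ≤ 1) :
    ∑ u : Fin k → ZMod m, (∑ j, g (u j)) ^ 2 ≤ k * (m:ℝ) ^ k := by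
  have hoff : ∀ i j : Fin k, i ≠ j → ∑ u : Fin k → ZMod m, g (u i) * g (u j) = 0 := by
    intro i j hij
    have h := sum_shift (fun u : Fin k → ZMod m => g (u i) * g (u j)) (Pi.single i s)
    simp only [Pi.add_apply, Pi.single_eq_same, Pi.single_eq_of_ne hij.symm, add_zero, hg,
      neg_mul, sum_neg_distrib] at h
    linarith
  calc ∑ u : Fin k → ZMod m, (∑ j, g (u j)) ^ 2
      = ∑ i, ∑ j, ∑ u : Fin k → ZMod m, g (u i) * g (u j) := by
        simp_rw [sq, sum_mul_sum]
        rw [sum_comm]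
        exact sum_congr rfl fun i _ => sum_comm
    _ = ∑ i, ∑ u : Fin k → ZMod m, g (u i) * g (u i) :=
        sum_congr rfl fun i _ => sum_eq_single i (fun j _ hj => hoff i j hj.symm) (by simp)
    _ ≤ ∑ i : Fin k, ∑ u : Fin k → ZMod m, (1:ℝ) := by
        refine sum_le_sum fun i _ => sum_le_sum fun u _ => ?_
        rw [← sq, ← sq_abs]
        exact pow_le_one₀ (abs_nonneg _) (h1 _)
    _ = _ := by simp [ZMod.card]

/-- Follows from `sum_sq_le` by Cauchy–Schwarz. -/
theorem sum_abs_le (g : ZMod m → ℝ) (s : ZMod m) (hg : ∀ a, g (a + s) = - g a)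
    (h1 : ∀ a, |g a| ≤ 1) :
    ∑ u : Fin k → ZMod m, |∑ j, g (u j)| ≤ √k * (m:ℝ) ^ k := by
  refine abs_le_of_sq_le_sq' ?_ (by positivity) |>.2
  calc (∑ u : Fin k → ZMod m, |∑ j, g (u j)|) ^ 2
      ≤ (univ : Finset (Fin k → ZMod m)).card * ∑ u : Fin k → ZMod m, |∑ j, g (u j)| ^ 2 :=
        sq_sum_le_card_mul_sum_sq
    _ = (m:ℝ) ^ k * ∑ u : Fin k → ZMod m, (∑ j, g (u j)) ^ 2 := by simp [ZMod.card]
    _ ≤ (m:ℝ) ^ k * (k * (m:ℝ) ^ k) := by gcongr; exact sum_sq_le g s hg h1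
    _ = (√k * (m:ℝ) ^ k) ^ 2 := by rw [mul_pow, Real.sq_sqrt (by positivity)]; ring

/-- Small-ball estimate, obtained by pairing `G = ∑ g(u_j)` with its own truncation: reflecting
one coordinate changes `G` by `2 g(u_j)`, which the truncation detects whenever `|G| ≤ μ`. -/
theorem small_ball (g : ZMod m → ℝ) (s q : ZMod m) (hs : ∀ a, g (a + s) = - g a)
    (hq : ∀ a, g a ^ 2 + g (a + q) ^ 2 = 1) {μ : ℝ} (hμ : 0 ≤ μ) :
    (k:ℝ) * ((univ.filter fun u : Fin k → ZMod m => |∑ j, g (u j)| ≤ μ).card : ℝ)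
      ≤ 2 * (μ + 3) * √k * (m:ℝ) ^ k := by
  have h1 : ∀ a, |g a| ≤ 1 := fun a => by
    rw [abs_le_one_iff_mul_self_le_one]; nlinarith [hq a, sq_nonneg (g (a + q))]
  set B := μ + 2 with hB
  set ψ : ℝ → ℝ := fun t => max (-B) (min B t) with hψ
  have hψm : Monotone ψ := fun a b h => max_le_max le_rfl (min_le_min le_rfl h)
  have hψB : ∀ t, |ψ t| ≤ B := fun t => abs_le.2
    ⟨le_max_left _ _, max_le (by linarith) (min_le_left _ _)⟩
  have hψid : ∀ t, |t| ≤ B → ψ t = t := fun t ht => by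
    rw [abs_le] at ht
    simp only [hψ]
    rw [min_eq_right ht.2, max_eq_right ht.1]
  set G : (Fin k → ZMod m) → ℝ := fun u => ∑ j, g (u j) with hG
  have hshift : ∀ (u : Fin k → ZMod m) (j : Fin k), G (u + Pi.single j s) = G u - 2 * g (u j) := by
    intro u j
    have : ∀ i, g ((u + (Pi.single j s : Fin k → ZMod m)) i) = g (u i) - if i = j then 2 * g (u j) else 0 := by
      intro i
      by_cases h : i = j
      · subst h; simp [hs]; ring
      · simp [h]
    simp only [hG, this, sum_sub_distrib, sum_ite_eq', mem_univ, if_true]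
  have hstein : ∀ j : Fin k, ∑ u ∈ univ.filter (fun u => |G u| ≤ μ), g (u j) ^ 2
      ≤ ∑ u, g (u j) * ψ (G u) := by
    intro j
    have h2 := sum_shift (fun u => g (u j) * ψ (G u)) (Pi.single j s)
    simp only [Pi.add_apply, Pi.single_eq_same, hs, hshift] at h2
    have h3 : ∑ u, g (u j) * ψ (G u)
        = ∑ u, g (u j) * (ψ (G u) - ψ (G u - 2 * g (u j))) / 2 := by
      have : ∀ u, g (u j) * (ψ (G u) - ψ (G u - 2 * g (u j))) / 2
        = (g (u j) * ψ (G u) + -g (u j) * ψ (G u - 2 * g (u j))) / 2 := by intro u; ring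
      simp_rw [this, ← sum_div, sum_add_distrib]
      rw [h2]; ring
    have hnn : ∀ u, 0 ≤ g (u j) * (ψ (G u) - ψ (G u - 2 * g (u j))) / 2 := by
      intro u
      rcases le_total 0 (g (u j)) with h | h
      · have := hψm (show G u - 2 * g (u j) ≤ G u by linarith)
        have := mul_nonneg h (sub_nonneg.2 this); linarith
      · have := hψm (show G u ≤ G u - 2 * g (u j) by linarith)
        have := mul_nonneg_of_nonpos_of_nonpos h (sub_nonpos.2 this); linarith
    rw [h3]
    refine le_trans (sum_le_sum fun u hu => ?_)
      (sum_le_sum_of_subset_of_nonneg (filter_subset _ _) fun u _ _ => hnn u)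
    rw [mem_filter] at hu
    have ha := abs_le.1 (h1 (u j))
    have hb := abs_le.1 hu.2
    rw [hψid (G u) (hu.2.trans (by linarith)), hψid _ (abs_le.2 ⟨by linarith, by linarith⟩)]
    exact le_of_eq (by ring)
  have hsum : ∑ u ∈ univ.filter (fun u => |G u| ≤ μ), ∑ j, g (u j) ^ 2 ≤ ∑ u, G u * ψ (G u) := by
    rw [sum_comm]
    refine (sum_le_sum fun j _ => hstein j).trans (le_of_eq ?_)
    rw [sum_comm]
    exact sum_congr rfl fun u _ => by rw [hG, sum_mul]
  have hup : ∑ u, G u * ψ (G u) ≤ B * (√k * (m:ℝ) ^ k) := by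
    calc ∑ u, G u * ψ (G u) ≤ ∑ u, B * |G u| := sum_le_sum fun u _ => by
          calc G u * ψ (G u) ≤ |G u * ψ (G u)| := le_abs_self _
            _ = |G u| * |ψ (G u)| := abs_mul _ _
            _ ≤ |G u| * B := by gcongr; exact hψB _
            _ = _ := mul_comm _ _
      _ ≤ _ := by rw [← mul_sum]; gcongr; exact sum_abs_le g s hs h1
  have hlow : (k:ℝ) / 2 * ((univ.filter fun u => |G u| ≤ μ).card : ℝ) - √k * (m:ℝ) ^ k
      ≤ ∑ u ∈ univ.filter (fun u => |G u| ≤ μ), ∑ j, g (u j) ^ 2 := by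
    have hvar := sum_abs_le (k := k) (fun a => g a ^ 2 - 1 / 2) q
      (fun a => by linarith [hq a]) (fun a => abs_le.2
        ⟨by nlinarith [sq_nonneg (g a)], by nlinarith [hq a, sq_nonneg (g (a + q))]⟩)
    have h5 : ∀ u : Fin k → ZMod m, (k:ℝ) / 2 - |∑ j, (g (u j) ^ 2 - 1 / 2)| ≤ ∑ j, g (u j) ^ 2 := by
      intro u
      have h6 := neg_abs_le (∑ j, (g (u j) ^ 2 - 1 / 2))
      have h7 : ∑ j, (g (u j) ^ 2 - 1 / 2) = ∑ j, g (u j) ^ 2 - k / 2 := by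
        rw [sum_sub_distrib]; simp [div_eq_mul_inv]
      linarith
    calc _ ≤ ∑ u ∈ univ.filter (fun u => |G u| ≤ μ), ((k:ℝ) / 2 - |∑ j, (g (u j) ^ 2 - 1 / 2)|) := by
          rw [sum_sub_distrib, sum_const, nsmul_eq_mul, mul_comm]
          gcongr
          refine le_trans (sum_le_sum_of_subset_of_nonneg (filter_subset _ _)
            fun u _ _ => abs_nonneg _) hvar
      _ ≤ _ := sum_le_sum fun u _ => h5 u
  have hfin := hlow.trans (hsum.trans hup)
  nlinarith

end Anticoncentration

/-! ### Concentration of measure -/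

section Torus
variable {m k : ℕ} [NeZero m]

/-- The standard character `a ↦ exp(2πia/m)` of `ℤ/m`. -/
noncomputable def chr (a : ZMod m) : ℂ := ZMod.stdAddChar a

theorem norm_chr (a : ZMod m) : ‖chr a‖ = 1 := AddChar.norm_apply _ a

theorem chr_add (a b : ZMod m) : chr (a + b) = chr a * chr b := AddChar.map_add_eq_mul _ a b

theorem chr_neg (a : ZMod m) : chr (-a) = (starRingEnd ℂ) (chr a) := AddChar.map_neg_eq_conj _ a

theorem chr_mul_conj (a : ZMod m) : chr a * (starRingEnd ℂ) (chr a) = 1 := by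
  rw [Complex.mul_conj, Complex.normSq_eq_norm_sq, norm_chr]; simp

theorem chr_natCast (r : ℕ) : chr (r : ZMod m) = Complex.exp (2 * Real.pi * Complex.I * r / m) := by
  have := ZMod.stdAddChar_coe (N := m) (r : ℤ)
  simpa [chr] using this

theorem norm_chr_one_sub : ‖chr (1 : ZMod m) - 1‖ ≤ 7 / m := by
  have hm : (0:ℝ) < m := by exact_mod_cast NeZero.pos m
  have h := chr_natCast (m := m) 1
  rw [Nat.cast_one] at h
  have h2 : (2 * Real.pi * Complex.I * (1:ℕ) / m : ℂ) = Complex.I * ((2 * Real.pi / m : ℝ) : ℂ) := by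
    push_cast; ring
  rw [h, h2]
  refine Real.norm_exp_I_mul_ofReal_sub_one_le.trans ?_
  rw [Real.norm_of_nonneg (by positivity)]
  have := Real.pi_lt_d2
  gcongr; linarith

/-- Squared distance between `x` and the rotation of `y` by `w`, under the embedding of the torus
in `ℂ^k`. -/
noncomputable def twist (w : ℂ) (x y : Fin k → ZMod m) : ℝ := ∑ j, ‖chr (x j) - w * chr (y j)‖ ^ 2

theorem twist_nonneg (w : ℂ) (x y : Fin k → ZMod m) : 0 ≤ twist w x y := by
  unfold twist; positivity

theorem twist_self (w : ℂ) (x : Fin k → ZMod m) : twist w x x = k * ‖1 - w‖ ^ 2 := by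
  have : ∀ a : ZMod m, ‖chr a - w * chr a‖ = ‖1 - w‖ := fun a => by
    rw [← one_sub_mul, norm_mul, norm_chr, mul_one]
  simp [twist, this]

theorem twist_swap {w : ℂ} (hw : ‖w‖ = 1) (x y : Fin k → ZMod m) :
    twist ((starRingEnd ℂ) w) y x = twist w x y := by
  unfold twist
  refine sum_congr rfl fun j _ => ?_
  congr 1
  have h : w * (starRingEnd ℂ) w = 1 := by
    rw [Complex.mul_conj, Complex.normSq_eq_norm_sq, hw]; simp
  calc ‖chr (y j) - (starRingEnd ℂ) w * chr (x j)‖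
      = ‖w‖ * ‖chr (y j) - (starRingEnd ℂ) w * chr (x j)‖ := by rw [hw, one_mul]
    _ = ‖-(chr (x j) - w * chr (y j))‖ := by
        rw [← norm_mul]; congr 1; linear_combination (-chr (x j)) * h
    _ = _ := norm_neg _

theorem twist_triangle {w v : ℂ} (hw : ‖w‖ = 1) (x y z : Fin k → ZMod m) :
    twist (w * v) x z ≤ 2 * twist w x y + 2 * twist v y z := by
  unfold twist
  rw [mul_sum, mul_sum, ← sum_add_distrib]
  refine sum_le_sum fun j _ => ?_
  have h : chr (x j) - w * v * chr (z j)
      = (chr (x j) - w * chr (y j)) + w * (chr (y j) - v * chr (z j)) := by ring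
  have h2 := norm_add_le (chr (x j) - w * chr (y j)) (w * (chr (y j) - v * chr (z j)))
  rw [norm_mul w, hw, one_mul] at h2
  rw [h]
  have h3 := norm_nonneg ((chr (x j) - w * chr (y j)) + w * (chr (y j) - v * chr (z j)))
  nlinarith [sq_nonneg (‖chr (x j) - w * chr (y j)‖ - ‖chr (y j) - v * chr (z j)‖)]

/-- Squared distance to the set `A`. -/
noncomputable def distTo (A : Finset (Fin k → ZMod m)) (hA : A.Nonempty) (x : Fin k → ZMod m) : ℝ :=
  A.inf' hA fun a => twist 1 a x

theorem distTo_nonneg (A : Finset (Fin k → ZMod m)) (hA : A.Nonempty) (x : Fin k → ZMod m) :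
    0 ≤ distTo A hA x := (le_inf'_iff _ _).2 fun _ _ => twist_nonneg _ _ _

/-- Moving one coordinate to a neighbour increases the squared distance by little. Only increases
are bounded: the nearest point of `A` before the move is still available afterwards. -/
theorem distTo_step (A : Finset (Fin k → ZMod m)) (hA : A.Nonempty) (x : Fin k → ZMod m)
    (s : ZMod m) (hs : ‖chr s - 1‖ ≤ 7 / m) :
    ∑ j, (max 0 (distTo A hA (x + Pi.single j s) - distTo A hA x)) ^ 2
      ≤ 8 * (7 / m) ^ 2 * distTo A hA x + k * (2 * (7 / m) ^ 4) := by
  obtain ⟨a, ha, hax⟩ := exists_mem_eq_inf' hA fun a => twist 1 a x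
  set h : ℝ := 7 / m with hh
  have hh0 : 0 ≤ h := by positivity
  have hj : ∀ j, (max 0 (distTo A hA (x + Pi.single j s) - distTo A hA x)) ^ 2
      ≤ 8 * h ^ 2 * ‖chr (a j) - 1 * chr (x j)‖ ^ 2 + 2 * h ^ 4 := by
    intro j
    set p := ‖chr (a j) - 1 * chr (x j)‖ with hp
    have hp0 : 0 ≤ p := norm_nonneg _
    have h1 : distTo A hA (x + Pi.single j s) ≤ twist 1 a (x + Pi.single j s) := inf'_le _ ha
    have h2 : distTo A hA x = twist 1 a x := hax
    have h3 : twist 1 a (x + Pi.single j s) - twist 1 a x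
        = ‖chr (a j) - 1 * chr (x j + s)‖ ^ 2 - p ^ 2 := by
      unfold twist
      rw [← sum_sub_distrib, sum_eq_single j]
      · simp [hp]
      · intro i _ hi; simp [hi]
      · simp
    have h4 : ‖chr (a j) - 1 * chr (x j + s)‖ ≤ p + h := by
      have e : chr (a j) - 1 * chr (x j + s)
          = (chr (a j) - 1 * chr (x j)) - chr (x j) * (chr s - 1) := by rw [chr_add]; ring
      have e2 : ‖chr (x j) * (chr s - 1)‖ ≤ h := by rw [norm_mul, norm_chr, one_mul]; exact hs
      rw [e]
      exact (norm_sub_le _ _).trans (add_le_add le_rfl e2)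
    have h5 : ‖chr (a j) - 1 * chr (x j + s)‖ ^ 2 ≤ (p + h) ^ 2 := by gcongr
    have h6 : max 0 (distTo A hA (x + Pi.single j s) - distTo A hA x) ≤ 2 * p * h + h ^ 2 :=
      max_le (by positivity) (by rw [h2]; nlinarith)
    calc _ ≤ (2 * p * h + h ^ 2) ^ 2 := by gcongr
      _ ≤ _ := by nlinarith [sq_nonneg (2 * p * h - h ^ 2)]
  calc _ ≤ ∑ j, (8 * h ^ 2 * ‖chr (a j) - 1 * chr (x j)‖ ^ 2 + 2 * h ^ 4) :=
        sum_le_sum fun j _ => hj j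
    _ = _ := by
        rw [sum_add_distrib, ← mul_sum]
        simp only [sum_const, card_univ, Fintype.card_fin, nsmul_eq_mul]
        congr 2
        exact hax.symm

/-- The Dirichlet energy of the squared distance. A decrease in one direction is an increase in
the opposite one, so the one-sided estimate suffices. -/
theorem distTo_energy (A : Finset (Fin k → ZMod m)) (hA : A.Nonempty) :
    ∑ x, ∑ j, (distTo A hA (x + Pi.single j 1) - distTo A hA x) ^ 2
      ≤ 2 * (8 * (7 / m) ^ 2 * ∑ x, distTo A hA x + m ^ k * (k * (2 * (7 / m) ^ 4))) := by
  have hsq : ∀ t : ℝ, t ^ 2 = max 0 t ^ 2 + max 0 (-t) ^ 2 := by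
    intro t
    rcases le_total 0 t with h | h
    · rw [max_eq_right h, max_eq_left (by linarith)]; ring
    · rw [max_eq_left h, max_eq_right (by linarith)]; ring
  have hback : ∀ j : Fin k, ∑ x, max 0 (-(distTo A hA (x + Pi.single j 1) - distTo A hA x)) ^ 2
      = ∑ x, max 0 (distTo A hA (x + Pi.single j (-1)) - distTo A hA x) ^ 2 := by
    intro j
    rw [← sum_shift _ (Pi.single j (-1))]
    refine sum_congr rfl fun x _ => ?_
    have : x + Pi.single j (-1) + Pi.single j 1 = x := by
      rw [add_assoc, ← Pi.single_add]; simp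
    rw [this, neg_sub]
  have h1 := fun x => distTo_step A hA x 1 norm_chr_one_sub
  have h2 := fun x => distTo_step A hA x (-1) (by
    have : chr (-1 : ZMod m) - 1 = (starRingEnd ℂ) (chr (1 : ZMod m) - 1) := by
      rw [chr_neg, map_sub, map_one]
    rw [this, Complex.norm_conj]; exact norm_chr_one_sub)
  have h3 := sum_le_sum fun x (_ : x ∈ (univ : Finset (Fin k → ZMod m))) => add_le_add (h1 x) (h2 x)
  have hcard : (univ : Finset (Fin k → ZMod m)).card = m ^ k := by simp [ZMod.card]
  simp only [sum_add_distrib, ← mul_sum, sum_const, hcard, nsmul_eq_mul] at h3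
  have h4 : ∑ x, ∑ j, (distTo A hA (x + Pi.single j 1) - distTo A hA x) ^ 2
      = ∑ x, ∑ j, max 0 (distTo A hA (x + Pi.single j 1) - distTo A hA x) ^ 2
        + ∑ x, ∑ j, max 0 (distTo A hA (x + Pi.single j (-1)) - distTo A hA x) ^ 2 := by
    have e1 := sum_congr rfl fun j (_ : j ∈ (univ : Finset (Fin k))) => hback j
    rw [sum_comm, sum_comm (f := fun (j : Fin k) x =>
      max 0 (distTo A hA (x + (Pi.single j (-1) : Fin k → ZMod m)) - distTo A hA x) ^ 2)] at e1
    rw [← e1, ← sum_add_distrib]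
    refine sum_congr rfl fun x _ => ?_
    rw [← sum_add_distrib]
    exact sum_congr rfl fun j _ => hsq _
  rw [h4]
  push_cast at h3
  linarith

/-- Concentration of measure: a point is on average at bounded distance from a dense set. -/
theorem concentration (hk : 1 ≤ k) (hm : m = 20 * k) (A : Finset (Fin k → ZMod m)) (hA : A.Nonempty)
    {ε : ℝ} (hε : 0 < ε) (hε1 : ε ≤ 1) (hAc : ε * (m:ℝ) ^ k ≤ A.card) :
    ∑ x, distTo A hA x ≤ 800 / ε * (m:ℝ) ^ k := by
  set S := ∑ x, distTo A hA x with hS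
  set N : ℝ := (m:ℝ) ^ k with hN
  have hm0 : (0:ℝ) < m := by exact_mod_cast NeZero.pos m
  have hN0 : 0 < N := by positivity
  set Q := ∑ x, distTo A hA x ^ 2 with hQ
  have hP := poincare_torus k (distTo A hA)
  rw [← hQ, ← hS, ← hN] at hP
  have hE := distTo_energy A hA
  rw [← hS, ← hN] at hE
  set E := ∑ x, ∑ j, (distTo A hA (x + Pi.single j 1) - distTo A hA x) ^ 2 with hEd
  have hcard : ((univ : Finset (Fin k → ZMod m)).card : ℝ) = N := by simp [ZMod.card, hN]
  have hSQ : S ^ 2 ≤ N * Q := by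
    rw [← hcard]; exact sq_sum_le_card_mul_sum_sq
  -- The function vanishes on `A`, which improves Cauchy–Schwarz by a factor `1 - ε`.
  have hSQ' : S ^ 2 ≤ (1 - ε) * N * Q := by
    have hz : ∀ x ∈ A, distTo A hA x = 0 := fun x hx =>
      le_antisymm ((inf'_le _ hx).trans (by rw [twist_self]; simp)) (distTo_nonneg A hA x)
    have e1 : S = ∑ x ∈ univ \ A, distTo A hA x := by
      rw [hS, ← sum_sdiff (subset_univ A), sum_eq_zero hz, add_zero]
    have e2 : ∑ x ∈ univ \ A, distTo A hA x ^ 2 ≤ Q :=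
      sum_le_sum_of_subset_of_nonneg (subset_univ _) fun _ _ _ => sq_nonneg _
    have e3 : ((univ \ A).card : ℝ) ≤ (1 - ε) * N := by
      rw [card_sdiff_of_subset (subset_univ A), Nat.cast_sub (card_le_card (subset_univ A)), hcard]; linarith
    rw [e1]
    refine sq_sum_le_card_mul_sum_sq.trans ?_
    have : 0 ≤ ∑ x ∈ univ \ A, distTo A hA x ^ 2 := sum_nonneg fun _ _ => sq_nonneg _
    have : (0:ℝ) ≤ (univ \ A).card := Nat.cast_nonneg _
    gcongr
  have hS0 : 0 ≤ S := sum_nonneg fun x _ => distTo_nonneg A hA x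
  have hE2 : m ^ 2 * E ≤ 784 * S + 28 * N := by
    have hk0 : (1:ℝ) ≤ k := by exact_mod_cast hk
    have e1 : (m:ℝ) ^ 2 * (7 / m) ^ 2 = 49 := by field_simp; norm_num
    have e2 : (m:ℝ) ^ 2 * (k * (7 / m) ^ 4) ≤ 7 := by
      have : (m:ℝ) ^ 2 * (k * (7 / m) ^ 4) = 2401 / (400 * k) := by
        rw [hm]; push_cast; field_simp; norm_num
      rw [this, div_le_iff₀ (by positivity)]
      linarith
    calc (m:ℝ) ^ 2 * E ≤ m ^ 2 * (2 * (8 * (7 / m) ^ 2 * S + N * (k * (2 * (7 / m) ^ 4)))) := by gcongr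
      _ = 16 * (m ^ 2 * (7 / m) ^ 2) * S + 4 * N * (m ^ 2 * (k * (7 / m) ^ 4)) := by ring
      _ ≤ 16 * 49 * S + 4 * N * 7 := by rw [e1]; gcongr
      _ = _ := by ring
  have h1 : ε * Q ≤ m ^ 2 * E := by
    have : N * (ε * Q) ≤ N * (m ^ 2 * E) := by nlinarith
    exact le_of_mul_le_mul_left this hN0
  have h2 : ε * S ^ 2 ≤ N * (784 * S + 28 * N) := by
    calc ε * S ^ 2 ≤ ε * (N * Q) := by gcongr
      _ = N * (ε * Q) := by ring
      _ ≤ _ := by gcongr; exact h1.trans hE2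
  by_contra! hcon
  have h3 : 800 * N < ε * S := by
    rw [div_mul_eq_mul_div, div_lt_iff₀ hε] at hcon; linarith
  have h4 : 800 * N < S := by nlinarith
  nlinarith

/-- A dense set contains points close to all five rotations of a suitable point. -/
theorem exists_five (hk : 1 ≤ k) (hm : m = 20 * k) (A : Finset (Fin k → ZMod m))
    {ε : ℝ} (hε : 0 < ε) (hε1 : ε ≤ 1) (hAc : ε * (m:ℝ) ^ k ≤ A.card) (τ : ZMod m) :
    ∃ x : Fin k → ZMod m, ∀ i < 5, ∃ a ∈ A, twist (chr τ ^ i) a x ≤ 8000 / ε := by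
  have hm0 : (0:ℝ) < m := by exact_mod_cast NeZero.pos m
  have hA : A.Nonempty := by
    rw [← card_pos]
    have : (0:ℝ) < A.card := lt_of_lt_of_le (by positivity) hAc
    exact_mod_cast this
  set R : ℝ := 8000 / ε with hR
  have hR0 : 0 < R := by positivity
  set B := univ.filter fun x => R < distTo A hA x with hB
  have hBc : 10 * (B.card : ℝ) ≤ (m:ℝ) ^ k := by
    have h1 : R * B.card ≤ ∑ x, distTo A hA x := by
      calc R * B.card = ∑ x ∈ B, R := by rw [sum_const, nsmul_eq_mul]; ring
        _ ≤ ∑ x ∈ B, distTo A hA x := sum_le_sum fun x hx => (mem_filter.1 hx).2.le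
        _ ≤ _ := sum_le_sum_of_subset_of_nonneg (subset_univ _) fun x _ _ => distTo_nonneg A hA x
    have h2 := h1.trans (concentration hk hm A hA hε hε1 hAc)
    have h3 : 800 / ε * (10 * (B.card : ℝ)) ≤ 800 / ε * (m:ℝ) ^ k := by
      calc 800 / ε * (10 * (B.card : ℝ)) = R * B.card := by rw [hR]; ring
        _ ≤ _ := h2
    exact le_of_mul_le_mul_left h3 (by positivity)
  by_contra! hcon
  have hcov : (univ : Finset (Fin k → ZMod m)) ⊆ (range 5).biUnion fun i =>
      B.image fun x => x - fun _ => (i : ZMod m) * τ := by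
    intro x _
    obtain ⟨i, hi, hx⟩ := hcon x
    rw [mem_biUnion]
    refine ⟨i, mem_range.2 hi, mem_image.2 ⟨x + fun _ => (i : ZMod m) * τ, ?_, by simp⟩⟩
    rw [hB, mem_filter]
    refine ⟨mem_univ _, (lt_inf'_iff _).2 fun a ha => ?_⟩
    refine (hx a ha).trans_le (le_of_eq ?_)
    unfold twist
    refine sum_congr rfl fun j _ => ?_
    have : ∀ i : ℕ, chr ((i : ZMod m) * τ) = chr τ ^ i := fun i => by
      rw [← nsmul_eq_mul]; exact AddChar.map_nsmul_eq_pow _ i τ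
    rw [Pi.add_apply, chr_add, this, one_mul, mul_comm]
  have h1 := (card_le_card hcov).trans (card_biUnion_le.trans (sum_le_sum fun i _ => card_image_le))
  rw [sum_const, card_range, smul_eq_mul, card_univ] at h1
  have h2 : (m:ℝ) ^ k ≤ 5 * B.card := by
    have : Fintype.card (Fin k → ZMod m) = m ^ k := by simp [ZMod.card]
    rw [this] at h1
    exact_mod_cast h1
  have : 0 < (m:ℝ) ^ k := by positivity
  linarith

end Torus

/-! ### Fifth roots of unity -/

section Roots

/-- The primitive fifth root of unity `exp(2πi/5)`. -/
noncomputable def zeta5 : ℂ := Complex.exp (2 * Real.pi * Complex.I / 5)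

theorem zeta5_prim : IsPrimitiveRoot zeta5 5 := by
  have := Complex.isPrimitiveRoot_exp 5 (by norm_num)
  simpa [zeta5] using this

theorem zeta5_pow : zeta5 ^ 5 = 1 := zeta5_prim.pow_eq_one

theorem exists_pow_of_root {w : ℂ} (hw : w ^ 5 = 1) : ∃ t < 5, w = zeta5 ^ t := by
  obtain ⟨t, ht, h⟩ := zeta5_prim.eq_pow_of_pow_eq_one hw
  exact ⟨t, ht, h.symm⟩

theorem norm_root {w : ℂ} (hw : w ^ 5 = 1) : ‖w‖ = 1 :=
  Complex.norm_eq_one_of_pow_eq_one hw (by norm_num)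

theorem conj_root {w : ℂ} (hw : w ^ 5 = 1) : (starRingEnd ℂ) w = w ^ 4 := by
  have h : w * (starRingEnd ℂ) w = 1 := by
    rw [Complex.mul_conj, Complex.normSq_eq_norm_sq, norm_root hw]; simp
  linear_combination (-(starRingEnd ℂ) w) * hw + w ^ 4 * h

theorem conj_root_pow {w : ℂ} (hw : w ^ 5 = 1) : ((starRingEnd ℂ) w) ^ 5 = 1 := by
  rw [← map_pow, hw, map_one]

theorem root_sum {w : ℂ} (hw : w ^ 5 = 1) (h1 : w ≠ 1) : 1 + w + w ^ 2 + w ^ 3 + w ^ 4 = 0 := by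
  have : (w - 1) * (1 + w + w ^ 2 + w ^ 3 + w ^ 4) = 0 := by linear_combination hw
  exact (mul_eq_zero.1 this).resolve_left (sub_ne_zero.2 h1)

theorem root_add_pow_four {w : ℂ} (hw : w ^ 5 = 1) : w + w ^ 4 = ((2 * w.re : ℝ) : ℂ) := by
  rw [← conj_root hw, Complex.add_conj]

theorem root_re_eq {w : ℂ} (hw : w ^ 5 = 1) (h1 : w ≠ 1) : (2 * w.re) ^ 2 + 2 * w.re = 1 := by
  have h := root_add_pow_four hw
  have hs := root_sum hw h1
  have : (((2 * w.re) ^ 2 + 2 * w.re : ℝ) : ℂ) = (1 : ℝ) := by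
    rw [Complex.ofReal_add, Complex.ofReal_pow, ← h]
    push_cast
    linear_combination hs + (2 + w ^ 3) * hw
  exact_mod_cast this

/-- By `root_re_eq`, `2 Re w` is a root of `t² + t = 1`, hence is less than `1`, while
`‖1 - w‖² = 2 - 2 Re w`. -/
theorem one_le_norm_one_sub {w : ℂ} (hw : w ^ 5 = 1) (h1 : w ≠ 1) : 1 ≤ ‖1 - w‖ ^ 2 := by
  have h := root_re_eq hw h1
  have hn := norm_root hw
  have e : ‖1 - w‖ ^ 2 = 2 - 2 * w.re := by
    have h2 : w.re * w.re + w.im * w.im = 1 := by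
      rw [← Complex.normSq_apply, Complex.normSq_eq_norm_sq, hn]; norm_num
    rw [← Complex.normSq_eq_norm_sq, Complex.normSq_apply]
    simp only [Complex.sub_re, Complex.sub_im, Complex.one_re, Complex.one_im]
    linarith
  rw [e]
  nlinarith

/-- `2 cos(2π/5)`, the inverse golden ratio. -/
noncomputable def gold : ℝ := 2 * zeta5.re

theorem gold_pos : 0 < gold := by
  have : zeta5.re = Real.cos (2 * Real.pi / 5) := by
    have e : (2 * Real.pi * Complex.I / 5 : ℂ) = ((2 * Real.pi / 5 : ℝ) : ℂ) * Complex.I := by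
      push_cast; ring
    rw [zeta5, e, Complex.exp_ofReal_mul_I_re]
  have h := Real.cos_pos_of_mem_Ioo (x := 2 * Real.pi / 5)
    ⟨by linarith [Real.pi_pos], by linarith [Real.pi_pos]⟩
  rw [gold, this]; linarith

theorem zeta5_ne_one : zeta5 ≠ 1 := zeta5_prim.ne_one (by norm_num)

/-- The imaginary part of `z` rotated by `2πj/5`. -/
noncomputable def rotIm (j : ℕ) (z : ℂ) : ℝ := (zeta5 ^ j * z).im

theorem rotIm_add_five (j : ℕ) (z : ℂ) : rotIm (j + 5) z = rotIm j z := by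
  rw [rotIm, pow_add, zeta5_pow, mul_one, rotIm]

theorem rotIm_add (i j : ℕ) (z : ℂ) : rotIm (i + j) z = rotIm i (zeta5 ^ j * z) := by
  rw [rotIm, rotIm, pow_add, mul_assoc]

theorem rotIm_sub (j : ℕ) (z w : ℂ) : rotIm j (z - w) = rotIm j z - rotIm j w := by
  simp only [rotIm, mul_sub, Complex.sub_im]

/-- The three-term recurrence satisfied by the rotated imaginary parts. -/
theorem rotIm_rec (j : ℕ) (z : ℂ) : rotIm j z + rotIm (j + 2) z = gold * rotIm (j + 1) z := by
  have h := root_add_pow_four zeta5_pow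
  have h2 : zeta5 ^ j * z + zeta5 ^ (j + 2) * z = (gold : ℂ) * (zeta5 ^ (j + 1) * z) := by
    rw [gold, ← h]
    linear_combination (-zeta5 ^ j * z) * zeta5_pow
  have h3 := congrArg Complex.im h2
  rw [Complex.add_im, Complex.im_ofReal_mul] at h3
  exact h3

theorem rotIm_sum (j : ℕ) (z : ℂ) :
    rotIm j z + rotIm (j + 1) z + rotIm (j + 2) z + rotIm (j + 3) z + rotIm (j + 4) z = 0 := by
  have h : zeta5 ^ j * z + zeta5 ^ (j + 1) * z + zeta5 ^ (j + 2) * z + zeta5 ^ (j + 3) * z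
      + zeta5 ^ (j + 4) * z = 0 := by
    linear_combination (zeta5 ^ j * z) * root_sum zeta5_pow zeta5_ne_one
  simpa only [rotIm, Complex.add_im, Complex.zero_im] using congrArg Complex.im h

/-- Conjugation exchanges the two half-planes cutting out the sector. -/
theorem rotIm_conj (z : ℂ) : rotIm 2 ((starRingEnd ℂ) z) = -rotIm 3 z := by
  have h : zeta5 ^ 2 * (starRingEnd ℂ) z = (starRingEnd ℂ) (zeta5 ^ 3 * z) := by
    rw [map_mul, map_pow, conj_root zeta5_pow]
    linear_combination (-(starRingEnd ℂ) z * zeta5 ^ 2 * (zeta5 ^ 5 + 1)) * zeta5_pow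
  rw [rotIm, h, Complex.conj_im, rotIm]

theorem rotIm_three_not_pos (j : ℕ) (z : ℂ) (h0 : 0 < rotIm j z) (h1 : 0 < rotIm (j + 1) z)
    (h3 : 0 < rotIm (j + 3) z) : False := by
  have h := rotIm_sum j z
  have h' := rotIm_rec (j + 2) z
  have := mul_pos gold_pos h3
  simp only [add_assoc, Nat.reduceAdd] at h'
  linarith

/-- An open half-plane bounded by a line through `0` contains at most three of the five rotations
of a point. -/
theorem rotIm_four_not_pos (F : Finset ℕ) (hF : F ⊆ range 5) (hc : 4 ≤ F.card) (z : ℂ)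
    (h : ∀ t ∈ F, 0 < rotIm t z) : False := by
  have key : ∀ F ∈ (range 5).powerset, 4 ≤ F.card →
      ∃ j ∈ range 5, j ∈ F ∧ (j + 1) % 5 ∈ F ∧ (j + 3) % 5 ∈ F := by decide
  obtain ⟨j, hj, h0, h1, h3⟩ := key F (mem_powerset.2 hF) hc
  have hmod : ∀ i, rotIm (i % 5) z = rotIm i z := fun i => by
    have : ∀ q r, rotIm (r + 5 * q) z = rotIm r z := fun q r => by
      induction q with
      | zero => rfl
      | succ q ih => rw [Nat.mul_succ, ← add_assoc, rotIm_add_five, ih]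
    conv_rhs => rw [← Nat.mod_add_div i 5]
    rw [this]
  exact rotIm_three_not_pos j z (h j h0) (by rw [← hmod]; exact h _ h1)
    (by rw [← hmod]; exact h _ h3)

/-- Points of the plane whose argument lies, up to the margin `μ`, in a fixed sector of
angle `2π/5`. -/
def Sector (μ : ℝ) (z : ℂ) : Prop := μ < rotIm 2 z ∧ rotIm 3 z < -μ

theorem Sector.conj {μ : ℝ} {z : ℂ} (h : Sector μ z) : Sector μ ((starRingEnd ℂ) z) := by
  have h2 := rotIm_conj z
  have h3 := rotIm_conj ((starRingEnd ℂ) z)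
  rw [Complex.conj_conj] at h3
  exact ⟨by linarith [h.2], by linarith [h.1]⟩

theorem Sector.one_pos {μ : ℝ} (hμ : 0 ≤ μ) {z : ℂ} (h : Sector μ z) : 0 < rotIm 1 z := by
  have := rotIm_rec 1 z
  have := mul_pos gold_pos (hμ.trans_lt h.1)
  norm_num at *
  linarith [h.2]

theorem Sector.four_neg {μ : ℝ} (hμ : 0 ≤ μ) {z : ℂ} (h : Sector μ z) : rotIm 4 z < 0 := by
  have := rotIm_rec 2 z
  have := mul_pos gold_pos (show 0 < -rotIm 3 z by linarith [h.2])
  norm_num at *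
  linarith [h.1]

/-- Up to the margin, the five rotations of the sector cover the plane. -/
theorem exists_sector {μ : ℝ} (hμ : 0 ≤ μ) (z : ℂ) (h : ∀ j < 5, μ < |rotIm j z|) :
    ∃ j < 5, Sector μ (zeta5 ^ j * z) := by
  have h0 := h 0 (by norm_num)
  have h1 := h 1 (by norm_num)
  have h2 := h 2 (by norm_num)
  have h3 := h 3 (by norm_num)
  have h4 := h 4 (by norm_num)
  have hs := rotIm_sum 0 z
  have e : ∀ j, Sector μ (zeta5 ^ j * z) ↔ μ < rotIm (2 + j) z ∧ rotIm (3 + j) z < -μ := fun j => by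
    rw [Sector, rotIm_add, rotIm_add]
  have f0 := rotIm_add_five 0 z
  have f1 := rotIm_add_five 1 z
  have f2 := rotIm_add_five 2 z
  norm_num at f0 f1 f2 hs
  by_contra! hcon
  have c0 := hcon 0 (by norm_num)
  have c1 := hcon 1 (by norm_num)
  have c2 := hcon 2 (by norm_num)
  have c3 := hcon 3 (by norm_num)
  have c4 := hcon 4 (by norm_num)
  rw [e] at c0 c1 c2 c3 c4
  norm_num at c0 c1 c2 c3 c4
  rw [f0] at c2 c3
  rw [f1] at c3 c4
  rw [f2] at c4
  rw [lt_abs] at h0 h1 h2 h3 h4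
  grind

end Roots

/-! ### The two adjacency relations on the torus -/

section Relations
variable {m k : ℕ} [NeZero m]

/-- The Hermitian inner product of two points of the torus in `ℂ^k`. -/
noncomputable def corr (x y : Fin k → ZMod m) : ℂ := ∑ j, chr (x j) * (starRingEnd ℂ) (chr (y j))

theorem conj_corr (x y : Fin k → ZMod m) : (starRingEnd ℂ) (corr x y) = corr y x := by
  simp only [corr, map_sum, map_mul, Complex.conj_conj]
  exact sum_congr rfl fun j _ => mul_comm _ _

theorem corr_eq (x y : Fin k → ZMod m) : corr x y = ∑ j, chr ((x - y) j) :=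
  sum_congr rfl fun j _ => by rw [Pi.sub_apply, sub_eq_add_neg, chr_add, chr_neg]

/-- Bilinearity of `corr` in twisted differences, with Cauchy–Schwarz. -/
theorem corr_twist (w b : ℂ) (x x' y y' : Fin k → ZMod m) :
    ‖(corr x y - (starRingEnd ℂ) b * corr x y')
        - w * (corr x' y - (starRingEnd ℂ) b * corr x' y')‖
      ≤ (twist w x x' + twist b y y') / 2 := by
  have e : (corr x y - (starRingEnd ℂ) b * corr x y')
        - w * (corr x' y - (starRingEnd ℂ) b * corr x' y')
      = ∑ j, (chr (x j) - w * chr (x' j)) * (starRingEnd ℂ) (chr (y j) - b * chr (y' j)) := by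
    simp only [corr, mul_sum, ← sum_sub_distrib]
    refine sum_congr rfl fun j _ => ?_
    rw [map_sub, map_mul]; ring
  rw [e, twist, twist, ← sum_add_distrib, sum_div]
  refine (norm_sum_le _ _).trans (sum_le_sum fun j _ => ?_)
  rw [norm_mul, Complex.norm_conj]
  nlinarith [sq_nonneg (‖chr (x j) - w * chr (x' j)‖ - ‖chr (y j) - b * chr (y' j)‖)]

/-- `x` is close to a nontrivial rotation of `y` by a fifth root of unity. -/
def Rot (r : ℝ) (x y : Fin k → ZMod m) : Prop := ∃ w : ℂ, w ^ 5 = 1 ∧ w ≠ 1 ∧ twist w x y ≤ r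

theorem Rot.symm {r : ℝ} {x y : Fin k → ZMod m} (h : Rot r x y) : Rot r y x := by
  obtain ⟨w, h5, h1, h⟩ := h
  refine ⟨(starRingEnd ℂ) w, conj_root_pow h5, fun h => h1 ?_, ?_⟩
  · rw [← Complex.conj_conj w, h, map_one]
  · rwa [twist_swap (norm_root h5)]

theorem Rot.irrefl {r : ℝ} (hr : r < k) (x : Fin k → ZMod m) : ¬ Rot r x x := by
  rintro ⟨w, h5, h1, h⟩
  rw [twist_self] at h
  have := one_le_norm_one_sub h5 h1
  have : (0:ℝ) ≤ k := Nat.cast_nonneg k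
  nlinarith

/-- Relative to a base point, the members of a clique correspond to distinct fifth roots of
unity. -/
theorem Rot.roots {r : ℝ} (hr0 : 0 ≤ r) (hr : 10 * r < k) {X : Finset (Fin k → ZMod m)}
    (hX : ∀ x ∈ X, ∀ y ∈ X, x ≠ y → Rot r x y) {x₀ : Fin k → ZMod m} (h0 : x₀ ∈ X) :
    ∃ t : (Fin k → ZMod m) → ℕ, (∀ x ∈ X, t x ∈ range 5) ∧ Set.InjOn t X ∧
      ∀ x ∈ X, twist (zeta5 ^ t x) x x₀ ≤ r := by
  have hex : ∀ x, ∃ t, x ∈ X → t < 5 ∧ twist (zeta5 ^ t) x x₀ ≤ r := by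
    intro x
    by_cases hx : x ∈ X
    · by_cases e : x = x₀
      · exact ⟨0, fun _ => ⟨by norm_num, by rw [e, twist_self]; simpa using hr0⟩⟩
      · obtain ⟨w, h5, -, h⟩ := hX x hx x₀ h0 e
        obtain ⟨t, ht, rfl⟩ := exists_pow_of_root h5
        exact ⟨t, fun _ => ⟨ht, h⟩⟩
    · exact ⟨0, fun h => absurd h hx⟩
  choose t ht using hex
  refine ⟨t, fun x hx => mem_range.2 (ht x hx).1, fun x hx y hy hxy => ?_, fun x hx => (ht x hx).2⟩
  by_contra hne
  obtain ⟨w, h5, h1, h⟩ := hX x hx y hy hne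
  have hp : ∀ i, (zeta5 ^ i) ^ 5 = 1 := fun i => by rw [← pow_mul, mul_comm, pow_mul, zeta5_pow, one_pow]
  have hz := norm_root (hp (t x))
  have hzz : zeta5 ^ t x * (starRingEnd ℂ) (zeta5 ^ t x) = 1 := by
    rw [Complex.mul_conj, Complex.normSq_eq_norm_sq, hz]; simp
  have hx1 := (ht x hx).2
  have hy1 := (ht y hy).2
  rw [← hxy, ← twist_swap hz] at hy1
  have h2 := twist_triangle (w := zeta5 ^ t x) (v := (starRingEnd ℂ) (zeta5 ^ t x)) hz x x₀ y
  rw [hzz] at h2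
  have h3 := twist_triangle (w := w) (v := 1) (norm_root h5) x y x
  have h4 := twist_swap (w := 1) norm_one x y
  rw [map_one] at h4
  rw [mul_one, twist_self, h4] at h3
  have := one_le_norm_one_sub h5 h1
  have : (0:ℝ) ≤ k := Nat.cast_nonneg k
  nlinarith

theorem Rot.card_le {r : ℝ} (hr0 : 0 ≤ r) (hr : 10 * r < k) {X : Finset (Fin k → ZMod m)}
    (hX : ∀ x ∈ X, ∀ y ∈ X, x ≠ y → Rot r x y) : X.card ≤ 5 := by
  rcases X.eq_empty_or_nonempty with rfl | ⟨x₀, h0⟩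
  · simp
  · obtain ⟨t, h1, h2, -⟩ := Rot.roots hr0 hr hX h0
    simpa using card_le_card_of_injOn t h1 h2

/-- No four mutually rotated points are all in sector position to two mutually rotated points. -/
theorem no_four_two {r μ : ℝ} (hr0 : 0 ≤ r) (hr : 10 * r < k) (hμ : r < μ)
    {X : Finset (Fin k → ZMod m)} (hX : ∀ x ∈ X, ∀ y ∈ X, x ≠ y → Rot r x y) (hc : 4 ≤ X.card)
    {y y' : Fin k → ZMod m} (hy : Rot r y y') (hxy : ∀ x ∈ X, Sector μ (corr x y))
    (hxy' : ∀ x ∈ X, Sector μ (corr x y')) : False := by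
  have hμ0 : 0 ≤ μ := hr0.trans hμ.le
  obtain ⟨x₀, h0⟩ : X.Nonempty := card_pos.1 (by omega)
  obtain ⟨t, h1, h2, h3⟩ := Rot.roots hr0 hr hX h0
  obtain ⟨b, hb5, hb1, hb⟩ := hy
  obtain ⟨s, hs, hbs⟩ := exists_pow_of_root (conj_root_pow hb5)
  have hs0 : s ≠ 0 := by
    rintro rfl
    rw [pow_zero] at hbs
    exact hb1 (by rw [← Complex.conj_conj b, hbs, map_one])
  set d : (Fin k → ZMod m) → ℂ := fun x => corr x y - (starRingEnd ℂ) b * corr x y' with hd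
  have hdw : ∀ x ∈ X, ‖d x - zeta5 ^ t x * d x₀‖ ≤ r := fun x hx =>
    (corr_twist (zeta5 ^ t x) b x x₀ y y').trans (by linarith [h3 x hx])
  -- A real-linear functional that is large on all the `d x`.
  obtain ⟨κ, hκ, hL⟩ : ∃ κ : ℂ, ‖κ‖ = 1 ∧ ∀ x ∈ X, μ < (κ * d x).im := by
    have hz : ‖zeta5‖ = 1 := norm_root zeta5_pow
    have key : ∀ j x, rotIm j (d x) = rotIm j (corr x y) - rotIm (j + s) (corr x y') := by
      intro j x
      rw [rotIm_add, ← hbs, ← rotIm_sub]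
    by_cases h : s ≤ 2
    · refine ⟨zeta5 ^ 2, by simp [hz], fun x hx => ?_⟩
      change μ < rotIm 2 (d x)
      rw [key]
      have a := hxy x hx
      have a' := hxy' x hx
      have := a'.four_neg hμ0
      obtain rfl | rfl : s = 1 ∨ s = 2 := by omega
      · linarith [a.1, a'.2]
      · linarith [a.1]
    · refine ⟨-zeta5 ^ 3, by simp [hz], fun x hx => ?_⟩
      have e : (-zeta5 ^ 3 * d x).im = -rotIm 3 (d x) := by rw [neg_mul, Complex.neg_im, rotIm]
      rw [e, key]
      have a := hxy x hx
      have a' := hxy' x hx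
      have := a'.one_pos hμ0
      obtain rfl | rfl : s = 3 ∨ s = 4 := by omega
      · have := rotIm_add_five 1 (corr x y')
        norm_num at *
        linarith [a.2]
      · have := rotIm_add_five 2 (corr x y')
        norm_num at *
        linarith [a.2, a'.1]
  refine rotIm_four_not_pos (X.image t) (fun i hi => ?_) ?_ (κ * d x₀) fun i hi => ?_
  · obtain ⟨x, hx, rfl⟩ := mem_image.1 hi
    exact h1 x hx
  · rwa [card_image_of_injOn h2]
  · obtain ⟨x, hx, rfl⟩ := mem_image.1 hi
    have e1 := hL x hx
    have e2 : |(κ * (d x - zeta5 ^ t x * d x₀)).im| ≤ r :=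
      (Complex.abs_im_le_norm _).trans (by rw [norm_mul, hκ, one_mul]; exact hdw x hx)
    have e3 : κ * d x = κ * (d x - zeta5 ^ t x * d x₀) + zeta5 ^ t x * (κ * d x₀) := by ring
    rw [e3, Complex.add_im] at e1
    rw [rotIm]
    linarith [le_abs_self (κ * (d x - zeta5 ^ t x * d x₀)).im]

/-- Two cliques in mutual sector position have at most six points altogether. -/
theorem card_add_card_le {r μ : ℝ} (hr0 : 0 ≤ r) (hr : 10 * r < k) (hμ : r < μ)
    {X Y : Finset (Fin k → ZMod m)} (hX : ∀ x ∈ X, ∀ y ∈ X, x ≠ y → Rot r x y)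
    (hY : ∀ x ∈ Y, ∀ y ∈ Y, x ≠ y → Rot r x y)
    (hXY : ∀ x ∈ X, ∀ y ∈ Y, Sector μ (corr x y)) : X.card + Y.card ≤ 6 := by
  have hX5 := Rot.card_le hr0 hr hX
  have hY5 := Rot.card_le hr0 hr hY
  have a1 : ¬ (4 ≤ X.card ∧ 2 ≤ Y.card) := by
    rintro ⟨h4, h2⟩
    obtain ⟨y, hy, y', hy', hne⟩ := one_lt_card.1 (show 1 < Y.card by omega)
    exact no_four_two hr0 hr hμ hX h4 (hY y hy y' hy' hne) (fun x hx => hXY x hx y hy)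
      fun x hx => hXY x hx y' hy'
  have a2 : ¬ (4 ≤ Y.card ∧ 2 ≤ X.card) := by
    rintro ⟨h4, h2⟩
    obtain ⟨y, hy, y', hy', hne⟩ := one_lt_card.1 (show 1 < X.card by omega)
    exact no_four_two hr0 hr hμ hY h4 (hX y hy y' hy' hne)
      (fun x hx => by rw [← conj_corr]; exact (hXY y hy x hx).conj)
      fun x hx => by rw [← conj_corr]; exact (hXY y' hy' x hx).conj
  omega

theorem chr_tau (hm : m = 20 * k) (hk : 1 ≤ k) : chr ((4 * k : ℕ) : ZMod m) = zeta5 := by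
  rw [chr_natCast, zeta5, hm]
  have : (k:ℂ) ≠ 0 := by exact_mod_cast (by omega : k ≠ 0)
  congr 1
  push_cast; field_simp; norm_num

theorem chr_half (hm : m = 20 * k) (hk : 1 ≤ k) : chr ((10 * k : ℕ) : ZMod m) = -1 := by
  have : (k:ℂ) ≠ 0 := by exact_mod_cast (by omega : k ≠ 0)
  rw [chr_natCast, hm, ← Complex.exp_pi_mul_I]
  congr 1
  push_cast; field_simp; norm_num

theorem chr_quarter (hm : m = 20 * k) (hk : 1 ≤ k) : chr ((5 * k : ℕ) : ZMod m) = Complex.I := by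
  have : (k:ℂ) ≠ 0 := by exact_mod_cast (by omega : k ≠ 0)
  rw [chr_natCast, hm]
  refine Eq.trans ?_ Complex.exp_pi_div_two_mul_I
  congr 1
  push_cast; field_simp; norm_num

/-- Every dense set contains five mutually rotated points. -/
theorem exists_rot_five (hk : 1 ≤ k) (hm : m = 20 * k) (A : Finset (Fin k → ZMod m))
    {ε : ℝ} (hε : 0 < ε) (hε1 : ε ≤ 1) (hAc : ε * (m:ℝ) ^ k ≤ A.card)
    (hR : 4 * (8000 / ε) < k) :
    ∃ X ⊆ A, X.card = 5 ∧ ∀ x ∈ X, ∀ y ∈ X, x ≠ y → Rot (4 * (8000 / ε)) x y := by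
  obtain ⟨x, hx⟩ := exists_five hk hm A hε hε1 hAc ((4 * k : ℕ) : ZMod m)
  rw [chr_tau hm hk] at hx
  choose! a haA ha using hx
  have hp : ∀ i, (zeta5 ^ i) ^ 5 = 1 := fun i => by rw [← pow_mul, mul_comm, pow_mul, zeta5_pow, one_pow]
  have hrot : ∀ i < 5, ∀ j < 5, i ≠ j → Rot (4 * (8000 / ε)) (a i) (a j) := by
    intro i hi j hj hij
    have hz := norm_root (hp j)
    have hzz : zeta5 ^ j * (starRingEnd ℂ) (zeta5 ^ j) = 1 := by
      rw [Complex.mul_conj, Complex.normSq_eq_norm_sq, hz]; simp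
    refine ⟨zeta5 ^ i * (starRingEnd ℂ) (zeta5 ^ j), ?_, fun h => hij ?_, ?_⟩
    · rw [mul_pow, hp, conj_root_pow (hp j), one_mul]
    · refine zeta5_prim.pow_inj hi hj ?_
      linear_combination zeta5 ^ j * h - zeta5 ^ i * hzz
    · have h1 := ha j hj
      rw [← twist_swap hz] at h1
      have := twist_triangle (w := zeta5 ^ i) (v := (starRingEnd ℂ) (zeta5 ^ j)) (norm_root (hp i))
        (a i) x (a j)
      linarith [ha i hi]
  have hinj : Set.InjOn a (range 5 : Finset ℕ) := by
    intro i hi j hj h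
    by_contra hne
    have h1 := hrot i (by simpa using hi) j (by simpa using hj) hne
    rw [h] at h1
    exact Rot.irrefl hR _ h1
  refine ⟨(range 5).image a, fun y hy => ?_, by rw [card_image_of_injOn hinj, card_range], ?_⟩
  · obtain ⟨i, hi, rfl⟩ := mem_image.1 hy
    exact haA i (mem_range.1 hi)
  · intro y hy z hz hne
    obtain ⟨i, hi, rfl⟩ := mem_image.1 hy
    obtain ⟨j, hj, rfl⟩ := mem_image.1 hz
    exact hrot i (mem_range.1 hi) j (mem_range.1 hj) fun h => hne (by rw [h])

/-- Almost one fifth of all pairs is in sector position. -/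
theorem sector_density (hk : 1 ≤ k) (hm : m = 20 * k) {μ δ : ℝ} (hμ : 0 ≤ μ)
    (hδ : 2 * (μ + 3) ≤ δ * √k) :
    (1 - 5 * δ) * ((m:ℝ) ^ k) ^ 2 ≤
      5 * ((univ.filter fun e : (Fin k → ZMod m) × (Fin k → ZMod m) =>
        Sector μ (corr e.1 e.2)).card : ℝ) := by
  set z : (Fin k → ZMod m) → ℂ := fun u => ∑ j, chr (u j) with hz
  set Good := univ.filter fun u => Sector μ (z u) with hG
  set Bad := univ.filter fun u : Fin k → ZMod m => |rotIm 0 (z u)| ≤ μ with hB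
  set τ : Fin k → ZMod m := fun _ => ((4 * k : ℕ) : ZMod m) with hτ
  have hshift : ∀ (j : ℕ) u, z (u + j • τ) = zeta5 ^ j * z u := by
    intro j u
    simp only [hz, mul_sum]
    refine sum_congr rfl fun i _ => ?_
    have : chr (j • ((4 * k : ℕ) : ZMod m)) = zeta5 ^ j := by
      rw [← chr_tau hm hk]; exact AddChar.map_nsmul_eq_pow _ j _
    rw [Pi.add_apply, Pi.smul_apply, chr_add, this, mul_comm]
  have hcov : (univ : Finset (Fin k → ZMod m)) ⊆
      ((range 5).biUnion fun j => Good.image fun u => u - j • τ)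
        ∪ (range 5).biUnion fun j => Bad.image fun u => u - j • τ := by
    intro u _
    rw [mem_union, mem_biUnion, mem_biUnion]
    by_cases h : ∀ j < 5, μ < |rotIm j (z u)|
    · obtain ⟨j, hj, hs⟩ := exists_sector hμ (z u) h
      refine Or.inl ⟨j, mem_range.2 hj, mem_image.2 ⟨u + j • τ, ?_, by simp⟩⟩
      exact mem_filter.2 ⟨mem_univ _, by rw [hshift]; exact hs⟩
    · push Not at h
      obtain ⟨j, hj, hs⟩ := h
      refine Or.inr ⟨j, mem_range.2 hj, mem_image.2 ⟨u + j • τ, ?_, by simp⟩⟩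
      refine mem_filter.2 ⟨mem_univ _, ?_⟩
      rw [hshift, ← rotIm_add, zero_add]; exact hs
  have hcard : (univ : Finset (Fin k → ZMod m)).card = m ^ k := by simp [ZMod.card]
  have h1 := (card_le_card hcov).trans ((card_union_le _ _).trans (add_le_add
    (card_biUnion_le.trans (sum_le_sum fun i _ => card_image_le))
    (card_biUnion_le.trans (sum_le_sum fun i _ => card_image_le))))
  rw [sum_const, sum_const, card_range, smul_eq_mul, smul_eq_mul, hcard] at h1
  have h1 : (m:ℝ) ^ k ≤ 5 * Good.card + 5 * Bad.card := by exact_mod_cast h1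
  have hk0 : (0:ℝ) < k := by exact_mod_cast hk
  have h2 : (Bad.card : ℝ) ≤ δ * (m:ℝ) ^ k := by
    have := small_ball (k := k) (fun a : ZMod m => (chr a).im) ((10 * k : ℕ) : ZMod m)
      ((5 * k : ℕ) : ZMod m)
      (fun a => by simp only [chr_add, chr_half hm hk, mul_neg, mul_one, Complex.neg_im])
      (fun a => by
        simp only [chr_add, chr_quarter hm hk, Complex.mul_I_im]
        have h := norm_chr a
        have h2 : (chr a).re * (chr a).re + (chr a).im * (chr a).im = 1 := by
          rw [← Complex.normSq_apply, Complex.normSq_eq_norm_sq, h]; norm_num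
        linarith) hμ
    have e : Bad = univ.filter fun u : Fin k → ZMod m => |∑ j, (chr (u j)).im| ≤ μ := by
      refine filter_congr fun u _ => ?_
      simp only [rotIm, pow_zero, one_mul, hz, Complex.im_sum]
    rw [← e] at this
    have h3 : (k:ℝ) * Bad.card ≤ k * (δ * (m:ℝ) ^ k) := by
      refine this.trans ?_
      have : 2 * (μ + 3) * √k ≤ δ * k := by
        calc 2 * (μ + 3) * √k ≤ δ * √k * √k := by gcongr
          _ = δ * k := by rw [mul_assoc, Real.mul_self_sqrt hk0.le]
      calc 2 * (μ + 3) * √k * (m:ℝ) ^ k ≤ δ * k * (m:ℝ) ^ k := by gcongr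
        _ = _ := by ring
    exact le_of_mul_le_mul_left h3 hk0
  have h3 : (univ.filter fun e : (Fin k → ZMod m) × (Fin k → ZMod m) =>
      Sector μ (corr e.1 e.2)).card = m ^ k * Good.card := by
    rw [← hcard, ← card_product]
    refine card_bij' (fun e _ => (e.2, e.1 - e.2)) (fun e _ => (e.2 + e.1, e.1)) ?_ ?_ ?_ ?_
    · intro e he
      have h := (mem_filter.1 he).2
      rw [corr_eq] at h
      exact mem_product.2 ⟨mem_univ _, mem_filter.2 ⟨mem_univ _, h⟩⟩
    · intro e he
      have h := (mem_filter.1 (mem_product.1 he).2).2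
      refine mem_filter.2 ⟨mem_univ _, ?_⟩
      rw [corr_eq, add_sub_cancel_right]
      exact h
    · intro e _; simp
    · intro e _; simp
  rw [h3]
  push_cast
  have : (0:ℝ) < (m:ℝ) ^ k := by
    have : (0:ℝ) < m := by exact_mod_cast NeZero.pos m
    positivity
  nlinarith

end Relations

/-! ### The layered graph and the lower bound -/

section Construction

/-- The part of each of the nineteen layers: two parts of five layers and one part of nine. -/
def part (i : Fin 19) : ℕ := if i.1 < 5 then 0 else if i.1 < 10 then 1 else 2

variable {Ω : Type}

/-- The layered graph: inside a part the adjacency is that of `H`, between the first two parts it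
is given by `C`, and the third part is completely joined to the rest. -/
def layered (H : SimpleGraph Ω) (C : Ω → Ω → Prop) (hC : ∀ x y, C x y → C y x) :
    SimpleGraph (Ω × Fin 19) where
  Adj u v := (part u.2 = part v.2 ∧ H.Adj u.1 v.1) ∨
    (part u.2 ≠ part v.2 ∧ (part u.2 = 2 ∨ part v.2 = 2 ∨ C u.1 v.1))
  symm := ⟨by
    rintro u v (⟨h, h1⟩ | ⟨h, h1 | h1 | h1⟩)
    · exact Or.inl ⟨h.symm, h1.symm⟩
    · exact Or.inr ⟨h.symm, Or.inr (Or.inl h1)⟩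
    · exact Or.inr ⟨h.symm, Or.inl h1⟩
    · exact Or.inr ⟨h.symm, Or.inr (Or.inr (hC _ _ h1))⟩⟩
  loopless := ⟨by
    rintro u (⟨-, h⟩ | ⟨h, -⟩)
    · exact h.ne rfl
    · exact h rfl⟩

variable {H : SimpleGraph Ω} {C : Ω → Ω → Prop} {hC : ∀ x y, C x y → C y x}

/-- A clique has at most five points in the third part and at most six in the first two, since the
projection to `Ω` is injective on each part. -/
theorem layered_cliqueFree
    (h5 : ∀ X : Finset Ω, (∀ x ∈ X, ∀ y ∈ X, x ≠ y → H.Adj x y) → X.card ≤ 5)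
    (h6 : ∀ X Y : Finset Ω, (∀ x ∈ X, ∀ y ∈ X, x ≠ y → H.Adj x y) →
      (∀ x ∈ Y, ∀ y ∈ Y, x ≠ y → H.Adj x y) → (∀ x ∈ X, ∀ y ∈ Y, C x y) → X.card + Y.card ≤ 6) :
    (layered H C hC).CliqueFree 12 := by
  intro K hK
  have hadj : ∀ u ∈ K, ∀ v ∈ K, u ≠ v → (layered H C hC).Adj u v := fun u hu v hv hne =>
    hK.1 hu hv hne
  set Kp : ℕ → Finset (Ω × Fin 19) := fun p => K.filter fun u => part u.2 = p with hKp
  have hmem : ∀ {p u}, u ∈ Kp p ↔ u ∈ K ∧ part u.2 = p := mem_filter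
  have hin : ∀ p, ∀ u ∈ Kp p, ∀ v ∈ Kp p, u ≠ v → H.Adj u.1 v.1 := by
    intro p u hu v hv hne
    rcases hadj u (hmem.1 hu).1 v (hmem.1 hv).1 hne with h | h
    · exact h.2
    · exact absurd ((hmem.1 hu).2.trans (hmem.1 hv).2.symm) h.1
  have hinj : ∀ p, Set.InjOn Prod.fst (Kp p : Set (Ω × Fin 19)) := by
    intro p u hu v hv h
    by_contra hne
    exact (hin p u hu v hv hne).ne h
  have hcl : ∀ p, ∀ x ∈ (Kp p).image Prod.fst, ∀ y ∈ (Kp p).image Prod.fst, x ≠ y → H.Adj x y := by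
    intro p x hx y hy hne
    obtain ⟨u, hu, rfl⟩ := mem_image.1 hx
    obtain ⟨v, hv, rfl⟩ := mem_image.1 hy
    exact hin p u hu v hv fun h => hne (by rw [h])
  have hc : ∀ p, ((Kp p).image Prod.fst).card = (Kp p).card := fun p => card_image_of_injOn (hinj p)
  have a2 := h5 _ (hcl 2)
  have a01 := h6 _ _ (hcl 0) (hcl 1) (by
    intro x hx y hy
    obtain ⟨u, hu, rfl⟩ := mem_image.1 hx
    obtain ⟨v, hv, rfl⟩ := mem_image.1 hy
    have pu := (hmem.1 hu).2
    have pv := (hmem.1 hv).2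
    rcases hadj u (hmem.1 hu).1 v (hmem.1 hv).1 (fun h => by rw [h] at pu; omega) with h | ⟨-, h⟩
    · omega
    · rcases h with h | h | h
      · omega
      · omega
      · exact h)
  rw [hc, hc] at a01
  rw [hc] at a2
  have hsum : K.card = ∑ p ∈ range 3, (Kp p).card := card_eq_sum_card_fiberwise fun u _ => by
    have : part u.2 < 3 := by unfold part; split_ifs <;> norm_num
    simpa using this
  have := hK.2
  simp only [sum_range_succ, sum_range_zero] at hsum
  omega

/-- A large set contains a large part of some layer, and hence a `K₅`. -/
theorem layered_card_le [Fintype Ω] {b : ℝ}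
    (h5 : ∀ A : Finset Ω, b < A.card → ∃ X ⊆ A, X.card = 5 ∧ ∀ x ∈ X, ∀ y ∈ X, x ≠ y → H.Adj x y)
    (s : Finset (Ω × Fin 19)) (hs : ∀ t ⊆ s, ¬ (layered H C hC).IsNClique 5 t) :
    (s.card : ℝ) ≤ 19 * b := by
  by_contra! hcon
  obtain ⟨i, hi⟩ : ∃ i : Fin 19, b < (univ.filter fun x => (x, i) ∈ s).card := by
    by_contra! h
    have hsum : s.card = ∑ i : Fin 19, (univ.filter fun x => (x, i) ∈ s).card := by
      rw [card_eq_sum_card_fiberwise (f := Prod.snd) (t := univ) fun _ _ => by simp]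
      refine sum_congr rfl fun i _ => ?_
      refine card_bij' (fun u _ => u.1) (fun x _ => (x, i)) ?_ ?_ ?_ ?_
      · rintro ⟨x, j⟩ hu
        obtain ⟨h1, rfl⟩ := mem_filter.1 hu
        exact mem_filter.2 ⟨mem_univ _, h1⟩
      · intro x hx
        exact mem_filter.2 ⟨(mem_filter.1 hx).2, rfl⟩
      · rintro ⟨x, j⟩ hu
        obtain ⟨h1, rfl⟩ := mem_filter.1 hu
        rfl
      · intro x hx; rfl
    have : (s.card : ℝ) ≤ ∑ i : Fin 19, b := by
      rw [hsum]; push_cast; exact sum_le_sum fun i _ => h i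
    simp at this
    linarith
  obtain ⟨X, hXA, hX5, hX⟩ := h5 _ hi
  refine hs (X.image fun x => (x, i)) (fun u hu => ?_) ⟨?_, ?_⟩
  · obtain ⟨x, hx, rfl⟩ := mem_image.1 hu
    exact (mem_filter.1 (hXA hx)).2
  · intro u hu v hv hne
    obtain ⟨x, hx, rfl⟩ := mem_image.1 hu
    obtain ⟨y, hy, rfl⟩ := mem_image.1 hv
    exact Or.inl ⟨rfl, hX x hx y hy fun h => hne (by rw [h])⟩
  · rw [card_image_of_injective _ fun x y h => (Prod.mk.inj h).1, hX5]

/-- Of the ordered pairs of layers, `2·10·9 = 180` are completely joined and `2·5·5 = 50` are joined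
by `C`. -/
theorem layered_edges [Fintype Ω] :
    180 * Fintype.card Ω ^ 2 + 50 * (univ.filter fun e : Ω × Ω => C e.1 e.2).card
      ≤ 2 * edgeCount (layered H C hC) := by
  set N := Fintype.card Ω
  set c := (univ.filter fun e : Ω × Ω => C e.1 e.2).card with hc
  let a : Fin 19 → Fin 19 → ℕ := fun i j =>
    if part i = part j then 0 else if part i = 2 then 1 else if part j = 2 then 1 else 0
  let b : Fin 19 → Fin 19 → ℕ := fun i j =>
    if part i = part j then 0 else if part i = 2 then 0 else if part j = 2 then 0 else 1
  have ha : ∑ i, ∑ j, a i j = 180 := by decide +kernel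
  have hb : ∑ i, ∑ j, b i j = 50 := by decide +kernel
  have hle : ∀ i j, a i j * N ^ 2 + b i j * c ≤
      (univ.filter fun e : Ω × Ω => (layered H C hC).Adj (e.1, i) (e.2, j)).card := by
    intro i j
    by_cases h : part i = part j
    · simp [a, b, h]
    by_cases h2 : part i = 2 ∨ part j = 2
    · have e : (univ.filter fun e : Ω × Ω => (layered H C hC).Adj (e.1, i) (e.2, j)) = univ := by
        refine filter_true_of_mem fun e _ => Or.inr ⟨h, ?_⟩
        rcases h2 with h2 | h2
        · exact Or.inl h2
        · exact Or.inr (Or.inl h2)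
      have e1 : a i j = 1 := by simp only [a, if_neg h]; grind
      have e2 : b i j = 0 := by rcases h2 with h2 | h2 <;> simp [b, h2]
      rw [e, e1, e2, card_univ, Fintype.card_prod]
      exact le_of_eq (by ring)
    · push Not at h2
      have e1 : a i j = 0 := by simp [a, h, h2.1, h2.2]
      have e2 : b i j = 1 := by simp [b, h, h2.1, h2.2]
      rw [e1, e2, zero_mul, one_mul, zero_add]
      refine card_le_card fun e he => mem_filter.2 ⟨mem_univ _, Or.inr ⟨h, Or.inr (Or.inr ?_)⟩⟩
      exact (mem_filter.1 he).2
  calc 180 * N ^ 2 + 50 * c = ∑ i, ∑ j, (a i j * N ^ 2 + b i j * c) := by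
        simp_rw [sum_add_distrib, ← sum_mul]; rw [ha, hb]
    _ ≤ ∑ i, ∑ j, (univ.filter fun e : Ω × Ω =>
          (layered H C hC).Adj (e.1, i) (e.2, j)).card :=
        sum_le_sum fun i _ => sum_le_sum fun j _ => hle i j
    _ = 2 * edgeCount (layered H C hC) := by
        rw [two_mul_edgeCount, univ_product_univ]
        simp only [card_filter, Fintype.sum_prod_type]
        calc _ = ∑ i : Fin 19, ∑ x : Ω, ∑ j : Fin 19, ∑ y : Ω,
              (if (layered H C hC).Adj (x, i) (y, j) then 1 else 0) :=
              sum_congr rfl fun i _ => sum_comm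
          _ = ∑ x : Ω, ∑ i : Fin 19, ∑ j : Fin 19, ∑ y : Ω,
              (if (layered H C hC).Adj (x, i) (y, j) then 1 else 0) := sum_comm
          _ = _ := sum_congr rfl fun x _ => sum_congr rfl fun i _ => sum_comm

/-- Transport of a finite graph to `Fin n`. -/
theorem exists_fin_graph {W : Type} [Fintype W] (G : SimpleGraph W) (hG : G.CliqueFree 12) {b : ℝ}
    (hb : ∀ s : Finset W, (∀ t ⊆ s, ¬ G.IsNClique 5 t) → (s.card : ℝ) ≤ b) :
    ∃ G' : SimpleGraph (Fin (Fintype.card W)), G'.CliqueFree 12 ∧ (alphaP 5 G' : ℝ) ≤ b ∧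
      edgeCount G' = edgeCount G := by
  let e := Fintype.equivFin W
  let φ : G.comap e.symm ≃g G := SimpleGraph.Iso.comap e.symm G
  refine ⟨G.comap e.symm, hG.comap ⟨φ.toEmbedding.toCopy⟩, ?_, ?_⟩
  · have hb' : ∀ s : Finset (Fin (Fintype.card W)),
        (∀ t ⊆ s, ¬ (G.comap e.symm).IsNClique 5 t) → (s.card : ℝ) ≤ b := by
      intro s hs
      rw [← card_map e.symm.toEmbedding]
      refine hb _ fun t ht hcl => hs (t.map e.toEmbedding) ?_ ⟨?_, ?_⟩
      · intro i hi
        obtain ⟨w, hw, rfl⟩ := mem_map.1 hi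
        obtain ⟨i', hi', rfl⟩ := mem_map.1 (ht hw)
        simpa using hi'
      · intro i hi j hj hne
        obtain ⟨w, hw, rfl⟩ := mem_map.1 hi
        obtain ⟨w', hw', rfl⟩ := mem_map.1 hj
        have := hcl.1 hw hw' fun h => hne (by rw [h])
        simpa using this
      · rw [card_map, hcl.2]
    have hb0 : 0 ≤ b := by
      have := hb' ∅ fun t ht hcl => by
        have := hcl.2
        rw [subset_empty.1 ht] at this
        simp at this
      simpa using this
    have : alphaP 5 (G.comap e.symm) ≤ ⌊b⌋₊ := by
      refine csSup_le' ?_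
      rintro _ ⟨s, rfl, hs⟩
      exact Nat.le_floor (hb' s hs)
    exact (Nat.le_floor_iff hb0).1 this
  · have h := φ.card_edgeFinset_eq
    have h1 : ∀ {V : Type} [Fintype V] (G : SimpleGraph V), edgeCount G = G.edgeFinset.card := by
      intro V _ G
      rw [edgeCount, ← SimpleGraph.coe_edgeFinset, Set.ncard_coe_finset]
    rw [h1, h1]
    convert h

theorem lower_bound (δ ε : ℝ) (hδ : 0 < δ) (hε : 0 < ε) (N : ℕ) : ∃ n : ℕ, N ≤ n ∧
    ∃ G : SimpleGraph (Fin n), G.CliqueFree 12 ∧ (alphaP 5 G : ℝ) ≤ ε * (n : ℝ) ∧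
      (10 / 19 - δ) * (n.choose 2 : ℝ) ≤ (edgeCount G : ℝ) := by
  set ε' := min ε 1 with hε'
  have hε0 : 0 < ε' := lt_min hε one_pos
  set r : ℝ := 4 * (8000 / ε') with hr
  have hr0 : 0 ≤ r := by positivity
  set T : ℝ := 2 * (r + 1 + 3) / δ with hT
  obtain ⟨k, hk⟩ := exists_nat_gt (max (10 * r) (max (T ^ 2) (max 1 N)))
  simp only [max_lt_iff] at hk
  obtain ⟨hkr, hkT, hk1, hkN⟩ := hk
  have hk1 : 1 ≤ k := by exact_mod_cast hk1.le
  have hkN : N ≤ k := by exact_mod_cast hkN.le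
  have : NeZero (20 * k) := ⟨by omega⟩
  have hdens : 2 * (r + 1 + 3) ≤ δ * √k := by
    have h := Real.le_sqrt_of_sq_le hkT.le
    rw [hT, div_le_iff₀ hδ] at h
    linarith
  let Ω := Fin k → ZMod (20 * k)
  let H : SimpleGraph Ω :=
    { Adj := Rot r
      symm := ⟨fun _ _ h => h.symm⟩
      loopless := ⟨fun x => Rot.irrefl (by linarith) x⟩ }
  let C : Ω → Ω → Prop := fun x y => Sector (r + 1) (corr x y)
  have hC : ∀ x y, C x y → C y x := fun x y h => by
    change Sector _ _
    rw [← conj_corr]; exact h.conj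
  have hcardΩ : Fintype.card Ω = (20 * k) ^ k := by simp [Ω, ZMod.card]
  have hcardW : Fintype.card (Ω × Fin 19) = 19 * (20 * k) ^ k := by
    rw [Fintype.card_prod, hcardΩ, Fintype.card_fin, mul_comm]
  set M : ℝ := ((20 * k : ℕ) : ℝ) ^ k with hM
  have hW : (Fintype.card (Ω × Fin 19) : ℝ) = 19 * M := by rw [hcardW, hM]; push_cast; ring
  have hM0 : 0 ≤ M := by positivity
  obtain ⟨G, hG1, hG2, hG3⟩ := exists_fin_graph (layered H C hC)
    (layered_cliqueFree (fun X hX => Rot.card_le hr0 hkr hX)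
      fun X Y hX hY hXY => card_add_card_le hr0 hkr (lt_add_one r) hX hY hXY)
    (layered_card_le (b := ε' * M) fun A hA =>
      exists_rot_five hk1 rfl A hε0 (min_le_right _ _) hA.le (by linarith))
  refine ⟨_, ?_, G, hG1, ?_, ?_⟩
  · rw [hcardW]
    have h1 : 20 * k ≤ (20 * k) ^ k := Nat.le_self_pow (by omega) _
    omega
  · rw [hW]
    refine hG2.trans ?_
    have : ε' * M ≤ ε * M := mul_le_mul_of_nonneg_right (min_le_left _ _) hM0
    linarith
  · have h1 := layered_edges (H := H) (C := C) (hC := hC)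
    have h2 := sector_density (m := 20 * k) hk1 rfl (by linarith : 0 ≤ r + 1) hdens
    rw [← hM] at h2
    set c := (univ.filter fun e : Ω × Ω => C e.1 e.2).card with hc
    have h2 : (1 - 5 * δ) * M ^ 2 ≤ 5 * c := h2
    rw [hcardΩ] at h1
    have h1 : 180 * M ^ 2 + 50 * c ≤ 2 * (edgeCount (layered H C hC) : ℝ) := by
      rw [hM]; exact_mod_cast h1
    rw [hG3]
    rcases le_total (10 / 19 - δ) 0 with h | h
    · exact (mul_nonpos_of_nonpos_of_nonneg h (Nat.cast_nonneg _)).trans (Nat.cast_nonneg _)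
    · have h3 : ((Fintype.card (Ω × Fin 19)).choose 2 : ℝ) ≤ (19 * M) ^ 2 / 2 := by
        rw [Nat.cast_choose_two, hW]
        nlinarith
      have h4 := mul_le_mul_of_nonneg_left h3 h
      nlinarith [mul_nonneg hδ.le (sq_nonneg M)]

end Construction

/-- `ρ₅(12) = 10/19`: the upper bound (every `K₁₂`-free graph on `n ≥ n₀` vertices
with `α₅(G) ≤ εn` has at most `(10/19 + δ)·C(n,2)` edges) together with the lower
bound (for all `δ, ε > 0` there are arbitrarily large `K₁₂`-free graphs with
`α₅(G) ≤ εn` and at least `(10/19 - δ)·C(n,2)` edges). -/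
theorem rt_density_5_12 :
    (∀ δ : ℝ, 0 < δ → ∃ (ε : ℝ) (n₀ : ℕ), 0 < ε ∧
      ∀ (n : ℕ) (G : SimpleGraph (Fin n)), n₀ ≤ n → G.CliqueFree 12 →
        (alphaP 5 G : ℝ) ≤ ε * (n : ℝ) →
        (edgeCount G : ℝ) ≤ (10 / 19 + δ) * (n.choose 2 : ℝ)) ∧
    (∀ δ ε : ℝ, 0 < δ → 0 < ε → ∀ N : ℕ, ∃ n : ℕ, N ≤ n ∧
      ∃ G : SimpleGraph (Fin n), G.CliqueFree 12 ∧
        (alphaP 5 G : ℝ) ≤ ε * (n : ℝ) ∧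
        (10 / 19 - δ) * (n.choose 2 : ℝ) ≤ (edgeCount G : ℝ)) := by
  exact ⟨fun δ hδ => by
    obtain ⟨ε, n₀, hε, h⟩ := upper_bound δ hδ
    refine ⟨ε, n₀, hε, fun n G hn hG hα => ?_⟩
    have := h (Fin n) G (by rwa [Fintype.card_fin]) hG (by rwa [Fintype.card_fin])
    rwa [Fintype.card_fin] at this, lower_bound⟩
end

section
/- For every integer p with 6 ≤ p ≤ 12, the Ramsey–Turán density satisfies ρ_p(p+6) ≤ 5/(2p); equivalently, for every δ > 0 there exist ε > 0 and n_0 such that every K_{p+6}-free graph G on n ≥ n_0 vertices with α_p(G) ≤ ε·n has at most (5/(2p) + δ)·C(n,2) edges. -/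
/-!
The proof applies Szemerédi's regularity lemma and bounds the density of a weighted reduced graph.
Give a uniform pair of parts the weight `w = p · density` (up to a small slack). Since every large
vertex set contains a `K_p`, positive weights produce large cliques.

* In a pair with `w > i`, a typical `K_p` in one part has `i + 1` vertices with a large common
  neighbourhood in the other part, where another `K_p` is found: this gives `K_{p+i+1}`
  (`exists_clique_pair`).
* Each further part with positive weight to everything else adds one vertex
  (`exists_clique_list`).
* In a triple in which one edge has `w > i` and the other two have weights of product greater
  than `p`, two vertices of a typical `K_p` in the part opposite to that edge have large common
  neighbourhoods in both other parts, which gives `K_{p+i+3}` (`exists_clique_triple`).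

Hence, if `G` is `K_{p+6}`-free, all weights are at most `5`; those in a positive triangle, `K_4`,
`K_5` are at most `4`, `3`, `2` respectively; and if a weight in a positive triangle exceeds `3`,
then the product of the other two is at most `p ≤ 12`. Under these conditions the quadratic form of
the weights is at most `5/2` on the simplex (`wform_le`): symmetrization reduces to supports on
which all weights are positive. A single edge gives `5/2`, a triangle gives at most `5/2` by
`triangle_bound`, four parts give at most `3 · (1 - 1/4)` and five or more give at most `2`.
Dividing by `p`, twice the number of edges is at most `(5/(2p) + o(1)) n²`.
-/

open Finset
open scoped Classical

/-! ### Clique embeddings from lower-regular pairs -/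

/-- Every vertex set with more than `a` elements contains a `p`-clique of `G`. -/
def CliqueRich {V : Type*} (G : SimpleGraph V) (p : ℕ) (a : ℝ) : Prop :=
  ∀ s : Finset V, a < (#s : ℝ) → ∃ t ⊆ s, G.IsNClique p t

/-- One-sided regularity: any `A' ⊆ A` and `B' ⊆ B` with at least `m` vertices each span a bipartite
graph of density at least `d`. The threshold `m` is an absolute size rather than a proportion, so
that the property passes to subsets of `A` and `B` verbatim. -/
def LowerReg {V : Type*} (G : SimpleGraph V) (m d : ℝ) (A B : Finset V) : Prop :=
  ∀ A' ⊆ A, ∀ B' ⊆ B, m ≤ (#A' : ℝ) → m ≤ (#B' : ℝ) →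
    d * #A' * #B' ≤ (#(G.interedges A' B') : ℝ)

/-- The neighbours of `v` inside `B`. -/
noncomputable def nbrs {V : Type*} (G : SimpleGraph V) (B : Finset V) (v : V) : Finset V :=
  B.filter (G.Adj v)

section Embedding

variable {V : Type*} [DecidableEq V] {G : SimpleGraph V}

lemma LowerReg.mono {m d d' : ℝ} {A B A' B' : Finset V} (h : LowerReg G m d A B)
    (hd : d' ≤ d) (hA : A' ⊆ A) (hB : B' ⊆ B) : LowerReg G m d' A' B' := by
  intro A₁ h1 B₁ h2 h3 h4
  refine le_trans ?_ (h A₁ (h1.trans hA) B₁ (h2.trans hB) h3 h4)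
  gcongr

lemma nbrs_subset (B : Finset V) (v : V) : nbrs G B v ⊆ B := filter_subset _ _

lemma card_interedges_eq_sum (A B : Finset V) :
    #(G.interedges A B) = ∑ v ∈ A, #(nbrs G B v) := by
  rw [SimpleGraph.interedges_def, card_filter, sum_product]
  exact sum_congr rfl fun v _ => (card_filter _ _).symm

/-- Fewer than `m` vertices of `A` have atypically small degree into `B`. -/
lemma card_atypical_lt {m d : ℝ} {A B : Finset V} (hm : 0 < m) (h : LowerReg G m d A B)
    (hB : m ≤ #B) : (#(A.filter fun v => (#(nbrs G B v) : ℝ) < d * #B) : ℝ) < m := by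
  by_contra! hcon
  have h1 := h _ (filter_subset _ _) B subset_rfl hcon hB
  rw [card_interedges_eq_sum] at h1
  push_cast at h1
  have hne : (A.filter fun v => (#(nbrs G B v) : ℝ) < d * #B).Nonempty := by
    rw [← card_pos]
    exact_mod_cast hm.trans_le hcon
  have h2 := sum_lt_sum_of_nonempty hne (f := fun v => (#(nbrs G B v) : ℝ))
    (g := fun _ => d * #B) (fun v hv => (mem_filter.1 hv).2)
  rw [sum_const, nsmul_eq_mul] at h2
  linarith

lemma card_atypical_list_le {m d : ℝ} {A : Finset V} (hm : 0 < m) (l : List (Finset V))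
    (h : ∀ X ∈ l, LowerReg G m d A X) (hl : ∀ X ∈ l, m ≤ #X) :
    (#(A.filter fun v => ∃ X ∈ l, (#(nbrs G X v) : ℝ) < d * #X) : ℝ) ≤ l.length * m := by
  induction l with
  | nil => simp
  | cons Y l ih =>
    have h1 := ih (fun X hX => h X (by simp [hX])) (fun X hX => hl X (by simp [hX]))
    have h2 := card_atypical_lt hm (h Y (by simp)) (hl Y (by simp))
    have h3 : (A.filter fun v => ∃ X ∈ Y :: l, (#(nbrs G X v) : ℝ) < d * #X) ⊆
        (A.filter fun v => (#(nbrs G Y v) : ℝ) < d * #Y) ∪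
        (A.filter fun v => ∃ X ∈ l, (#(nbrs G X v) : ℝ) < d * #X) := by
      intro v hv
      simp only [mem_filter, List.mem_cons, exists_eq_or_imp, mem_union] at hv ⊢
      tauto
    have h4 : (#(A.filter fun v => ∃ X ∈ Y :: l, (#(nbrs G X v) : ℝ) < d * #X) : ℝ) ≤
        #(A.filter fun v => (#(nbrs G Y v) : ℝ) < d * #Y) +
        #(A.filter fun v => ∃ X ∈ l, (#(nbrs G X v) : ℝ) < d * #X) := by
      exact_mod_cast (card_le_card h3).trans (card_union_le _ _)
    rw [List.length_cons]
    push_cast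
    linarith

lemma exists_typical_vertex {m d : ℝ} {A : Finset V} (hm : 0 < m) (l : List (Finset V))
    (h : ∀ X ∈ l, LowerReg G m d A X) (hl : ∀ X ∈ l, m ≤ #X) (hA : l.length * m < #A) :
    ∃ v ∈ A, ∀ X ∈ l, d * #X ≤ (#(nbrs G X v) : ℝ) := by
  by_contra! hcon
  have h1 := card_atypical_list_le hm l h hl
  rw [filter_true_of_mem hcon] at h1
  linarith

/-- A large set contains a `p`-clique of vertices that are typical towards both `B` and `C`. -/
lemma exists_typical_clique {p : ℕ} {a m d₁ d₂ : ℝ} {A B C : Finset V} (hm : 0 < m)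
    (hR : CliqueRich G p a) (h₁ : LowerReg G m d₁ A B) (h₂ : LowerReg G m d₂ A C)
    (hB : m ≤ #B) (hC : m ≤ #C) (hA : a + 2 * m < #A) :
    ∃ K ⊆ A, G.IsNClique p K ∧ ∀ v ∈ K, d₁ * #B ≤ (#(nbrs G B v) : ℝ) ∧
      d₂ * #C ≤ (#(nbrs G C v) : ℝ) := by
  have h3 := card_atypical_lt hm h₁ hB
  have h4 := card_atypical_lt hm h₂ hC
  set X := A.filter fun v => (#(nbrs G B v) : ℝ) < d₁ * #B
  set Y := A.filter fun v => (#(nbrs G C v) : ℝ) < d₂ * #C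
  have h5 : (#A : ℝ) ≤ #(A \ (X ∪ Y)) + (#X + #Y) := by
    have := le_card_sdiff (X ∪ Y) A
    have := card_union_le X Y
    exact_mod_cast (by omega : #A ≤ #(A \ (X ∪ Y)) + (#X + #Y))
  obtain ⟨K, hK, hKc⟩ := hR (A \ (X ∪ Y)) (by linarith)
  refine ⟨K, hK.trans sdiff_subset, hKc, fun v hv => ?_⟩
  have hv := hK hv
  simp only [mem_sdiff, mem_union, not_or, X, Y, mem_filter, not_and, not_lt] at hv
  exact ⟨hv.2.1 hv.1, hv.2.2 hv.1⟩

/-- If the elements of the `p`-set `K` are related to `i + g` elements of `K` on average over `T`,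
then some `(i+1)`-subset of `K` is related as a whole to a constant proportion of `T`. -/
lemma exists_common {X : Type*} {p i : ℕ} {c g : ℝ} {K : Finset V} {T : Finset X}
    (r : V → X → Prop) (hK : #K = p) (hT : T.Nonempty) (hc0 : 0 ≤ c)
    (hc : (p : ℝ) * 2 ^ p * c < g)
    (hsum : (i + g) * #T ≤ ∑ v ∈ K, (#(T.filter (r v)) : ℝ)) :
    ∃ S ⊆ K, #S = i + 1 ∧ c * #T ≤ (#(T.filter fun x => ∀ v ∈ S, r v x) : ℝ) := by
  by_contra! hcon
  have hTpos : (0 : ℝ) < #T := by exact_mod_cast hT.card_pos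
  -- an element related to more than `i` vertices is counted by at least one `(i+1)`-subset
  have key : ∀ x ∈ T, #(K.filter fun v => r v x) ≤
      i + p * #((K.powersetCard (i + 1)).filter fun S => ∀ v ∈ S, r v x) := by
    intro x _
    by_cases h : #(K.filter fun v => r v x) ≤ i
    · omega
    · obtain ⟨S, hS, hSc⟩ := exists_subset_card_eq (by omega : i + 1 ≤ #(K.filter fun v => r v x))
      have h1 : S ∈ (K.powersetCard (i + 1)).filter fun S => ∀ v ∈ S, r v x := by
        simp only [mem_filter, mem_powersetCard]
        exact ⟨⟨hS.trans (filter_subset _ _), hSc⟩, fun v hv => (mem_filter.1 (hS hv)).2⟩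
      have h2 := card_pos.2 ⟨S, h1⟩
      have h3 := card_filter_le K (fun v => r v x)
      nlinarith
  have h1 : ∑ v ∈ K, #(T.filter (r v)) = ∑ x ∈ T, #(K.filter fun v => r v x) := by
    simp only [card_filter]
    exact sum_comm
  have h2 : ∑ x ∈ T, #((K.powersetCard (i + 1)).filter fun S => ∀ v ∈ S, r v x) =
      ∑ S ∈ K.powersetCard (i + 1), #(T.filter fun x => ∀ v ∈ S, r v x) := by
    simp only [card_filter]
    exact sum_comm
  have h3 := sum_le_sum key
  rw [sum_add_distrib, ← mul_sum, h2, ← h1, sum_const, smul_eq_mul] at h3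
  have h4 : (∑ S ∈ K.powersetCard (i + 1), #(T.filter fun x => ∀ v ∈ S, r v x) : ℝ) ≤
      2 ^ p * (c * #T) := by
    calc _ ≤ ∑ S ∈ K.powersetCard (i + 1), c * (#T : ℝ) := by
          refine sum_le_sum fun S hS => ?_
          rw [mem_powersetCard] at hS
          exact (hcon S hS.1 hS.2).le
      _ = (#(K.powersetCard (i + 1)) : ℝ) * (c * #T) := by rw [sum_const, nsmul_eq_mul]
      _ ≤ _ := by
          gcongr
          rw [card_powersetCard, hK]
          exact_mod_cast Nat.choose_le_two_pow p (i + 1)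
  have h5 : (∑ v ∈ K, (#(T.filter (r v)) : ℝ)) ≤ #T * i +
      p * ∑ S ∈ K.powersetCard (i + 1), (#(T.filter fun x => ∀ v ∈ S, r v x) : ℝ) := by
    exact_mod_cast h3
  have h6 : (p : ℝ) * ∑ S ∈ K.powersetCard (i + 1), (#(T.filter fun x => ∀ v ∈ S, r v x) : ℝ) ≤
      p * (2 ^ p * (c * #T)) := by gcongr
  have h7 := mul_lt_mul_of_pos_right hc hTpos
  nlinarith

lemma isNClique_union {s t : ℕ} {S T : Finset V} (hS : G.IsNClique s S) (hT : G.IsNClique t T)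
    (h : ∀ x ∈ S, ∀ y ∈ T, G.Adj x y) : G.IsNClique (s + t) (S ∪ T) := by
  rw [SimpleGraph.isNClique_iff] at *
  constructor
  · rw [SimpleGraph.isClique_iff, Set.Pairwise]
    intro x hx y hy hxy
    simp only [coe_union, Set.mem_union, mem_coe] at hx hy
    rcases hx with hx | hx <;> rcases hy with hy | hy
    · exact hS.1 hx hy hxy
    · exact h x hx y hy
    · exact (h y hy x hx).symm
    · exact hT.1 hx hy hxy
  · rw [card_union_of_disjoint, hS.2, hT.2]
    rw [disjoint_left]
    intro x hx hx'
    exact G.irrefl (h x hx x hx')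

/-- A pair of density above `i / p` contains a `K_{p+i+1}`: some `i + 1` vertices of a typical
`p`-clique in `A` have a large common neighbourhood in `B`, which contains another `p`-clique. -/
lemma exists_clique_pair {p i : ℕ} {a m d c g : ℝ} {A B : Finset V} (hm : 0 < m)
    (hR : CliqueRich G p a) (h : LowerReg G m d A B) (hc0 : 0 ≤ c)
    (hc : (p : ℝ) * 2 ^ p * c < g) (hg : i + g ≤ p * d)
    (hA : a + 2 * m < #A) (hB : m ≤ #B) (hB' : a < c * #B) :
    ∃ Q, G.IsNClique (p + i + 1) Q ∧ ∀ q ∈ Q, q ∈ A ∨ q ∈ B := by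
  obtain ⟨K, hKA, hK, hKd⟩ := exists_typical_clique hm hR h h hB hB hA
  have hsum : (i + g) * #B ≤ ∑ v ∈ K, (#(B.filter (G.Adj v)) : ℝ) := by
    calc (i + g) * #B ≤ (p * d) * #B := by gcongr
      _ = ∑ v ∈ K, d * #B := by rw [sum_const, nsmul_eq_mul, hK.card_eq]; ring
      _ ≤ _ := sum_le_sum fun v hv => (hKd v hv).1
  have hBne : B.Nonempty := by
    rw [← card_pos]; exact_mod_cast hm.trans_le hB
  obtain ⟨S, hSK, hSc, hS⟩ := exists_common G.Adj hK.card_eq hBne hc0 hc hsum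
  obtain ⟨T, hT, hTc⟩ := hR _ (hB'.trans_le hS)
  have hSn : G.IsNClique (i + 1) S := ⟨hK.isClique.subset (by exact_mod_cast hSK), hSc⟩
  refine ⟨S ∪ T, ?_, ?_⟩
  · have := isNClique_union hSn hTc (fun x hx y hy => (mem_filter.1 (hT hy)).2 x hx)
    rwa [show i + 1 + p = p + i + 1 by ring] at this
  · intro q hq
    rcases mem_union.1 hq with hq | hq
    · exact Or.inl (hKA (hSK hq))
    · exact Or.inr (mem_filter.1 (hT hq)).1

/-- Each further part that has positive density to everything else contributes one more vertex to
the clique found in the pair `(B, C)`. -/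
lemma exists_clique_list {p i : ℕ} {a m d₀ d c g : ℝ} (ha : 0 ≤ a) (hm : 0 < m)
    (hd0 : 0 < d₀) (hd1 : d₀ ≤ 1) (hR : CliqueRich G p a) (hc0 : 0 < c) (hc1 : c ≤ 1)
    (hc : (p : ℝ) * 2 ^ p * c < g) (hg : i + g ≤ p * d) (r : ℕ) :
    ∀ (l : List (Finset V)) (B C : Finset V) (L : ℝ), l.length = r →
      l.Pairwise (LowerReg G m d₀) →
      (∀ X ∈ l, LowerReg G m d₀ X B) → (∀ X ∈ l, LowerReg G m d₀ X C) → LowerReg G m d B C →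
      (∀ X ∈ l, L ≤ #X) → L ≤ #B → L ≤ #C → a + (r + 2) * m < d₀ ^ r * c * L →
      ∃ Q, G.IsNClique (r + (p + i + 1)) Q ∧
        ∀ q ∈ Q, (∃ X ∈ l, q ∈ X) ∨ q ∈ B ∨ q ∈ C := by
  induction r with
  | zero =>
    intro l B C L _ _ _ _ hBC _ hB hC hL
    simp only [Nat.cast_zero, zero_add, pow_zero, one_mul] at hL
    have hLpos : 0 < L := by
      by_contra! hcon
      nlinarith
    have h1 : c * L ≤ L := by nlinarith
    have h2 : c * L ≤ c * #C := by gcongr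
    obtain ⟨Q, hQ, hQ'⟩ := exists_clique_pair hm hR hBC hc0.le hc hg (by linarith)
      (by linarith) (by linarith)
    exact ⟨Q, by simpa using hQ, fun q hq => Or.inr (hQ' q hq)⟩
  | succ r ih =>
    intro l' B C L hlen hl hlB hlC hBC hlL hB hC hL
    obtain ⟨A, l, rfl⟩ := List.exists_cons_of_length_eq_add_one hlen
    rw [List.length_cons, add_left_inj] at hlen
    rw [List.pairwise_cons] at hl
    push_cast at hL
    have hLpos : 0 < L := by
      by_contra! hcon
      have : d₀ ^ (r + 1) * c * L ≤ 0 := mul_nonpos_of_nonneg_of_nonpos (by positivity) hcon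
      nlinarith
    have h1 : d₀ ^ (r + 1) * c * L ≤ L := by
      have h2 : d₀ ^ (r + 1) ≤ 1 := pow_le_one₀ hd0.le hd1
      have h3 : d₀ ^ (r + 1) * c ≤ 1 * 1 := by gcongr
      nlinarith
    have hmL : m ≤ L := by nlinarith
    obtain ⟨v, hvA, hv⟩ := exists_typical_vertex (G := G) (A := A) (d := d₀) hm (B :: C :: l)
      (by
        intro X hX
        simp only [List.mem_cons] at hX
        rcases hX with rfl | rfl | hX
        · exact hlB A (by simp)
        · exact hlC A (by simp)
        · exact hl.1 X hX)
      (by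
        intro X hX
        simp only [List.mem_cons] at hX
        rcases hX with rfl | rfl | hX
        · linarith
        · linarith
        · exact hmL.trans (hlL X (by simp [hX])))
      (by
        have := hlL A (by simp)
        simp only [List.length_cons, hlen]
        push_cast
        nlinarith)
    have hsize : ∀ X ∈ B :: C :: l, L ≤ #X → d₀ * L ≤ (#(nbrs G X v) : ℝ) := by
      intro X hX h2
      exact le_trans (by gcongr) (hv X hX)
    obtain ⟨Q, hQ, hQ'⟩ := ih (l.map fun X => nbrs G X v) (nbrs G B v) (nbrs G C v) (d₀ * L)
      (by simpa using hlen)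
      (by
        rw [List.pairwise_map]
        exact hl.2.imp fun h => h.mono le_rfl (nbrs_subset _ _) (nbrs_subset _ _))
      (by
        simp only [List.mem_map, forall_exists_index, and_imp, forall_apply_eq_imp_iff₂]
        exact fun X hX => (hlB X (by simp [hX])).mono le_rfl (nbrs_subset _ _) (nbrs_subset _ _))
      (by
        simp only [List.mem_map, forall_exists_index, and_imp, forall_apply_eq_imp_iff₂]
        exact fun X hX => (hlC X (by simp [hX])).mono le_rfl (nbrs_subset _ _) (nbrs_subset _ _))
      (hBC.mono le_rfl (nbrs_subset _ _) (nbrs_subset _ _))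
      (by
        simp only [List.mem_map, forall_exists_index, and_imp, forall_apply_eq_imp_iff₂]
        exact fun X hX => hsize X (by simp [hX]) (hlL X (by simp [hX])))
      (hsize B (by simp) hB) (hsize C (by simp) hC)
      (by
        have : d₀ ^ r * c * (d₀ * L) = d₀ ^ (r + 1) * c * L := by ring
        rw [this]
        linarith)
    have hadj : ∀ q ∈ Q, G.Adj v q := by
      intro q hq
      rcases hQ' q hq with ⟨X, hX, hqX⟩ | hq | hq
      · obtain ⟨Y, _, rfl⟩ := List.mem_map.1 hX
        exact (mem_filter.1 hqX).2
      · exact (mem_filter.1 hq).2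
      · exact (mem_filter.1 hq).2
    refine ⟨insert v Q, ?_, ?_⟩
    · have := hQ.insert hadj
      rwa [show r + (p + i + 1) + 1 = r + 1 + (p + i + 1) by ring] at this
    · intro q hq
      rcases mem_insert.1 hq with rfl | hq
      · exact Or.inl ⟨A, by simp, hvA⟩
      · rcases hQ' q hq with ⟨X, hX, hqX⟩ | hq | hq
        · obtain ⟨Y, hY, rfl⟩ := List.mem_map.1 hX
          exact Or.inl ⟨Y, by simp [hY], nbrs_subset _ _ hqX⟩
        · exact Or.inr (Or.inl (nbrs_subset _ _ hq))
        · exact Or.inr (Or.inr (nbrs_subset _ _ hq))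

/-- In a triple of parts whose densities satisfy `p d₁ d₂ > 1` at `A`, two vertices of a typical
`p`-clique in `A` have many common neighbours in `B` and in `C` simultaneously; the remaining
`p + i + 1` vertices come from those common neighbourhoods. -/
lemma exists_clique_triple {p i : ℕ} {a m d₁ d₂ d c g L : ℝ} {A B C : Finset V} (ha : 0 ≤ a)
    (hm : 0 < m) (hR : CliqueRich G p a) (hd2 : 0 ≤ d₂)
    (hc0 : 0 < c) (hc1 : c ≤ 1) (hc : (p : ℝ) * 2 ^ p * c < g) (hg : i + g ≤ p * d)
    (hg' : 1 + g ≤ p * (d₁ * d₂)) (hAB : LowerReg G m d₁ A B) (hAC : LowerReg G m d₂ A C)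
    (hBC : LowerReg G m d B C) (hA : L ≤ #A) (hB : L ≤ #B) (hC : L ≤ #C)
    (hL : a + 2 * m < c ^ 2 * L) :
    ∃ Q, G.IsNClique (p + i + 3) Q := by
  have hLpos : 0 < L := by
    by_contra! hcon
    nlinarith [sq_nonneg c]
  have h1 : c * L ≤ L := by nlinarith
  have h2 : c ^ 2 * L ≤ c * L := by nlinarith
  obtain ⟨K, hKA, hK, hKd⟩ := exists_typical_clique hm hR hAB hAC (by linarith) (by linarith)
    (by linarith)
  have hsum : ((1 : ℕ) + g) * #(B ×ˢ C) ≤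
      ∑ v ∈ K, (#((B ×ˢ C).filter fun x => G.Adj v x.1 ∧ G.Adj v x.2) : ℝ) := by
    have h3 : ∀ v ∈ K, (d₁ * d₂) * (#B * #C) ≤
        (#((B ×ˢ C).filter fun x => G.Adj v x.1 ∧ G.Adj v x.2) : ℝ) := by
      intro v hv
      rw [filter_product, card_product]
      push_cast
      calc (d₁ * d₂) * (#B * #C) = (d₁ * #B) * (d₂ * #C) := by ring
        _ ≤ (#(nbrs G B v)) * (#(nbrs G C v)) :=
          mul_le_mul (hKd v hv).1 (hKd v hv).2 (by positivity) (by positivity)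
    calc ((1 : ℕ) + g) * #(B ×ˢ C) ≤ (p * (d₁ * d₂)) * #(B ×ˢ C) := by push_cast; gcongr
      _ = ∑ v ∈ K, (d₁ * d₂) * (#B * #C) := by
        rw [sum_const, nsmul_eq_mul, hK.card_eq, card_product]; push_cast; ring
      _ ≤ _ := sum_le_sum h3
  have hBpos : (0 : ℝ) < #B := by linarith
  have hCpos : (0 : ℝ) < #C := by linarith
  have hne : (B ×ˢ C).Nonempty := by
    rw [nonempty_product, ← card_pos, ← card_pos]
    exact ⟨by exact_mod_cast hBpos, by exact_mod_cast hCpos⟩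
  obtain ⟨S, hSK, hSc, hS⟩ := exists_common (i := 1) (fun v (x : V × V) => G.Adj v x.1 ∧ G.Adj v x.2)
    hK.card_eq hne hc0.le hc (by convert hsum)
  set B' := B.filter fun b => ∀ v ∈ S, G.Adj v b with hB'
  set C' := C.filter fun b => ∀ v ∈ S, G.Adj v b with hC'
  have h3 : ((B ×ˢ C).filter fun x => ∀ v ∈ S, G.Adj v x.1 ∧ G.Adj v x.2) ⊆ B' ×ˢ C' := by
    intro x hx
    simp only [mem_filter, mem_product, B', C'] at hx ⊢
    exact ⟨⟨hx.1.1, fun v hv => (hx.2 v hv).1⟩, ⟨hx.1.2, fun v hv => (hx.2 v hv).2⟩⟩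
  have h4 : c * (#B * #C) ≤ (#B' : ℝ) * #C' := by
    have h5 : (#((B ×ˢ C).filter fun x => ∀ v ∈ S, G.Adj v x.1 ∧ G.Adj v x.2) : ℝ) ≤
        #B' * #C' := by
      exact_mod_cast (card_le_card h3).trans (card_product _ _).le
    rw [card_product] at hS
    push_cast at hS
    refine hS.trans (le_trans (le_of_eq ?_) h5)
    congr!
  have h5 : (#B' : ℝ) ≤ #B := by exact_mod_cast card_filter_le _ _
  have h6 : (#C' : ℝ) ≤ #C := by exact_mod_cast card_filter_le _ _
  have h7 : c * L ≤ #B' := by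
    have h8 : (c * #B) * #C ≤ #B' * #C := by
      calc (c * #B) * #C = c * (#B * #C) := by ring
        _ ≤ _ := h4
        _ ≤ _ := by gcongr
    have := le_of_mul_le_mul_right h8 hCpos
    exact le_trans (by gcongr) this
  have h8 : c * L ≤ #C' := by
    have h8 : #B * (c * #C) ≤ #B * (#C' : ℝ) := by
      calc #B * (c * #C) = c * (#B * #C) := by ring
        _ ≤ _ := h4
        _ ≤ _ := by gcongr
    have := le_of_mul_le_mul_left h8 hBpos
    exact le_trans (by gcongr) this
  have h9 : c * (c * L) ≤ c * #C' := by gcongr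
  obtain ⟨Q, hQ, hQ'⟩ := exists_clique_pair hm hR
    (hBC.mono le_rfl (filter_subset _ _ : B' ⊆ B) (filter_subset _ _ : C' ⊆ C)) hc0.le hc hg
    (by linarith) (by linarith) (by nlinarith)
  have hSn : G.IsNClique (1 + 1) S := ⟨hK.isClique.subset (by exact_mod_cast hSK), hSc⟩
  refine ⟨S ∪ Q, ?_⟩
  have := isNClique_union hSn hQ (fun x hx y hy => by
    rcases hQ' y hy with hy | hy
    · exact (mem_filter.1 hy).2 x hx
    · exact (mem_filter.1 hy).2 x hx)
  rwa [show 1 + 1 + (p + i + 1) = p + i + 3 by ring] at this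

end Embedding

/-! ### The weighted Turán problem -/

section WeightedTuran

/-- The quadratic form of the weights `w` at `x`, restricted to the index set `s`. -/
def wform {ι : Type*} (w : ι → ι → ℝ) (s : Finset ι) (x : ι → ℝ) : ℝ :=
  ∑ i ∈ s, ∑ j ∈ s, w i j * (x i * x j)

lemma triangle_bound {a b c x y z : ℝ} (ha : a ≤ 4) (hb : b ≤ 4) (hc : c ≤ 4)
    (ha' : a ≤ 3 ∨ b * c ≤ 12) (hb' : b ≤ 3 ∨ a * c ≤ 12) (hc' : c ≤ 3 ∨ a * b ≤ 12)
    (hx : 0 ≤ x) (hy : 0 ≤ y) (hz : 0 ≤ z) :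
    2 * (a * (x * y) + b * (x * z) + c * (y * z)) ≤ 5 / 2 * (x + y + z) ^ 2 := by
  have hxy := mul_nonneg hx hy
  have hxz := mul_nonneg hx hz
  have hyz := mul_nonneg hy hz
  have low : ∀ {a b c x y z : ℝ}, a ≤ 3 → b ≤ 4 → c ≤ 4 → 0 ≤ x * y → 0 ≤ x * z → 0 ≤ y * z →
      2 * (a * (x * y) + b * (x * z) + c * (y * z)) ≤ 5 / 2 * (x + y + z) ^ 2 := by
    intro a b c x y z ha hb hc h1 h2 h3
    nlinarith [mul_le_mul_of_nonneg_right ha h1, mul_le_mul_of_nonneg_right hb h2,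
      mul_le_mul_of_nonneg_right hc h3, sq_nonneg (x - y), sq_nonneg (5 * z - 3 * x - 3 * y),
      sq_nonneg (x + y)]
  have high : ∀ {a b c x y z : ℝ}, a ≤ 4 → b ≤ 7 / 2 → c ≤ 7 / 2 → 0 ≤ x * y → 0 ≤ x * z →
      0 ≤ y * z → 2 * (a * (x * y) + b * (x * z) + c * (y * z)) ≤ 5 / 2 * (x + y + z) ^ 2 := by
    intro a b c x y z ha hb hc h1 h2 h3
    nlinarith [mul_le_mul_of_nonneg_right ha h1, mul_le_mul_of_nonneg_right hb h2,
      mul_le_mul_of_nonneg_right hc h3, sq_nonneg (x - y), sq_nonneg (5 * z - 2 * x - 2 * y),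
      sq_nonneg x, sq_nonneg y]
  by_cases h1 : a ≤ 3
  · exact low h1 hb hc hxy hxz hyz
  by_cases h2 : b ≤ 3
  · have := low h2 ha hc hxz hxy (by linarith [mul_comm z y] : 0 ≤ z * y)
    nlinarith
  by_cases h3 : c ≤ 3
  · have := low h3 ha hb hyz (by linarith [mul_comm y x] : 0 ≤ y * x)
      (by linarith [mul_comm z x] : 0 ≤ z * x)
    nlinarith
  have h4 := ha'.resolve_left h1
  have h5 := hb'.resolve_left h2
  have h6 := hc'.resolve_left h3
  push Not at h1 h2 h3
  -- the pairwise products are at most `12 < 3.5 ^ 2`, so at most one weight exceeds `3.5`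
  by_cases h7 : b ≤ 7 / 2
  · by_cases h8 : c ≤ 7 / 2
    · exact high ha h7 h8 hxy hxz hyz
    · have h9 : a ≤ 7 / 2 := by nlinarith
      have := high hc h9 h7 hyz (by linarith [mul_comm y x] : 0 ≤ y * x)
        (by linarith [mul_comm z x] : 0 ≤ z * x)
      nlinarith
  · have h8 : a ≤ 7 / 2 := by nlinarith
    have h9 : c ≤ 7 / 2 := by nlinarith
    have := high hb h8 h9 hxz hxy (by linarith [mul_comm z y] : 0 ≤ z * y)
    nlinarith

variable {ι : Type*} [DecidableEq ι] {w : ι → ι → ℝ}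

lemma wform_insert (hsymm : ∀ i j, w i j = w j i) (hdiag : ∀ i, w i i = 0) {s : Finset ι} {i : ι}
    (hi : i ∉ s) (x : ι → ℝ) :
    wform w (insert i s) x = wform w s x + 2 * (x i * ∑ k ∈ s, w i k * x k) := by
  unfold wform
  rw [sum_insert hi, sum_insert hi, hdiag]
  have h1 : ∑ k ∈ s, ∑ j ∈ insert i s, w k j * (x k * x j) =
      ∑ k ∈ s, w i k * (x i * x k) + ∑ k ∈ s, ∑ j ∈ s, w k j * (x k * x j) := by
    rw [← sum_add_distrib]
    refine sum_congr rfl fun k _ => ?_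
    rw [sum_insert hi, hsymm k i]
    ring
  have h2 : ∑ k ∈ s, w i k * (x i * x k) = x i * ∑ k ∈ s, w i k * x k := by
    rw [mul_sum]
    exact sum_congr rfl fun k _ => by ring
  rw [h1, h2]
  ring

lemma wform_le_of_le {M : ℝ} (hdiag : ∀ i, w i i = 0) {s : Finset ι}
    (hM : ∀ i ∈ s, ∀ j ∈ s, i ≠ j → w i j ≤ M) {x : ι → ℝ} (hx : ∀ i, 0 ≤ x i) :
    wform w s x ≤ M * ((∑ i ∈ s, x i) ^ 2 - ∑ i ∈ s, x i ^ 2) := by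
  have h1 : (∑ i ∈ s, x i) ^ 2 - ∑ i ∈ s, x i ^ 2 =
      ∑ i ∈ s, ∑ j ∈ s, if i = j then 0 else x i * x j := by
    rw [sq, sum_mul_sum, ← sum_sub_distrib]
    refine sum_congr rfl fun i hi => ?_
    have : ∀ j ∈ s, (if i = j then 0 else x i * x j) =
        x i * x j - if i = j then x i ^ 2 else 0 := by
      intro j _
      split_ifs with h
      · subst h; ring
      · ring
    rw [sum_congr rfl this, sum_sub_distrib, sum_ite_eq, if_pos hi]
  rw [h1, wform, mul_sum]
  refine sum_le_sum fun i hi => ?_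
  rw [mul_sum]
  refine sum_le_sum fun j hj => ?_
  split_ifs with h
  · subst h; simp [hdiag]
  · exact mul_le_mul_of_nonneg_right (hM i hi j hj h) (mul_nonneg (hx i) (hx j))

/-- The inductive step of symmetrization: if `w i j = 0`, moving all the mass of one of `i`, `j` to
the other one does not decrease the form, which then lives on a smaller index set. -/
lemma wform_shift (hsymm : ∀ i j, w i j = w j i) (hdiag : ∀ i, w i i = 0) {s : Finset ι} {i j : ι}
    (hi : i ∉ s) (hj : j ∉ s) (hij : i ≠ j) (hw : w i j = 0) {x : ι → ℝ} (hx : ∀ i, 0 ≤ x i)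
    (hle : ∑ k ∈ s, w j k * x k ≤ ∑ k ∈ s, w i k * x k) :
    wform w (insert i (insert j s)) x ≤
      wform w (insert i s) (Function.update x i (x i + x j)) ∧
    ∑ k ∈ insert i (insert j s), x k = ∑ k ∈ insert i s, Function.update x i (x i + x j) k := by
  have hi' : i ∉ insert j s := by simp [hi, hij]
  have hne : ∀ k ∈ s, Function.update x i (x i + x j) k = x k := fun k hk =>
    Function.update_of_ne (ne_of_mem_of_not_mem hk hi) _ _
  have h1 : wform w s (Function.update x i (x i + x j)) = wform w s x := by
    unfold wform
    exact sum_congr rfl fun k hk => sum_congr rfl fun l hl => by rw [hne k hk, hne l hl]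
  have h2 : ∑ k ∈ s, w i k * Function.update x i (x i + x j) k = ∑ k ∈ s, w i k * x k :=
    sum_congr rfl fun k hk => by rw [hne k hk]
  constructor
  · rw [wform_insert hsymm hdiag hi', wform_insert hsymm hdiag hj, wform_insert hsymm hdiag hi,
      sum_insert hj, hw, h1, h2, Function.update_self]
    nlinarith [mul_le_mul_of_nonneg_left hle (hx j)]
  · rw [sum_insert hi', sum_insert hj, sum_insert hi, sum_congr rfl hne, Function.update_self]
    ring

/-- Weighted Turán bound. The hypotheses say which cliques of positive weights are admissible; the
form is then at most `5/2` on the simplex, attained by a single pair of weight `5`. -/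
lemma wform_le (hsymm : ∀ i j, w i j = w j i) (hdiag : ∀ i, w i i = 0)
    (hnn : ∀ i j, 0 ≤ w i j) (h₂ : ∀ i j, w i j ≤ 5)
    (h₃ : ∀ i j k, 0 < w i j → 0 < w i k → 0 < w j k →
      w i j ≤ 4 ∧ (w i j ≤ 3 ∨ w i k * w j k ≤ 12))
    (h₄ : ∀ i j k l, 0 < w i j → 0 < w i k → 0 < w i l → 0 < w j k → 0 < w j l → 0 < w k l →
      w i j ≤ 3)
    (h₅ : ∀ i j k l m, 0 < w i j → 0 < w i k → 0 < w i l → 0 < w i m → 0 < w j k → 0 < w j l →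
      0 < w j m → 0 < w k l → 0 < w k m → 0 < w l m → w i j ≤ 2) :
    ∀ (n : ℕ) (s : Finset ι) (x : ι → ℝ), #s = n → (∀ i, 0 ≤ x i) →
      wform w s x ≤ 5 / 2 * (∑ i ∈ s, x i) ^ 2 := by
  intro n
  induction n with
  | zero =>
    intro s x hs _
    rw [card_eq_zero] at hs
    simp [hs, wform]
  | succ n ih =>
    intro s x hs hx
    by_cases hz : ∃ i ∈ s, ∃ j ∈ s, i ≠ j ∧ w i j = 0
    · obtain ⟨i, hi, j, hj, hij, hw⟩ := hz
      set t := (s.erase i).erase j with ht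
      have hit : i ∉ t := by simp [ht]
      have hjt : j ∉ t := by simp [ht]
      have hst : s = insert i (insert j t) := by
        rw [ht, insert_erase (mem_erase.2 ⟨hij.symm, hj⟩), insert_erase hi]
      have hup : ∀ i j k, 0 ≤ Function.update x i (x i + x j) k := by
        intro i j k
        by_cases h : k = i
        · subst h; rw [Function.update_self]; exact add_nonneg (hx _) (hx _)
        · rw [Function.update_of_ne h]; exact hx k
      have hcard : #t + 1 = n := by
        rw [hst, card_insert_of_notMem (by simp [hij, hit]), card_insert_of_notMem hjt] at hs
        omega
      rcases le_total (∑ k ∈ t, w j k * x k) (∑ k ∈ t, w i k * x k) with hle | hle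
      · obtain ⟨h1, h2⟩ := wform_shift hsymm hdiag hit hjt hij hw hx hle
        rw [hst, h2]
        exact h1.trans (ih _ _ (by rw [card_insert_of_notMem hit, hcard]) (hup i j))
      · obtain ⟨h1, h2⟩ := wform_shift hsymm hdiag hjt hit hij.symm (hsymm i j ▸ hw) hx hle
        rw [hst, insert_comm, h2]
        exact h1.trans (ih _ _ (by rw [card_insert_of_notMem hjt, hcard]) (hup j i))
    · push Not at hz
      have hpos : ∀ i ∈ s, ∀ j ∈ s, i ≠ j → 0 < w i j := fun i hi j hj hij =>
        lt_of_le_of_ne (hnn i j) (hz i hi j hj hij).symm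
      have hsum : 0 ≤ ∑ i ∈ s, x i := sum_nonneg fun i _ => hx i
      have hsq : 0 ≤ ∑ i ∈ s, x i ^ 2 := sum_nonneg fun i _ => sq_nonneg _
      have hcs := sq_sum_le_card_mul_sum_sq (s := s) (f := x)
      by_cases hn5 : 5 ≤ #s
      · have := wform_le_of_le hdiag (s := s) (M := 2) (fun i hi j hj hij => by
          obtain ⟨u, hu, huc⟩ := exists_subset_card_eq (s := (s.erase i).erase j) (n := 3) (by
            rw [card_erase_of_mem (mem_erase.2 ⟨hij.symm, hj⟩), card_erase_of_mem hi]; omega)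
          obtain ⟨k, l, m, hkl, hkm, hlm, rfl⟩ := card_eq_three.1 huc
          have hk := hu (by simp : k ∈ ({k, l, m} : Finset ι))
          have hl := hu (by simp : l ∈ ({k, l, m} : Finset ι))
          have hm := hu (by simp : m ∈ ({k, l, m} : Finset ι))
          simp only [mem_erase] at hk hl hm
          exact h₅ i j k l m (hpos _ hi _ hj hij) (hpos _ hi _ hk.2.2 hk.2.1.symm)
            (hpos _ hi _ hl.2.2 hl.2.1.symm) (hpos _ hi _ hm.2.2 hm.2.1.symm)
            (hpos _ hj _ hk.2.2 hk.1.symm) (hpos _ hj _ hl.2.2 hl.1.symm)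
            (hpos _ hj _ hm.2.2 hm.1.symm) (hpos _ hk.2.2 _ hl.2.2 hkl)
            (hpos _ hk.2.2 _ hm.2.2 hkm) (hpos _ hl.2.2 _ hm.2.2 hlm)) hx
        nlinarith [sq_nonneg (∑ i ∈ s, x i)]
      by_cases hn4 : #s = 4
      · have := wform_le_of_le hdiag (s := s) (M := 3) (fun i hi j hj hij => by
          obtain ⟨u, hu, huc⟩ := exists_subset_card_eq (s := (s.erase i).erase j) (n := 2) (by
            rw [card_erase_of_mem (mem_erase.2 ⟨hij.symm, hj⟩), card_erase_of_mem hi]; omega)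
          obtain ⟨k, l, hkl, rfl⟩ := card_eq_two.1 huc
          have hk := hu (by simp : k ∈ ({k, l} : Finset ι))
          have hl := hu (by simp : l ∈ ({k, l} : Finset ι))
          simp only [mem_erase] at hk hl
          exact h₄ i j k l (hpos _ hi _ hj hij) (hpos _ hi _ hk.2.2 hk.2.1.symm)
            (hpos _ hi _ hl.2.2 hl.2.1.symm)
            (hpos _ hj _ hk.2.2 hk.1.symm) (hpos _ hj _ hl.2.2 hl.1.symm)
            (hpos _ hk.2.2 _ hl.2.2 hkl)) hx
        rw [hn4] at hcs
        push_cast at hcs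
        nlinarith [sq_nonneg (∑ i ∈ s, x i)]
      by_cases hn3 : #s = 3
      · obtain ⟨i, j, k, hij, hik, hjk, rfl⟩ := card_eq_three.1 hn3
        have pij := hpos i (by simp) j (by simp) hij
        have pik := hpos i (by simp) k (by simp) hik
        have pjk := hpos j (by simp) k (by simp) hjk
        have a1 := h₃ i j k pij pik pjk
        have a2 := h₃ i k j pik pij (hsymm j k ▸ pjk)
        have a3 := h₃ j k i pjk (hsymm i j ▸ pij) (hsymm i k ▸ pik)
        rw [hsymm k j] at a2
        rw [hsymm j i, hsymm k i] at a3
        have := triangle_bound a1.1 a2.1 a3.1 a1.2 a2.2 a3.2 (hx i) (hx j) (hx k)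
        rw [wform_insert hsymm hdiag (by simp [hij, hik]), wform_insert hsymm hdiag (by simp [hjk]),
          sum_pair hjk, sum_singleton, sum_insert (by simp [hij, hik]), sum_pair hjk]
        simp only [wform, sum_singleton, hdiag]
        nlinarith
      by_cases hn2 : #s = 2
      · have := wform_le_of_le hdiag (s := s) (M := 5) (fun i _ j _ _ => h₂ i j) hx
        rw [hn2] at hcs
        push_cast at hcs
        nlinarith
      · obtain ⟨i, rfl⟩ := card_eq_one.1 (by omega : #s = 1)
        simp only [wform, sum_singleton, hdiag]
        nlinarith [sq_nonneg (x i)]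

end WeightedTuran

/-! ### Passage from the graph to its weighted reduced graph -/

section Assembly

lemma cliqueRich_of_alphaP {V : Type} [Fintype V] {G : SimpleGraph V} {p : ℕ} {a : ℝ}
    (h : (alphaP p G : ℝ) ≤ a) : CliqueRich G p a := by
  intro s hs
  by_contra! hcon
  have hbdd : BddAbove {k : ℕ | ∃ s : Finset V, s.card = k ∧
      ∀ t : Finset V, t ⊆ s → ¬ G.IsNClique p t} := by
    refine ⟨Fintype.card V, ?_⟩
    rintro k ⟨s, rfl, _⟩
    exact card_le_univ s
  have h1 : #s ≤ alphaP p G := le_csSup hbdd ⟨s, rfl, hcon⟩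
  have h2 : (#s : ℝ) ≤ alphaP p G := by exact_mod_cast h1
  linarith

/-- The weighted Turán bound for weights `w` such that every pair `(A, B)` of positive weight is
lower-regular with density `(w A B + g) / p`: the admissibility hypotheses of `wform_le` are
supplied by the clique embeddings. The gap `g` turns the strict inequalities of the weighted problem
into quantitative ones. -/
lemma wform_le_of_cliqueFree {V : Type*} [DecidableEq V] {G : SimpleGraph V} {p : ℕ} (hp : 6 ≤ p)
    (hp' : p ≤ 12) (hG : G.CliqueFree (p + 6)) {a m g c L : ℝ} (ha : 0 ≤ a) (hm : 0 < m)
    (hR : CliqueRich G p a) (hg0 : 0 < g) (hg1 : g ≤ 1) (hc0 : 0 < c)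
    (hc : (p : ℝ) * 2 ^ p * c < g ^ 2 / p) (hL : a + 5 * m < (g / p) ^ 3 * c ^ 2 * L)
    {w : Finset V → Finset V → ℝ} (hsymm : ∀ A B, w A B = w B A) (hdiag : ∀ A, w A A = 0)
    (hnn : ∀ A B, 0 ≤ w A B)
    (hw : ∀ A B, 0 < w A B → LowerReg G m ((w A B + g) / p) A B ∧ L ≤ #A)
    (s : Finset (Finset V)) {x : Finset V → ℝ} (hx : ∀ A, 0 ≤ x A) :
    wform w s x ≤ 5 / 2 * (∑ A ∈ s, x A) ^ 2 := by
  have hpR : (6 : ℝ) ≤ p := by exact_mod_cast hp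
  have hpR' : (p : ℝ) ≤ 12 := by exact_mod_cast hp'
  have hp0 : (0 : ℝ) < p := by linarith
  have hgp : g ^ 2 / p ≤ g := by
    rw [div_le_iff₀ hp0]
    nlinarith
  have hc1 : c ≤ 1 := by
    have h1 : (1 : ℝ) ≤ 2 ^ p := one_le_pow₀ (by norm_num)
    have h2 : 1 ≤ (p : ℝ) * 2 ^ p := by nlinarith
    nlinarith
  have hd0 : 0 < g / p := by positivity
  have hd1 : g / p ≤ 1 := by
    rw [div_le_one hp0]
    linarith
  have hLpos : 0 < L := by
    by_contra! hcon
    have : (g / p) ^ 3 * c ^ 2 * L ≤ 0 := mul_nonpos_of_nonneg_of_nonpos (by positivity) hcon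
    linarith
  have hlow : ∀ A B, 0 < w A B → LowerReg G m (g / p) A B := fun A B h =>
    (hw A B h).1.mono (by gcongr; linarith) subset_rfl subset_rfl
  have hpair : ∀ (i r : ℕ) (l : List (Finset V)) (B C : Finset V), r + i = 5 → r ≤ 3 →
      l.length = r → l.Pairwise (fun A A' => 0 < w A A') → (∀ X ∈ l, 0 < w X B) →
      (∀ X ∈ l, 0 < w X C) → 0 < w B C → w B C ≤ i := by
    intro i r l B C hri hr hlen hl hlB hlC hBC
    by_contra! hcon
    have h1 : (i : ℝ) + g ^ 2 / p ≤ p * ((w B C + g) / p) := by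
      rw [mul_div_cancel₀ _ hp0.ne']
      linarith
    have h2 : a + (r + 2) * m < (g / p) ^ r * c * L := by
      have h3 : (r : ℝ) ≤ 3 := by exact_mod_cast hr
      have h4 : (g / p) ^ 3 ≤ (g / p) ^ r := pow_le_pow_of_le_one hd0.le hd1 hr
      have h5 : c ^ 2 ≤ c := by nlinarith
      have h6 : (g / p) ^ 3 * c ^ 2 * L ≤ (g / p) ^ r * c * L := by gcongr
      nlinarith
    obtain ⟨Q, hQ, -⟩ := exists_clique_list ha hm hd0 hd1 hR hc0 hc1 hc h1 r l B C L hlen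
      (hl.imp fun h => hlow _ _ h) (fun X hX => hlow _ _ (hlB X hX))
      (fun X hX => hlow _ _ (hlC X hX)) (hw B C hBC).1 (fun X hX => (hw _ _ (hlB X hX)).2)
      (hw B C hBC).2 (hw C B (hsymm B C ▸ hBC)).2 h2
    rw [show r + (p + i + 1) = p + 6 by omega] at hQ
    exact hG Q hQ
  refine wform_le hsymm hdiag hnn ?_ ?_ ?_ ?_ _ s x rfl hx
  · intro i j
    rcases (hnn i j).eq_or_lt with h | h
    · rw [← h]; norm_num
    · exact_mod_cast hpair 5 0 [] i j (by norm_num) (by norm_num) rfl (by simp) (by simp)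
        (by simp) h
  · intro i j k hij hik hjk
    refine ⟨by
      exact_mod_cast hpair 4 1 [k] i j (by norm_num) (by norm_num) rfl (by simp)
        (by simpa [hsymm k i] using hik) (by simpa [hsymm k j] using hjk) hij, ?_⟩
    by_contra! hcon
    have h1 : ((3 : ℕ) : ℝ) + g ^ 2 / p ≤ p * ((w i j + g) / p) := by
      rw [mul_div_cancel₀ _ hp0.ne']
      push_cast
      linarith
    have h2 : 1 + g ^ 2 / p ≤ p * ((w k i + g) / p * ((w k j + g) / p)) := by
      rw [hsymm k i, hsymm k j]
      have : (p : ℝ) * ((w i k + g) / p * ((w j k + g) / p)) = (w i k + g) * (w j k + g) / p := by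
        field_simp
      rw [this, ← div_self hp0.ne', ← add_div]
      gcongr
      nlinarith [mul_pos hik hg0, mul_pos hjk hg0]
    have h3 : a + 2 * m < c ^ 2 * L := by
      have h4 : (g / p) ^ 3 ≤ 1 := pow_le_one₀ hd0.le hd1
      have h5 : (g / p) ^ 3 * c ^ 2 * L ≤ 1 * c ^ 2 * L := by gcongr
      linarith
    have hki : 0 < w k i := hsymm i k ▸ hik
    have hkj : 0 < w k j := hsymm j k ▸ hjk
    obtain ⟨Q, hQ⟩ := exists_clique_triple ha hm hR (by positivity) hc0 hc1 hc h1 h2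
      (hw k i hki).1 (hw k j hkj).1 (hw i j hij).1 (hw k i hki).2 (hw i j hij).2 (hw j k hjk).2 h3
    exact hG Q hQ
  · intro i j k l hij hik hil hjk hjl hkl
    exact_mod_cast hpair 3 2 [k, l] i j (by norm_num) (by norm_num) rfl (by simpa using hkl)
      (by simpa [hsymm k i, hsymm l i] using ⟨hik, hil⟩)
      (by simpa [hsymm k j, hsymm l j] using ⟨hjk, hjl⟩) hij
  · intro i j k l m hij hik hil him hjk hjl hjm hkl hkm hlm
    exact_mod_cast hpair 2 3 [k, l, m] i j (by norm_num) (by norm_num) rfl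
      (by simpa using ⟨⟨hkl, hkm⟩, hlm⟩)
      (by simpa [hsymm k i, hsymm l i, hsymm m i] using ⟨hik, hil, him⟩)
      (by simpa [hsymm k j, hsymm l j, hsymm m j] using ⟨hjk, hjl, hjm⟩) hij

lemma card_interedges_eq_density_mul {V : Type*} (G : SimpleGraph V) {A B : Finset V}
    (hA : 0 < #A) (hB : 0 < #B) :
    (#(G.interedges A B) : ℝ) = (G.edgeDensity A B : ℝ) * #A * #B := by
  rw [SimpleGraph.edgeDensity_def]
  push_cast
  field_simp

lemma two_mul_edgeCount_s15 {V : Type} [Fintype V] (G : SimpleGraph V) :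
    2 * edgeCount G = #(G.interedges univ univ) := by
  rw [card_interedges_eq_sum, edgeCount, Set.ncard_eq_toFinset_card']
  have := G.sum_degrees_eq_twice_card_edges
  rw [SimpleGraph.edgeFinset] at this
  rw [← this]
  refine sum_congr rfl fun v _ => ?_
  rw [← SimpleGraph.card_neighborFinset_eq_degree]
  congr 1
  ext u
  simp [nbrs]

/-- The weight of a pair of distinct `η`-uniform parts of `P`: `p` times its density, lowered by
`τ` and truncated at `0`. All other pairs have weight `0`. -/
noncomputable def partWeight {V : Type*} [Fintype V] [DecidableEq V] (G : SimpleGraph V)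
    (P : Finpartition (univ : Finset V)) (p : ℕ) (η τ : ℝ) (A B : Finset V) : ℝ :=
  if A ∈ P.parts ∧ B ∈ P.parts ∧ A ≠ B ∧ G.IsUniform η A B then
    max 0 (p * (G.edgeDensity A B : ℝ) - τ) else 0

section PartWeight

variable {V : Type*} [Fintype V] [DecidableEq V] {G : SimpleGraph V}
  {P : Finpartition (univ : Finset V)} {p : ℕ} {η τ : ℝ}

lemma partWeight_symm (A B : Finset V) : partWeight G P p η τ A B = partWeight G P p η τ B A := by
  have hiff : (A ∈ P.parts ∧ B ∈ P.parts ∧ A ≠ B ∧ G.IsUniform η A B) ↔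
      (B ∈ P.parts ∧ A ∈ P.parts ∧ B ≠ A ∧ G.IsUniform η B A) := by
    rw [SimpleGraph.isUniform_comm, ne_comm]
    tauto
  unfold partWeight
  by_cases h : A ∈ P.parts ∧ B ∈ P.parts ∧ A ≠ B ∧ G.IsUniform η A B
  · rw [if_pos h, if_pos (hiff.1 h), SimpleGraph.edgeDensity_comm]
  · rw [if_neg h, if_neg (fun h' => h (hiff.2 h'))]

lemma partWeight_self (A : Finset V) : partWeight G P p η τ A A = 0 := by
  simp [partWeight]

lemma partWeight_nonneg (A B : Finset V) : 0 ≤ partWeight G P p η τ A B := by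
  unfold partWeight
  split_ifs
  · exact le_max_left _ _
  · exact le_rfl

lemma partWeight_lowerReg (hp : 0 < p) (hη : p * η ≤ τ / 2) {m : ℝ} (hm : 0 < m)
    (hm' : ∀ A ∈ P.parts, #A * η ≤ m) {A B : Finset V} (h : 0 < partWeight G P p η τ A B) :
    A ∈ P.parts ∧ LowerReg G m ((partWeight G P p η τ A B + τ / 2) / p) A B := by
  have hp0 : (0 : ℝ) < p := by exact_mod_cast hp
  have hcond : A ∈ P.parts ∧ B ∈ P.parts ∧ A ≠ B ∧ G.IsUniform η A B := by
    by_contra hcon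
    rw [partWeight, if_neg hcon] at h
    exact lt_irrefl _ h
  refine ⟨hcond.1, ?_⟩
  have hval : partWeight G P p η τ A B = p * (G.edgeDensity A B : ℝ) - τ := by
    rw [partWeight, if_pos hcond] at h ⊢
    rcases lt_max_iff.1 h with h | h
    · exact absurd h (lt_irrefl _)
    · exact max_eq_right h.le
  intro A' hA' B' hB' h1 h2
  have h3 := hcond.2.2.2 hA' hB' ((hm' A hcond.1).trans h1) ((hm' B hcond.2.1).trans h2)
  rw [abs_lt] at h3
  rw [card_interedges_eq_density_mul G (by exact_mod_cast hm.trans_le h1)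
    (by exact_mod_cast hm.trans_le h2), hval]
  gcongr
  rw [div_le_iff₀ hp0]
  nlinarith

lemma card_interedges_le_partWeight (hp : 0 < p) (hτ : 0 ≤ τ) {A B : Finset V}
    (hA : A ∈ P.parts) (hB : B ∈ P.parts) :
    (#(G.interedges A B) : ℝ) ≤ partWeight G P p η τ A B * (#A * #B) / p + τ / p * (#A * #B) +
      (if A = B then (#A : ℝ) * #B else 0) +
      (if (A, B) ∈ P.nonUniforms G η then (#A : ℝ) * #B else 0) := by
  have hp0 : (0 : ℝ) < p := by exact_mod_cast hp
  have hw := partWeight_nonneg (G := G) (P := P) (p := p) (η := η) (τ := τ) A B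
  have htriv : (#(G.interedges A B) : ℝ) ≤ #A * #B := by
    exact_mod_cast G.card_interedges_le_mul A B
  have h0 : (0 : ℝ) ≤ partWeight G P p η τ A B * (#A * #B) / p := by positivity
  have h1 : (0 : ℝ) ≤ τ / p * (#A * #B) := by positivity
  by_cases hAB : A = B
  · rw [if_pos hAB]
    split_ifs
    · nlinarith
    · linarith
  by_cases hu : G.IsUniform η A B
  · rw [if_neg hAB, if_neg (by simp [hu])]
    have hApos := card_pos.2 (P.nonempty_of_mem_parts hA)
    have hBpos := card_pos.2 (P.nonempty_of_mem_parts hB)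
    rw [card_interedges_eq_density_mul G hApos hBpos, partWeight, if_pos ⟨hA, hB, hAB, hu⟩]
    have h2 := le_max_right 0 (p * (G.edgeDensity A B : ℝ) - τ)
    have h3 : (G.edgeDensity A B : ℝ) ≤ (max 0 (p * (G.edgeDensity A B : ℝ) - τ) + τ) / p := by
      rw [le_div_iff₀ hp0]
      linarith
    calc (G.edgeDensity A B : ℝ) * #A * #B = (G.edgeDensity A B : ℝ) * (#A * #B) := by ring
      _ ≤ ((max 0 (p * (G.edgeDensity A B : ℝ) - τ) + τ) / p) * (#A * #B) := by gcongr
      _ = _ := by ring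
  · rw [if_neg hAB, if_pos (by simp [hA, hB, hAB, hu])]
    linarith

/-- Discarding the edges inside parts, in non-uniform pairs and in sparse pairs loses little. -/
lemma card_interedges_univ_le (hp : 0 < p) (hτ : 0 ≤ τ) (hη : 0 < η) (hP : P.IsEquipartition)
    (hu : P.IsUniform G η) (hn : 0 < Fintype.card V) :
    (#(G.interedges univ univ) : ℝ) ≤
      wform (partWeight G P p η τ) P.parts (fun A => (#A : ℝ)) / p +
      τ / p * (Fintype.card V : ℝ) ^ 2 +
      ((Fintype.card V : ℝ) / #P.parts + 1) * Fintype.card V + 4 * η * (Fintype.card V : ℝ) ^ 2 := by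
  have hk : #P.parts ≤ Fintype.card V := by
    simpa using P.card_parts_le_card
  have hsum : ∑ A ∈ P.parts, (#A : ℝ) = Fintype.card V := by
    have := P.sum_card_parts
    rw [card_univ] at this
    exact_mod_cast this
  have h1 : (#(G.interedges univ univ) : ℝ) =
      ∑ A ∈ P.parts, ∑ B ∈ P.parts, (#(G.interedges A B) : ℝ) := by
    rw [← sum_product']
    exact_mod_cast Rel.card_interedges_finpartition G.Adj P P
  have h2 : ∑ A ∈ P.parts, ∑ B ∈ P.parts, (if A = B then (#A : ℝ) * #B else 0) ≤
      ((Fintype.card V : ℝ) / #P.parts + 1) * Fintype.card V := by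
    rw [← hsum, mul_sum, hsum]
    refine sum_le_sum fun A hA => ?_
    rw [sum_ite_eq, if_pos hA]
    gcongr
    have h3 : (#A : ℝ) ≤ ((Fintype.card V / #P.parts : ℕ) : ℝ) + 1 := by
      have := hP.card_part_le_average_add_one hA
      rw [card_univ] at this
      exact_mod_cast this
    exact h3.trans (by gcongr; exact Nat.cast_div_le)
  have h3 : ∑ A ∈ P.parts, ∑ B ∈ P.parts,
      (if (A, B) ∈ P.nonUniforms G η then (#A : ℝ) * #B else 0) ≤
      4 * η * (Fintype.card V : ℝ) ^ 2 := by
    have hne : (univ : Finset V).Nonempty := by rwa [← card_pos, card_univ]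
    have h4 := hP.sum_nonUniforms_lt' (𝕜 := ℝ) hne hη hu
    rw [← sum_product', ← sum_filter]
    have h5 : (P.parts ×ˢ P.parts).filter (fun x => (x.1, x.2) ∈ P.nonUniforms G η) =
        P.nonUniforms G η := by
      ext ⟨A, B⟩
      simp only [mem_filter, mem_product, Finpartition.mk_mem_nonUniforms]
      tauto
    rw [h5]
    refine h4.le.trans ?_
    rw [card_univ]
    have h6 : ((Fintype.card V : ℝ) + #P.parts) ^ 2 ≤
        ((Fintype.card V : ℝ) + Fintype.card V) ^ 2 := by gcongr
    nlinarith
  have h4 : ∑ A ∈ P.parts, ∑ B ∈ P.parts, τ / p * ((#A : ℝ) * #B) =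
      τ / p * (Fintype.card V : ℝ) ^ 2 := by
    simp only [← mul_sum, ← sum_mul, hsum, sq]
  have h5 : ∑ A ∈ P.parts, ∑ B ∈ P.parts, partWeight G P p η τ A B * ((#A : ℝ) * #B) / p =
      wform (partWeight G P p η τ) P.parts (fun A => (#A : ℝ)) / p := by
    simp only [wform, sum_div]
  rw [h1]
  calc _ ≤ ∑ A ∈ P.parts, ∑ B ∈ P.parts,
        (partWeight G P p η τ A B * (#A * #B) / p + τ / p * (#A * #B) +
        (if A = B then (#A : ℝ) * #B else 0) +
        (if (A, B) ∈ P.nonUniforms G η then (#A : ℝ) * #B else 0)) :=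
        sum_le_sum fun A hA => sum_le_sum fun B hB => card_interedges_le_partWeight hp hτ hA hB
    _ ≤ _ := by
        simp only [sum_add_distrib]
        rw [h4, h5]
        linarith

end PartWeight

end Assembly

/-! ### The density bound -/

/-- The error terms of the edge count are absorbed into `δ` once the number `k` of parts is at
least `16 / δ` and `n` is large. -/
lemma edge_bound_arith {p n k τ η δ W e : ℝ} (hp : 6 ≤ p) (hδ : 0 < δ)
    (hτ : τ ≤ δ / 8) (hη : η ≤ δ / 32) (hk : 16 / δ ≤ k) (hn0 : 0 < n)
    (hn : 4 * (1 + δ) / δ ≤ n) (hW : W ≤ 5 / (2 * p) * n ^ 2)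
    (he : 2 * e ≤ W + τ / p * n ^ 2 + (n / k + 1) * n + 4 * η * n ^ 2) :
    e ≤ (5 / (2 * p) + δ) * (n * (n - 1) / 2) := by
  have hp0 : 0 < p := by linarith
  have hk0 : 0 < k := lt_of_lt_of_le (by positivity) hk
  have hn2 : 0 ≤ n ^ 2 := by positivity
  have h2 : τ / p * n ^ 2 ≤ δ / 8 * n ^ 2 := by
    have : τ / p ≤ δ / 8 := by
      rw [div_le_iff₀ hp0]
      nlinarith
    exact mul_le_mul_of_nonneg_right this hn2
  have h3 : (n / k + 1) * n ≤ δ / 16 * n ^ 2 + n := by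
    have h4 : n / k ≤ δ / 16 * n := by
      rw [div_le_iff₀ hk0]
      have h5 := mul_le_mul_of_nonneg_right hk hδ.le
      rw [div_mul_cancel₀ _ hδ.ne'] at h5
      nlinarith
    nlinarith
  have h4 : 4 * η * n ^ 2 ≤ δ / 8 * n ^ 2 :=
    mul_le_mul_of_nonneg_right (by linarith) hn2
  -- the linear terms, including the one from `n (n - 1)` versus `n ^ 2`, are absorbed for large `n`
  have h5 : 4 * (1 + δ) * n ≤ δ * n ^ 2 := by
    rw [div_le_iff₀ hδ] at hn
    nlinarith
  have h6 : 5 / (2 * p) ≤ 1 := by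
    rw [div_le_one (by positivity)]
    linarith
  have h7 := mul_le_mul_of_nonneg_right h6 hn0.le
  have h8 : 0 < δ * n := by positivity
  generalize 5 / (2 * p) = q at *
  nlinarith

/-- Ramsey–Turán upper bound: `ρ_p(p+6) ≤ 5/(2p)` for every `6 ≤ p ≤ 12`. -/
theorem rt_bound_p_plus_six_small (p : ℕ) (hp : 6 ≤ p) (hp' : p ≤ 12)
    (δ : ℝ) (hδ : 0 < δ) :
    ∃ (ε : ℝ) (n₀ : ℕ), 0 < ε ∧
      ∀ (n : ℕ) (G : SimpleGraph (Fin n)), n₀ ≤ n → G.CliqueFree (p + 6) →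
        (alphaP p G : ℝ) ≤ ε * (n : ℝ) →
        (edgeCount G : ℝ) ≤ (5 / (2 * (p : ℝ)) + δ) * (n.choose 2 : ℝ) := by
  have hpR : (6 : ℝ) ≤ p := by exact_mod_cast hp
  have hp0 : (0 : ℝ) < p := by linarith
  have hpn : 0 < p := by omega
  obtain ⟨τ, hτ0, hτ1, hτδ⟩ : ∃ τ : ℝ, 0 < τ ∧ τ ≤ 1 ∧ τ ≤ δ / 8 :=
    ⟨min 1 (δ / 8), by positivity, min_le_left _ _, min_le_right _ _⟩
  set g : ℝ := τ / 2 with hg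
  have hg0 : 0 < g := by positivity
  obtain ⟨c, hc0, hc⟩ : ∃ c : ℝ, 0 < c ∧ (p : ℝ) * 2 ^ p * c < g ^ 2 / p := by
    refine ⟨g ^ 2 / p / (2 * (p * 2 ^ p)), by positivity, ?_⟩
    have h1 : (p : ℝ) * 2 ^ p * (g ^ 2 / p / (2 * (p * 2 ^ p))) = g ^ 2 / p / 2 := by
      field_simp
    rw [h1]
    exact half_lt_self (by positivity)
  set κ : ℝ := (g / p) ^ 3 * c ^ 2 with hκ
  have hκ0 : 0 < κ := by positivity
  obtain ⟨η, hη0, hηκ, hηδ, hητ⟩ : ∃ η : ℝ, 0 < η ∧ η ≤ κ / 40 ∧ η ≤ δ / 32 ∧ η ≤ τ / 2 / p :=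
    ⟨min (κ / 40) (min (δ / 32) (τ / 2 / p)), by positivity, min_le_left _ _,
      (min_le_right _ _).trans (min_le_left _ _), (min_le_right _ _).trans (min_le_right _ _)⟩
  have hητ' : p * η ≤ τ / 2 := by
    rw [le_div_iff₀ hp0] at hητ
    linarith
  obtain ⟨l, hl⟩ : ∃ l : ℕ, 16 / δ ≤ l := exists_nat_ge _
  obtain ⟨N₀, hN₀⟩ : ∃ N₀ : ℕ, 4 * (1 + δ) / δ ≤ N₀ := exists_nat_ge _
  obtain ⟨M, hM1', hMb⟩ : ∃ M : ℕ, 1 ≤ M ∧ SzemerediRegularity.bound η l ≤ M :=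
    ⟨max 1 (SzemerediRegularity.bound η l), le_max_left _ _, le_max_right _ _⟩
  have hM1 : (1 : ℝ) ≤ M := by exact_mod_cast hM1'
  refine ⟨κ / (8 * M), max 1 (max (max l M) N₀), by positivity, fun n G hn hG hα => ?_⟩
  simp only [max_le_iff] at hn
  obtain ⟨hn1, ⟨hnl, hnM⟩, hnN⟩ := hn
  have hn0 : (0 : ℝ) < n := by exact_mod_cast hn1
  obtain ⟨P, hPe, hPl, hPM, hPu⟩ := szemeredi_regularity G hη0 (l := l) (by simpa using hnl)
  have hPM' : #P.parts ≤ M := hPM.trans hMb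
  have hlpos : (0 : ℝ) < l := lt_of_lt_of_le (by positivity) hl
  have hPl' : (l : ℝ) ≤ #P.parts := by exact_mod_cast hPl
  have hPposR : (0 : ℝ) < #P.parts := hlpos.trans_le hPl'
  have hPpos : 0 < #P.parts := by exact_mod_cast hPposR
  have hPn : #P.parts ≤ n := hPM'.trans hnM
  set N := n / #P.parts with hN
  have hN1 : (1 : ℝ) ≤ N := by exact_mod_cast Nat.div_pos hPn hPpos
  have hnN' : (n : ℝ) ≤ 2 * N * M := by
    have h1 : (n : ℝ) ≤ (N + 1) * #P.parts := by
      have := Nat.lt_div_mul_add (a := n) hPpos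
      rw [← hN] at this
      exact_mod_cast (by nlinarith : n ≤ (N + 1) * #P.parts)
    have h2 : (#P.parts : ℝ) ≤ M := by exact_mod_cast hPM'
    calc (n : ℝ) ≤ (N + 1) * #P.parts := h1
      _ ≤ (N + N) * M := by gcongr
      _ = 2 * N * M := by ring
  have hsmall : κ / (8 * M) * n + 5 * ((N + 1) * η) < κ * N := by
    have h1 : κ / (8 * M) * n ≤ κ * N / 4 := by
      calc κ / (8 * M) * n ≤ κ / (8 * M) * (2 * N * M) := by gcongr
        _ = κ * N / 4 := by field_simp; ring
    have h2 : (N + 1) * η ≤ (2 * N) * (κ / 40) := by gcongr; linarith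
    nlinarith [mul_pos hκ0 (by linarith : (0 : ℝ) < N)]
  have hform := wform_le_of_cliqueFree hp hp' hG (by positivity : 0 ≤ κ / (8 * M) * n)
    (by positivity : 0 < ((N : ℝ) + 1) * η) (cliqueRich_of_alphaP hα) hg0 (by linarith) hc0 hc hsmall
    (w := partWeight G P p η τ) partWeight_symm partWeight_self partWeight_nonneg
    (fun A B h => by
      obtain ⟨hA, hreg⟩ := partWeight_lowerReg hpn hητ'
        (by positivity : 0 < ((N : ℝ) + 1) * η) (fun A hA => by
          have := hPe.card_part_le_average_add_one hA
          rw [card_univ, Fintype.card_fin, ← hN] at this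
          gcongr
          exact_mod_cast this) h
      refine ⟨hreg, ?_⟩
      have := hPe.average_le_card_part hA
      rw [card_univ, Fintype.card_fin, ← hN] at this
      exact_mod_cast this)
    P.parts (x := fun A => (#A : ℝ)) (fun A => by positivity)
  have hsum : ∑ A ∈ P.parts, (#A : ℝ) = n := by
    have := P.sum_card_parts
    rw [card_univ, Fintype.card_fin] at this
    exact_mod_cast this
  rw [hsum] at hform
  have hcount := card_interedges_univ_le (G := G) (P := P) hpn hτ0.le hη0 hPe hPu
    (by rw [Fintype.card_fin]; exact hn1)
  rw [Fintype.card_fin, ← two_mul_edgeCount_s15] at hcount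
  push_cast at hcount
  have h1 : wform (partWeight G P p η τ) P.parts (fun A => (#A : ℝ)) / p ≤
      5 / (2 * p) * (n : ℝ) ^ 2 := by
    rw [div_le_iff₀ hp0]
    refine hform.trans (le_of_eq ?_)
    field_simp
  rw [Nat.cast_choose_two]
  refine edge_bound_arith hpR hδ hτδ hηδ (hl.trans hPl') hn0 (hN₀.trans ?_) h1 hcount
  exact_mod_cast hnN
end
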